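/- arXiv:1512.02670 — 4 statements merged into one kernel-verified Lean document; each statement's English description precedes it below -/
import Mathlib

section
/- There exists an absolute constant c > 0 such that the following holds. Let w₀ ≥ 1 and let P be a finite set of N points in ℝ² \ {0} such that every line through the origin contains at most w₀ points of P, and such that P is not contained in a single line through the origin. Then |T(P)| ≥ c·N·w₀^(−1/2). -/
open Finset
open scoped Classical

/-- The standard non-degenerate skew-symmetric bilinear form on `ℝ²`. -/
noncomputable def omegaForm (q q' : ℝ × ℝ) : ℝ := q.1 * q'.2 - q.2 * q'.1

/-- `T(P)`: the set of nonzero values of `ω` on `P × P`. -/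
noncomputable def Tset (P : Finset (ℝ × ℝ)) : Finset ℝ :=
  ((P ×ˢ P).image fun qq => omegaForm qq.1 qq.2).erase 0

/-- slope of the segment `e` -/
noncomputable def slp (e : (ℝ × ℝ) × (ℝ × ℝ)) : ℝ := (e.2.2 - e.1.2) / (e.2.1 - e.1.1)

/-- height of the line through `e` above `x` -/
noncomputable def hgt (e : (ℝ × ℝ) × (ℝ × ℝ)) (x : ℝ) : ℝ := e.1.2 + slp e * (x - e.1.1)

/-- the open segments meet -/
def Crs (e f : (ℝ × ℝ) × (ℝ × ℝ)) : Prop :=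
  ∃ x, e.1.1 < x ∧ x < e.2.1 ∧ f.1.1 < x ∧ x < f.2.1 ∧ hgt e x = hgt f x

/-- geometric graph with distinct abscissae and no vertex inside an edge -/
def Good (V : Finset (ℝ × ℝ)) (E : Finset ((ℝ × ℝ) × (ℝ × ℝ))) : Prop :=
  (∀ a ∈ V, ∀ b ∈ V, a.1 = b.1 → a = b) ∧
  ∀ e ∈ E, e.1 ∈ V ∧ e.2 ∈ V ∧ e.1.1 < e.2.1 ∧
    ∀ v ∈ V, e.1.1 < v.1 → v.1 < e.2.1 → v.2 ≠ hgt e v.1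

lemma hgt_left (e : (ℝ × ℝ) × (ℝ × ℝ)) : hgt e e.1.1 = e.1.2 := by simp [hgt]

lemma hgt_right (e : (ℝ × ℝ) × (ℝ × ℝ)) (h : e.1.1 < e.2.1) : hgt e e.2.1 = e.2.2 := by
  have : e.2.1 - e.1.1 ≠ 0 := by linarith
  simp only [hgt, slp]; field_simp; ring

lemma hgt_aff (e : (ℝ × ℝ) × (ℝ × ℝ)) (x y : ℝ) : hgt e x = hgt e y + slp e * (x - y) := by
  simp only [hgt]; ring

lemma sign_change (g f : (ℝ × ℝ) × (ℝ × ℝ)) (a b : ℝ) (hab : a < b)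
    (h1 : hgt g a < hgt f a) (h2 : hgt f b < hgt g b) :
    ∃ x, a < x ∧ x < b ∧ hgt g x = hgt f x := by
  have hg := hgt_aff g b a
  have hf := hgt_aff f b a
  set d := slp g - slp f with hd
  have hpos : 0 < d * (b - a) := by rw [hd]; nlinarith
  have hd0 : 0 < d := by
    by_contra hc
    nlinarith
  refine ⟨a + (hgt f a - hgt g a) / d, ?_, ?_, ?_⟩
  · have : 0 < (hgt f a - hgt g a) / d := div_pos (by linarith) hd0
    linarith
  · have : (hgt f a - hgt g a) / d < b - a := by
      rw [div_lt_iff₀ hd0]; rw [hd]; nlinarith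
    linarith
  · have : d * ((hgt f a - hgt g a) / d) = hgt f a - hgt g a := by field_simp
    set r := (hgt f a - hgt g a) / d with hr
    have q1 := hgt_aff g (a + r) a
    have q2 := hgt_aff f (a + r) a
    rw [hd] at this
    rw [q1, q2]
    linarith

/-- overlapping collinear edges coincide -/
lemma good_eq {V : Finset (ℝ × ℝ)} {E : Finset ((ℝ × ℝ) × (ℝ × ℝ))} (hG : Good V E)
    {e f : (ℝ × ℝ) × (ℝ × ℝ)} (he : e ∈ E) (hf : f ∈ E) (hs : slp e = slp f) (x : ℝ)
    (h1 : e.1.1 < x) (h2 : x < e.2.1) (h3 : f.1.1 < x) (h4 : x < f.2.1)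
    (hx : hgt e x = hgt f x) : e = f := by
  obtain ⟨hV, hE⟩ := hG
  obtain ⟨e1, e2, e3, e4⟩ := hE e he
  obtain ⟨f1, f2, f3, f4⟩ := hE f hf
  have hall : ∀ y, hgt e y = hgt f y := by
    intro y; rw [hgt_aff e y x, hgt_aff f y x, hs, hx]
  have hl : e.1.1 = f.1.1 := by
    rcases lt_trichotomy e.1.1 f.1.1 with h | h | h
    · exact absurd (by rw [hall, hgt_left]) (e4 f.1 f1 h (by linarith))
    · exact h
    · exact absurd (by rw [← hall, hgt_left]) (f4 e.1 e1 h (by linarith))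
  have hr : e.2.1 = f.2.1 := by
    rcases lt_trichotomy e.2.1 f.2.1 with h | h | h
    · exact absurd (by rw [← hall, hgt_right _ e3]) (f4 e.2 e2 (by linarith) h)
    · exact h
    · exact absurd (by rw [hall, hgt_right _ f3]) (e4 f.2 f2 (by linarith) h)
  exact Prod.ext (hV _ e1 _ f1 hl) (hV _ e2 _ f2 hr)

lemma good_eq_left {V : Finset (ℝ × ℝ)} {E : Finset ((ℝ × ℝ) × (ℝ × ℝ))} (hG : Good V E)
    {e f : (ℝ × ℝ) × (ℝ × ℝ)} (he : e ∈ E) (hf : f ∈ E) (hs : slp e = slp f)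
    (h1 : e.1 = f.1) : e = f := by
  have e3 := (hG.2 e he).2.2.1
  have f3 := (hG.2 f hf).2.2.1
  have hm : e.1.1 < min e.2.1 f.2.1 := lt_min e3 (by rw [h1]; exact f3)
  have a1 := min_le_left e.2.1 f.2.1
  have a2 := min_le_right e.2.1 f.2.1
  refine good_eq hG he hf hs ((e.1.1 + min e.2.1 f.2.1) / 2) (by linarith) (by linarith)
    (by rw [← h1]; linarith) (by linarith) ?_
  simp only [hgt, hs, h1]

/-- `f` and `e` are consecutive edges to the right from a common left endpoint -/
def Cons (E : Finset ((ℝ × ℝ) × (ℝ × ℝ))) (f e : (ℝ × ℝ) × (ℝ × ℝ)) : Prop :=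
  f.1 = e.1 ∧ slp f < slp e ∧ ∀ g ∈ E, g.1 = e.1 → slp f < slp g → slp e ≤ slp g

def Abv (E : Finset ((ℝ × ℝ) × (ℝ × ℝ))) (e : (ℝ × ℝ) × (ℝ × ℝ)) (z : ℝ × ℝ) : Prop :=
  e.1.1 < z.1 ∧ z.1 < e.2.1 ∧ z.2 < hgt e z.1 ∧
    ∀ g ∈ E, g.1.1 < z.1 → z.1 ≤ g.2.1 → z.2 < hgt g z.1 → hgt e z.1 ≤ hgt g z.1

def Blw (E : Finset ((ℝ × ℝ) × (ℝ × ℝ))) (e : (ℝ × ℝ) × (ℝ × ℝ)) (z : ℝ × ℝ) : Prop :=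
  e.1.1 < z.1 ∧ z.1 < e.2.1 ∧ hgt e z.1 < z.2 ∧
    ∀ g ∈ E, g.1.1 < z.1 → z.1 ≤ g.2.1 → hgt g z.1 < z.2 → hgt g z.1 ≤ hgt e z.1

def RelE (E : Finset ((ℝ × ℝ) × (ℝ × ℝ))) (e : (ℝ × ℝ) × (ℝ × ℝ)) (zk : (ℝ × ℝ) × Fin 3) : Prop :=
  (zk.2 = 0 ∧ zk.1 = e.1 ∧ ∀ g ∈ E, g.1 = e.1 → slp e ≤ slp g) ∨
  (zk.2 = 1 ∧ Abv E e zk.1) ∨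
  (zk.2 = 2 ∧ ∃ f ∈ E, Blw E f zk.1 ∧ Cons E f e)

lemma rel_exists {V : Finset (ℝ × ℝ)} {E : Finset ((ℝ × ℝ) × (ℝ × ℝ))} (hG : Good V E)
    (hN : ∀ e ∈ E, ∀ f ∈ E, e ≠ f → ¬ Crs e f) (e : (ℝ × ℝ) × (ℝ × ℝ)) (he : e ∈ E) :
    ∃ zk : (ℝ × ℝ) × Fin 3, zk ∈ V ×ˢ (Finset.univ : Finset (Fin 3)) ∧ RelE E e zk := by
  obtain ⟨e1, e2, e3, e4⟩ := hG.2 e he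
  by_cases hlow : ∀ g ∈ E, g.1 = e.1 → slp e ≤ slp g
  · exact ⟨(e.1, 0), by simp [e1], Or.inl ⟨rfl, rfl, hlow⟩⟩
  push Not at hlow
  obtain ⟨g0, hg0, hg01, hg02⟩ := hlow
  obtain ⟨f, hf, hfmax⟩ := Finset.exists_max_image
    (E.filter fun g => g.1 = e.1 ∧ slp g < slp e) slp ⟨g0, by simp [hg0, hg01, hg02]⟩
  simp only [Finset.mem_filter] at hf hfmax
  obtain ⟨hfE, hfe, hfs⟩ := hf
  have hcons : Cons E f e := by
    refine ⟨hfe, hfs, fun g hg hge hgs => ?_⟩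
    by_contra hc
    have := hfmax g ⟨hg, hge, not_le.mp hc⟩
    linarith
  obtain ⟨f1, f2, f3, f4⟩ := hG.2 f hfE
  -- heights
  have hlt : ∀ x, e.1.1 < x → hgt f x < hgt e x := by
    intro x hx
    simp only [hgt, hfe]
    have := mul_lt_mul_of_pos_right hfs (sub_pos.mpr hx)
    linarith
  set X := min e.2.1 f.2.1 with hX
  have hXe : X ≤ e.2.1 := min_le_left _ _
  have hXf : X ≤ f.2.1 := min_le_right _ _
  have hne : (V.filter fun z => e.1.1 < z.1 ∧ z.1 ≤ X ∧ hgt f z.1 ≤ z.2 ∧ z.2 ≤ hgt e z.1).Nonempty := by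
    rcases le_total e.2.1 f.2.1 with h | h
    · refine ⟨e.2, ?_⟩
      simp only [Finset.mem_filter]
      refine ⟨e2, e3, le_min le_rfl h, ?_, ?_⟩
      · rw [← hgt_right e e3]; exact (hlt _ e3).le
      · rw [← hgt_right e e3]
    · have f3' : e.1.1 < f.2.1 := by rw [← hfe]; exact f3
      refine ⟨f.2, ?_⟩
      simp only [Finset.mem_filter]
      refine ⟨f2, f3', le_min h le_rfl, ?_, ?_⟩
      · rw [← hgt_right f f3]
      · rw [← hgt_right f f3]; exact (hlt _ f3').le
  obtain ⟨z, hz, hzmin⟩ := Finset.exists_min_image _ (fun z : ℝ × ℝ => z.1) hne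
  simp only [Finset.mem_filter] at hz hzmin
  obtain ⟨hzV, hz1, hz2, hz3, hz4⟩ := hz
  have hA : ∀ g ∈ E, g.1.1 < z.1 → z.1 ≤ g.2.1 → hgt f z.1 < hgt g z.1 →
      hgt g z.1 < hgt e z.1 → False := by
    intro g hg ga gb gc gd
    obtain ⟨g1, g2, g3, g4⟩ := hG.2 g hg
    have hgf : g ≠ f := by rintro rfl; exact lt_irrefl _ gc
    have hge : g ≠ e := by rintro rfl; exact lt_irrefl _ gd
    -- sign-change consequences
    have K1 : ∀ a, e.1.1 ≤ a → g.1.1 ≤ a → a < z.1 → ¬ hgt g a < hgt f a := by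
      intro a ha hga haz hc
      obtain ⟨x, x1, x2, x3⟩ := sign_change g f a z.1 haz hc gc
      exact hN g hg f hfE hgf ⟨x, by linarith, by linarith, by rw [hfe]; linarith, by linarith, x3⟩
    have K2 : ∀ a, e.1.1 ≤ a → g.1.1 ≤ a → a < z.1 → ¬ hgt e a < hgt g a := by
      intro a ha hga haz hc
      obtain ⟨x, x1, x2, x3⟩ := sign_change e g a z.1 haz hc gd
      exact hN g hg e he hge ⟨x, by linarith, by linarith, by linarith, by linarith, x3.symm⟩
    rcases lt_or_ge e.1.1 g.1.1 with h | h
    · have k1 := K1 g.1.1 h.le le_rfl ga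
      have k2 := K2 g.1.1 h.le le_rfl ga
      rw [hgt_left, not_lt] at k1 k2
      have := hzmin g.1 ⟨g1, h, by linarith, k1, k2⟩
      linarith
    · have k1 := K1 e.1.1 le_rfl h hz1
      have k2 := K2 e.1.1 le_rfl h hz1
      rw [hgt_left e, not_lt] at k2
      rw [← hfe, hgt_left f, hfe, not_lt] at k1
      have heq : e.1.2 = hgt g e.1.1 := le_antisymm k1 k2
      rcases h.lt_or_eq with h | h
      · exact g4 e.1 e1 h (by linarith) heq
      · have hge1 : g.1 = e.1 := hG.1 _ g1 _ e1 h
        have a1 : slp f < slp g := by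
          by_contra hc
          have := mul_le_mul_of_nonneg_right (not_lt.mp hc) (sub_nonneg.mpr hz1.le)
          simp only [hgt, hfe, hge1] at gc
          linarith
        have a2 := hcons.2.2 g hg hge1 a1
        have := mul_le_mul_of_nonneg_right a2 (sub_nonneg.mpr hz1.le)
        simp only [hgt, hge1] at gd
        linarith
  rcases hz4.lt_or_eq with h | h
  · refine ⟨(z, 1), by simp [hzV], Or.inr (Or.inl ⟨rfl, hz1, ?_, h, ?_⟩)⟩
    · refine lt_of_le_of_ne (by linarith) fun hc => ?_
      have := hG.1 _ hzV _ e2 hc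
      rw [this, hgt_right e e3] at h
      exact lt_irrefl _ h
    · intro g hg ga gb gc
      by_contra hc
      exact hA g hg ga gb (by linarith) (not_le.mp hc)
  · have hfz : hgt f z.1 < z.2 := by rw [h]; exact hlt _ hz1
    refine ⟨(z, 2), by simp [hzV], Or.inr (Or.inr ⟨rfl, f, hfE, ⟨?_, ?_, hfz, ?_⟩, hcons⟩)⟩
    · rw [hfe]; exact hz1
    · refine lt_of_le_of_ne (by linarith) fun hc => ?_
      have := hG.1 _ hzV _ f2 hc
      rw [this, hgt_right f f3] at hfz
      exact lt_irrefl _ hfz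
    · intro g hg ga gb gc
      by_contra hc
      exact hA g hg ga gb (not_le.mp hc) (by linarith)

lemma rel_unique {V : Finset (ℝ × ℝ)} {E : Finset ((ℝ × ℝ) × (ℝ × ℝ))} (hG : Good V E)
    (hN : ∀ e ∈ E, ∀ f ∈ E, e ≠ f → ¬ Crs e f) (e e' : (ℝ × ℝ) × (ℝ × ℝ)) (he : e ∈ E)
    (he' : e' ∈ E) (zk : (ℝ × ℝ) × Fin 3) (h : RelE E e zk) (h' : RelE E e' zk) : e = e' := by
  rcases h with ⟨k, h1, h2⟩ | ⟨k, h1, h2, h3, h4⟩ | ⟨k, f, hf, ⟨b1, b2, b3, b4⟩, c1, c2, c3⟩ <;>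
  rcases h' with ⟨k', h1', h2'⟩ | ⟨k', h1', h2', h3', h4'⟩ |
    ⟨k', f', hf', ⟨b1', b2', b3', b4'⟩, c1', c2', c3'⟩ <;>
  first
  | (exfalso; rw [k] at k'; revert k'; decide)
  | skip
  · have h5 : e.1 = e'.1 := by rw [← h1, h1']
    exact good_eq_left hG he he' (le_antisymm (h2 e' he' h5.symm) (h2' e he h5)) h5
  · by_contra hc
    exact hN e he e' he' hc ⟨zk.1.1, h1, h2, h1', h2',
      le_antisymm (h4 e' he' h1' h2'.le h3') (h4' e he h1 h2.le h3)⟩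
  · have hff : f = f' := by
      by_contra hc
      exact hN f hf f' hf' hc ⟨zk.1.1, b1, b2, b1', b2',
        le_antisymm (b4' f hf b1 b2.le b3) (b4 f' hf' b1' b2'.le b3')⟩
    subst hff
    have h5 : e.1 = e'.1 := by rw [← c1, c1']
    exact good_eq_left hG he he' (le_antisymm (c3 e' he' h5.symm c2') (c3' e he h5 c2)) h5

lemma planar_bound {V : Finset (ℝ × ℝ)} {E : Finset ((ℝ × ℝ) × (ℝ × ℝ))} (hG : Good V E)
    (hN : ∀ e ∈ E, ∀ f ∈ E, e ≠ f → ¬ Crs e f) : E.card ≤ 3 * V.card := by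
  have hex := rel_exists hG hN
  choose! φ hφ1 hφ2 using hex
  have := Finset.card_le_card_of_injOn φ hφ1 (by
    intro a ha b hb hab
    exact rel_unique hG hN a b ha hb (φ a) (hφ2 a ha) (by rw [hab]; exact hφ2 b hb))
  rw [Finset.card_product] at this
  simp at this
  linarith

noncomputable def crsPairs (E : Finset ((ℝ × ℝ) × (ℝ × ℝ))) :
    Finset (((ℝ × ℝ) × (ℝ × ℝ)) × ((ℝ × ℝ) × (ℝ × ℝ))) :=
  (E ×ˢ E).filter fun p => p.1 ≠ p.2 ∧ Crs p.1 p.2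

lemma Good.mono {V : Finset (ℝ × ℝ)} {E E' : Finset ((ℝ × ℝ) × (ℝ × ℝ))} (hG : Good V E)
    (h : E' ⊆ E) : Good V E' := ⟨hG.1, fun e he => hG.2 e (h he)⟩

lemma crossing_base {V : Finset (ℝ × ℝ)} (n : ℕ) : ∀ E : Finset ((ℝ × ℝ) × (ℝ × ℝ)), E.card = n →
    Good V E → E.card ≤ 3 * V.card + (crsPairs E).card := by
  induction n with
  | zero => intro E h _; omega
  | succ n ih =>
    intro E hE hG
    by_cases hN : ∀ e ∈ E, ∀ f ∈ E, e ≠ f → ¬ Crs e f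
    · exact (planar_bound hG hN).trans (Nat.le_add_right _ _)
    push Not at hN
    obtain ⟨e, he, f, hf, hef, hc⟩ := hN
    have h1 := Finset.card_erase_of_mem he
    have h2 := ih (E.erase e) (by omega) (hG.mono (Finset.erase_subset _ _))
    have h3 : (crsPairs (E.erase e)).card < (crsPairs E).card := by
      apply Finset.card_lt_card
      rw [Finset.ssubset_iff_of_subset]
      · refine ⟨(e, f), ?_, ?_⟩
        · simp [crsPairs, he, hf, hef, hc]
        · simp [crsPairs]
      · intro p hp
        simp only [crsPairs, Finset.mem_filter, Finset.mem_product, Finset.mem_erase] at hp ⊢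
        tauto
    omega

/-- multi-affine functions -/
def MA {ι : Type*} (F : (ι → ℝ) → ℝ) : Prop :=
  ∀ i x t, F (Function.update x i t) =
    (1 - t) * F (Function.update x i 0) + t * F (Function.update x i 1)

lemma MA.prod {ι : Type*} (S : Finset ι) : MA (fun x : ι → ℝ => ∏ i ∈ S, x i) := by
  intro i x t
  by_cases h : i ∈ S
  · simp only [Finset.prod_update_of_mem h]; ring
  · simp only [Finset.prod_update_of_notMem h]; ring

lemma MA.sum {ι κ : Type*} (K : Finset κ) (F : κ → (ι → ℝ) → ℝ) (h : ∀ k, MA (F k)) :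
    MA (fun x => ∑ k ∈ K, F k x) := by
  intro i x t
  simp only [Finset.mul_sum, ← Finset.sum_add_distrib]
  exact Finset.sum_congr rfl fun k _ => h k i x t

lemma MA.nonneg {ι : Type*} (F : (ι → ℝ) → ℝ) (hF : MA F)
    (h : ∀ x : ι → ℝ, (∀ i, x i = 0 ∨ x i = 1) → 0 ≤ F x) (J : Finset ι) :
    ∀ x : ι → ℝ, (∀ i, 0 ≤ x i ∧ x i ≤ 1) → (∀ i, i ∉ J → x i = 0 ∨ x i = 1) → 0 ≤ F x := by
  induction J using Finset.induction_on with
  | empty => intro x _ hx; exact h x fun i => hx i (by simp)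
  | insert a J ha ih =>
    intro x hx hJ
    have key : ∀ t : ℝ, (t = 0 ∨ t = 1) → 0 ≤ F (Function.update x a t) := by
      intro t ht
      apply ih
      · intro i
        by_cases hi : i = a
        · subst hi; rcases ht with rfl | rfl <;> simp
        · simp [Function.update_of_ne hi, hx i]
      · intro i hi
        by_cases hia : i = a
        · subst hia; simpa using ht
        · rw [Function.update_of_ne hia]
          exact hJ i (by simp [hia, hi])
    have := hF a x (x a)
    rw [Function.update_eq_self] at this
    rw [this]
    have h0 := key 0 (by simp)
    have h1 := key 1 (by simp)
    have := hx a
    have h2 : 0 ≤ 1 - x a := by linarith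
    have h3 : 0 ≤ x a := this.1
    positivity

lemma MA.add {ι : Type*} {F G : (ι → ℝ) → ℝ} (hF : MA F) (hG : MA G) :
    MA (fun x => F x + G x) := by
  intro i x t
  simp only [hF i x t, hG i x t]; ring

lemma MA.const_mul {ι : Type*} {F : (ι → ℝ) → ℝ} (c : ℝ) (hF : MA F) :
    MA (fun x => c * F x) := by
  intro i x t
  simp only [hF i x t]; ring

lemma crs_distinct {V : Finset (ℝ × ℝ)} {E : Finset ((ℝ × ℝ) × (ℝ × ℝ))} (hG : Good V E)
    {e f : (ℝ × ℝ) × (ℝ × ℝ)} (he : e ∈ E) (hf : f ∈ E) (hne : e ≠ f) (hc : Crs e f) :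
    e.1 ≠ f.1 ∧ e.2 ≠ f.2 ∧ e.1 ≠ f.2 ∧ e.2 ≠ f.1 := by
  obtain ⟨x, h1, h2, h3, h4, h5⟩ := hc
  have e3 := (hG.2 e he).2.2.1
  have f3 := (hG.2 f hf).2.2.1
  have hs : slp e ≠ slp f := fun hs => hne (good_eq hG he hf hs x h1 h2 h3 h4 h5)
  refine ⟨fun h => ?_, fun h => ?_, fun h => ?_, fun h => ?_⟩
  · apply hs
    simp only [hgt, h] at h5
    have : x - f.1.1 ≠ 0 := by linarith
    exact mul_right_cancel₀ this (by linarith)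
  · apply hs
    rw [hgt_aff e x e.2.1, hgt_aff f x f.2.1, hgt_right e e3, hgt_right f f3, h] at h5
    have : x - f.2.1 ≠ 0 := by linarith
    exact mul_right_cancel₀ this (by linarith)
  · rw [h] at h1; linarith
  · rw [h] at h2; linarith

abbrev Ix := (ℝ × ℝ) ⊕ ((ℝ × ℝ) × (ℝ × ℝ))

noncomputable def eMon (e : (ℝ × ℝ) × (ℝ × ℝ)) : Finset Ix := {Sum.inr e, Sum.inl e.1, Sum.inl e.2}

lemma eMon_prod (e : (ℝ × ℝ) × (ℝ × ℝ)) (h : e.1 ≠ e.2) (x : Ix → ℝ) :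
    ∏ i ∈ eMon e, x i = x (Sum.inr e) * (x (Sum.inl e.1) * x (Sum.inl e.2)) := by
  unfold eMon
  rw [Finset.prod_insert (by simp), Finset.prod_pair (by simpa using h)]

lemma eMon_prod_pair (e f : (ℝ × ℝ) × (ℝ × ℝ)) (hef : e ≠ f)
    (h : e.1 ≠ f.1 ∧ e.2 ≠ f.2 ∧ e.1 ≠ f.2 ∧ e.2 ≠ f.1) (x : Ix → ℝ) :
    ∏ i ∈ eMon e ∪ eMon f, x i = (∏ i ∈ eMon e, x i) * (∏ i ∈ eMon f, x i) := by
  apply Finset.prod_union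
  rw [Finset.disjoint_left]
  intro a ha hb
  simp only [eMon, Finset.mem_insert, Finset.mem_singleton] at ha hb
  obtain ⟨h1, h2, h3, h4⟩ := h
  rcases ha with rfl | rfl | rfl <;> simp at hb <;> tauto

lemma weighted_crossing {V : Finset (ℝ × ℝ)} {E : Finset ((ℝ × ℝ) × (ℝ × ℝ))} (hG : Good V E)
    (p : ℝ) (hp0 : 0 ≤ p) (hp1 : p ≤ 1) (m : (ℝ × ℝ) × (ℝ × ℝ) → ℝ)
    (hm : ∀ e ∈ E, 0 ≤ m e ∧ m e ≤ 1) :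
    p ^ 2 * ∑ e ∈ E, m e ≤ 3 * p * V.card + p ^ 4 * ∑ r ∈ crsPairs E, m r.1 * m r.2 := by
  have hne : ∀ e ∈ E, e.1 ≠ e.2 := by
    intro e he h
    have := (hG.2 e he).2.2.1
    rw [h] at this; exact lt_irrefl _ this
  have hcp : ∀ r ∈ crsPairs E, r.1 ∈ E ∧ r.2 ∈ E ∧ r.1 ≠ r.2 ∧ Crs r.1 r.2 := by
    intro r hr
    simp only [crsPairs, Finset.mem_filter, Finset.mem_product] at hr
    tauto
  let F : (Ix → ℝ) → ℝ := fun x =>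
    (3 * ∑ v ∈ V, ∏ i ∈ ({Sum.inl v} : Finset Ix), x i) +
    ((∑ r ∈ crsPairs E, ∏ i ∈ eMon r.1 ∪ eMon r.2, x i) + (-1) * ∑ e ∈ E, ∏ i ∈ eMon e, x i)
  have hF : MA F :=
    ((MA.sum V (fun v x => ∏ i ∈ ({Sum.inl v} : Finset Ix), x i) fun k => MA.prod _).const_mul 3).add
      ((MA.sum (crsPairs E) (fun r x => ∏ i ∈ eMon r.1 ∪ eMon r.2, x i) fun k => MA.prod _).add
      ((MA.sum E (fun e x => ∏ i ∈ eMon e, x i) fun k => MA.prod _).const_mul (-1)))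
  have hFe : ∀ x, F x = 3 * ∑ v ∈ V, x (Sum.inl v) +
      (∑ r ∈ crsPairs E, (x (Sum.inr r.1) * (x (Sum.inl r.1.1) * x (Sum.inl r.1.2))) *
        (x (Sum.inr r.2) * (x (Sum.inl r.2.1) * x (Sum.inl r.2.2)))) -
      ∑ e ∈ E, x (Sum.inr e) * (x (Sum.inl e.1) * x (Sum.inl e.2)) := by
    intro x
    have a1 : ∑ r ∈ crsPairs E, ∏ i ∈ eMon r.1 ∪ eMon r.2, x i =
      ∑ r ∈ crsPairs E, (x (Sum.inr r.1) * (x (Sum.inl r.1.1) * x (Sum.inl r.1.2))) *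
        (x (Sum.inr r.2) * (x (Sum.inl r.2.1) * x (Sum.inl r.2.2))) := by
      refine Finset.sum_congr rfl fun r hr => ?_
      obtain ⟨b1, b2, b3, b4⟩ := hcp r hr
      rw [eMon_prod_pair r.1 r.2 b3 (crs_distinct hG b1 b2 b3 b4), eMon_prod _ (hne _ b1),
        eMon_prod _ (hne _ b2)]
    have a2 : ∑ e ∈ E, ∏ i ∈ eMon e, x i =
        ∑ e ∈ E, x (Sum.inr e) * (x (Sum.inl e.1) * x (Sum.inl e.2)) :=
      Finset.sum_congr rfl fun e he => eMon_prod _ (hne _ he) x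
    simp only [F, a1, a2, Finset.prod_singleton]
    ring
  have h01 : ∀ x : Ix → ℝ, (∀ i, x i = 0 ∨ x i = 1) → 0 ≤ F x := by
    intro x hx
    rw [hFe]
    set V' := V.filter fun v => x (Sum.inl v) = 1 with hV'
    set E' := E.filter fun e => x (Sum.inr e) = 1 ∧ x (Sum.inl e.1) = 1 ∧ x (Sum.inl e.2) = 1 with hE'
    have hG' : Good V' E' := by
      refine ⟨fun a ha b hb => hG.1 a (Finset.mem_filter.mp ha).1 b (Finset.mem_filter.mp hb).1, ?_⟩
      intro e he
      rw [hE', Finset.mem_filter] at he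
      obtain ⟨he, k1, k2, k3⟩ := he
      obtain ⟨g1, g2, g3, g4⟩ := hG.2 e he
      exact ⟨by simp [hV', g1, k2], by simp [hV', g2, k3], g3,
        fun v hv => g4 v (Finset.mem_filter.mp hv).1⟩
    have hb := crossing_base _ E' rfl hG'
    have c1 : (V'.card : ℝ) = ∑ v ∈ V, x (Sum.inl v) := by
      rw [hV', Finset.card_filter]; push_cast
      refine Finset.sum_congr rfl fun v _ => ?_
      rcases hx (Sum.inl v) with h | h <;> simp [h]
    have c2 : (E'.card : ℝ) = ∑ e ∈ E, x (Sum.inr e) * (x (Sum.inl e.1) * x (Sum.inl e.2)) := by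
      rw [hE', Finset.card_filter]; push_cast
      refine Finset.sum_congr rfl fun e _ => ?_
      rcases hx (Sum.inr e) with h | h <;> rcases hx (Sum.inl e.1) with h' | h' <;>
        rcases hx (Sum.inl e.2) with h'' | h'' <;> simp [h, h', h'']
    have c3 : ((crsPairs E').card : ℝ) ≤ ∑ r ∈ crsPairs E,
        (x (Sum.inr r.1) * (x (Sum.inl r.1.1) * x (Sum.inl r.1.2))) *
        (x (Sum.inr r.2) * (x (Sum.inl r.2.1) * x (Sum.inl r.2.2))) := by
      have hsub : crsPairs E' ⊆ crsPairs E := by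
        intro r hr
        simp only [crsPairs, hE', Finset.mem_filter, Finset.mem_product] at hr ⊢
        tauto
      have hnn : ∀ i, 0 ≤ x i := fun i => by rcases hx i with h | h <;> simp [h]
      calc ((crsPairs E').card : ℝ) = ∑ r ∈ crsPairs E', (1 : ℝ) := by simp
        _ = ∑ r ∈ crsPairs E', (x (Sum.inr r.1) * (x (Sum.inl r.1.1) * x (Sum.inl r.1.2))) *
        (x (Sum.inr r.2) * (x (Sum.inl r.2.1) * x (Sum.inl r.2.2))) := by
            refine Finset.sum_congr rfl fun r hr => ?_
            simp only [crsPairs, hE', Finset.mem_filter, Finset.mem_product] at hr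
            obtain ⟨⟨⟨_, d1, d2, d3⟩, _, d4, d5, d6⟩, _⟩ := hr
            simp [d1, d2, d3, d4, d5, d6]
        _ ≤ _ := by
            refine Finset.sum_le_sum_of_subset_of_nonneg hsub fun r _ _ => ?_
            have n1 := hnn (Sum.inr r.1)
            have n2 := hnn (Sum.inr r.2)
            have n3 := hnn (Sum.inl r.1.1)
            have n4 := hnn (Sum.inl r.1.2)
            have n5 := hnn (Sum.inl r.2.1)
            have n6 := hnn (Sum.inl r.2.2)
            positivity
    have hb' : (E'.card : ℝ) ≤ 3 * V'.card + (crsPairs E').card := by exact_mod_cast hb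
    rw [← c1, ← c2]
    linarith
  let x : Ix → ℝ := Sum.elim (fun v => if v ∈ V then p else 0) (fun e => if e ∈ E then m e else 0)
  have hmain := MA.nonneg F hF h01 (V.image Sum.inl ∪ E.image Sum.inr) x (by
      rintro (v | e)
      · simp only [x, Sum.elim_inl]; split_ifs <;> simp [hp0, hp1]
      · simp only [x, Sum.elim_inr]
        split_ifs with h
        · exact hm e h
        · simp) (by
      rintro (v | e) hi
      · have : v ∉ V := by simpa using hi
        simp [x, this]
      · have : e ∉ E := fun h => hi (Finset.mem_union_right _ (Finset.mem_image_of_mem _ h))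
        simp [x, this])
  rw [hFe] at hmain
  have s1 : ∑ v ∈ V, x (Sum.inl v) = p * V.card := by
    rw [Finset.sum_congr rfl (g := fun _ => p) (fun v hv => by simp [x, hv])]
    simp [mul_comm]
  have s2 : ∑ e ∈ E, x (Sum.inr e) * (x (Sum.inl e.1) * x (Sum.inl e.2)) = p ^ 2 * ∑ e ∈ E, m e := by
    rw [Finset.mul_sum]
    refine Finset.sum_congr rfl fun e he => ?_
    obtain ⟨g1, g2, g3, g4⟩ := hG.2 e he
    simp only [x, Sum.elim_inl, Sum.elim_inr, he, g1, g2, if_true]; ring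
  have s3 : ∑ r ∈ crsPairs E, (x (Sum.inr r.1) * (x (Sum.inl r.1.1) * x (Sum.inl r.1.2))) *
        (x (Sum.inr r.2) * (x (Sum.inl r.2.1) * x (Sum.inl r.2.2))) =
        p ^ 4 * ∑ r ∈ crsPairs E, m r.1 * m r.2 := by
    rw [Finset.mul_sum]
    refine Finset.sum_congr rfl fun r hr => ?_
    obtain ⟨b1, b2, _, _⟩ := hcp r hr
    obtain ⟨g1, g2, _, _⟩ := hG.2 _ b1
    obtain ⟨g3, g4, _, _⟩ := hG.2 _ b2
    simp only [x, Sum.elim_inl, Sum.elim_inr, b1, b2, g1, g2, g3, g4, if_true]; ring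
  rw [s1, s2, s3] at hmain
  linarith

/-- the edges of the point set `P`: pairs with no point of `P` in between -/
noncomputable def EP (P : Finset (ℝ × ℝ)) : Finset ((ℝ × ℝ) × (ℝ × ℝ)) :=
  (P ×ˢ P).filter fun e => e.1.1 < e.2.1 ∧
    ∀ v ∈ P, e.1.1 < v.1 → v.1 < e.2.1 → v.2 ≠ hgt e v.1

noncomputable def MP (P : Finset (ℝ × ℝ)) (e : (ℝ × ℝ) × (ℝ × ℝ)) : Finset (ℝ × ℝ) :=
  P.filter fun q => omegaForm q e.1 = omegaForm q e.2 ∧ omegaForm q e.1 ≠ 0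

lemma good_EP (P : Finset (ℝ × ℝ)) (hP : ∀ a ∈ P, ∀ b ∈ P, a.1 = b.1 → a = b) :
    Good P (EP P) := by
  refine ⟨hP, fun e he => ?_⟩
  simp only [EP, Finset.mem_filter, Finset.mem_product] at he
  exact ⟨he.1.1, he.1.2, he.2.1, he.2.2⟩

lemma om_slp (q : ℝ × ℝ) (e : (ℝ × ℝ) × (ℝ × ℝ)) (h : e.1.1 < e.2.1)
    (hq : omegaForm q e.1 = omegaForm q e.2) : q.1 * slp e = q.2 := by
  have : e.2.1 - e.1.1 ≠ 0 := by linarith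
  simp only [omegaForm] at hq
  simp only [slp]
  field_simp
  linarith

lemma om_line (q : ℝ × ℝ) (e : (ℝ × ℝ) × (ℝ × ℝ)) (h : e.1.1 < e.2.1)
    (hq : omegaForm q e.1 = omegaForm q e.2) (y : ℝ) :
    q.1 * hgt e y - q.2 * y = omegaForm q e.1 := by
  have := om_slp q e h hq
  simp only [hgt, omegaForm]
  linear_combination (y - e.1.1) * this

lemma om_ne (q : ℝ × ℝ) (e : (ℝ × ℝ) × (ℝ × ℝ)) (h : e.1.1 < e.2.1)
    (hq : omegaForm q e.1 = omegaForm q e.2) (h0 : omegaForm q e.1 ≠ 0) : q.1 ≠ 0 := by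
  intro hc
  have := om_slp q e h hq
  apply h0
  rw [hc] at this
  simp [omegaForm, hc, ← this]

lemma mem_Tset {P : Finset (ℝ × ℝ)} {a b : ℝ × ℝ} (ha : a ∈ P) (hb : b ∈ P)
    (h : omegaForm a b ≠ 0) : omegaForm a b ∈ Tset P := by
  simp only [Tset, Finset.mem_erase, Finset.mem_image, Finset.mem_product]
  exact ⟨h, (a, b), ⟨ha, hb⟩, rfl⟩

lemma edges_lower (P : Finset (ℝ × ℝ)) (hP : ∀ a ∈ P, ∀ b ∈ P, a.1 = b.1 → a = b)
    (q : ℝ × ℝ) (hq : q ∈ P) :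
    (P.filter fun x => omegaForm q x ≠ 0).card ≤
      ((EP P).filter fun e => q ∈ MP P e).card + (Tset P).card := by
  set A := P.filter fun x => omegaForm q x ≠ 0 with hA
  set p : ℝ × ℝ → Prop := fun x => ∃ y ∈ P, x.1 < y.1 ∧ omegaForm q y = omegaForm q x with hp
  rw [← Finset.card_filter_add_card_filter_not (s := A) p]
  apply Nat.add_le_add
  · have hsub : A.filter p ⊆ ((EP P).filter fun e => q ∈ MP P e).image Prod.fst := by
      intro x hx
      simp only [hA, hp, Finset.mem_filter] at hx
      obtain ⟨⟨hxP, hx0⟩, y0, hy0, hy1, hy2⟩ := hx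
      obtain ⟨y, hy, hmin⟩ := Finset.exists_min_image
        (P.filter fun y => x.1 < y.1 ∧ omegaForm q y = omegaForm q x) Prod.fst
        ⟨y0, by simp [hy0, hy1, hy2]⟩
      simp only [Finset.mem_filter] at hy hmin
      obtain ⟨hyP, hxy, hyq⟩ := hy
      simp only [Finset.mem_image, Finset.mem_filter, EP, MP, Finset.mem_product]
      refine ⟨(x, y), ⟨⟨⟨hxP, hyP⟩, hxy, ?_⟩, hq, hyq.symm, hx0⟩, rfl⟩
      intro v hv v1 v2 v3
      have := om_line q (x, y) hxy hyq.symm v.1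
      have := hmin v ⟨hv, v1, by rw [← v3] at this; exact this⟩
      simp only at v2
      linarith
    exact (Finset.card_le_card hsub).trans Finset.card_image_le
  · apply Finset.card_le_card_of_injOn (fun x => omegaForm q x)
    · intro x hx
      simp only [hA, Finset.coe_filter, Finset.mem_filter, Set.mem_ofPred_eq] at hx
      exact mem_Tset hq hx.1.1 hx.1.2
    · intro x hx y hy hxy
      simp only [hA, hp, Finset.coe_filter, Finset.mem_filter, Set.mem_ofPred_eq] at hx hy hxy
      apply hP x hx.1.1 y hy.1.1
      rcases lt_trichotomy x.1 y.1 with h | h | h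
      · exact absurd ⟨y, hy.1.1, h, hxy.symm⟩ hx.2
      · exact h
      · exact absurd ⟨x, hx.1.1, h, hxy⟩ hy.2

lemma cross_upper (P : Finset (ℝ × ℝ)) (hP : ∀ a ∈ P, ∀ b ∈ P, a.1 = b.1 → a = b) :
    ∑ r ∈ crsPairs (EP P), (MP P r.1).card * (MP P r.2).card ≤ (P.card * (Tset P).card) ^ 2 := by
  have hG := good_EP P hP
  have h1 : ∑ r ∈ crsPairs (EP P), (MP P r.1).card * (MP P r.2).card =
      ((crsPairs (EP P)).sigma fun r => MP P r.1 ×ˢ MP P r.2).card := by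
    rw [Finset.card_sigma]; simp [Finset.card_product]
  have h2 : (P.card * (Tset P).card) ^ 2 = ((P ×ˢ P) ×ˢ (Tset P ×ˢ Tset P)).card := by
    simp only [Finset.card_product]; ring
  rw [h1, h2]
  apply Finset.card_le_card_of_injOn
    (fun s => (s.2, (omegaForm s.2.1 s.1.1.1, omegaForm s.2.2 s.1.2.1)))
  · rintro ⟨⟨e, f⟩, q, q'⟩ h
    simp only [crsPairs, MP, Finset.mem_coe, Finset.mem_sigma, Finset.mem_filter,
      Finset.mem_product] at h ⊢
    obtain ⟨⟨⟨he, hf⟩, hef, hc⟩, ⟨hq, hq1, hq2⟩, hq', hq1', hq2'⟩ := h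
    exact ⟨⟨hq, hq'⟩, mem_Tset hq (hG.2 e he).1 hq2, mem_Tset hq' (hG.2 f hf).1 hq2'⟩
  · rintro ⟨⟨e, f⟩, q, q'⟩ h ⟨⟨e', f'⟩, k, k'⟩ h' heq
    simp only [crsPairs, MP, Finset.mem_coe, Finset.mem_sigma, Finset.mem_filter,
      Finset.mem_product] at h h'
    simp only [Prod.mk.injEq] at heq
    obtain ⟨⟨rfl, rfl⟩, t1, t2⟩ := heq
    obtain ⟨⟨⟨he, hf⟩, hef, x, x1, x2, x3, x4, x5⟩, ⟨hq, hq1, hq2⟩, hq', hq1', hq2'⟩ := h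
    obtain ⟨⟨⟨he', hf'⟩, hef', y, y1, y2, y3, y4, y5⟩, ⟨_, hk1, hk2⟩, _, hk1', hk2'⟩ := h'
    have e3 := (hG.2 e he).2.2.1
    have f3 := (hG.2 f hf).2.2.1
    have e3' := (hG.2 e' he').2.2.1
    have f3' := (hG.2 f' hf').2.2.1
    have hq0 := om_ne q e e3 hq1 hq2
    have hq0' := om_ne q' f f3 hq1' hq2'
    have se : slp e = slp e' := mul_left_cancel₀ hq0 (by
      rw [om_slp q e e3 hq1, om_slp q e' e3' hk1])
    have sf : slp f = slp f' := mul_left_cancel₀ hq0' (by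
      rw [om_slp q' f f3 hq1', om_slp q' f' f3' hk1'])
    have le : ∀ z, hgt e z = hgt e' z := fun z => mul_left_cancel₀ hq0 (by
      linarith [om_line q e e3 hq1 z, om_line q e' e3' hk1 z])
    have lf : ∀ z, hgt f z = hgt f' z := fun z => mul_left_cancel₀ hq0' (by
      linarith [om_line q' f f3 hq1' z, om_line q' f' f3' hk1' z])
    have hs : slp e ≠ slp f := fun hs => hef (good_eq hG he hf hs x x1 x2 x3 x4 x5)
    have hxy : x = y := by
      rw [← le, ← lf, hgt_aff e y x, hgt_aff f y x, x5] at y5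
      have : (slp e - slp f) * (y - x) = 0 := by linarith
      rcases mul_eq_zero.mp this with h | h
      · exact absurd (sub_eq_zero.mp h) hs
      · linarith
    subst hxy
    have r1 := good_eq hG he he' se x x1 x2 y1 y2 (le x)
    have r2 := good_eq hG hf hf' sf x x3 x4 y3 y4 (lf x)
    subst r1 r2
    rfl

lemma MP_card_le (P : Finset (ℝ × ℝ)) (W : ℕ)
    (hW : ∀ q ∈ P, (P.filter fun p => omegaForm q p = 0).card ≤ W)
    (e : (ℝ × ℝ) × (ℝ × ℝ)) (he : e.1.1 < e.2.1) : (MP P e).card ≤ W := by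
  rcases (MP P e).eq_empty_or_nonempty with h | ⟨q, hq⟩
  · simp [h]
  simp only [MP, Finset.mem_filter] at hq
  refine (Finset.card_le_card ?_).trans (hW q hq.1)
  intro k hk
  simp only [MP, Finset.mem_filter] at hk ⊢
  refine ⟨hk.1, ?_⟩
  have h1 := om_slp q e he hq.2.1
  have h2 := om_slp k e he hk.2.1
  simp only [omegaForm]
  rw [← h1, ← h2]; ring

lemma main_generic (P : Finset (ℝ × ℝ)) (hP : ∀ a ∈ P, ∀ b ∈ P, a.1 = b.1 → a = b) (W : ℕ)
    (hW : ∀ q ∈ P, (P.filter fun p => omegaForm q p = 0).card ≤ W) (hW1 : 1 ≤ W)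
    (hWT : W ≤ (Tset P).card) (hne : P.Nonempty) :
    (P.card : ℝ) ^ 2 ≤ 576 * W * ((Tset P).card : ℝ) ^ 2 := by
  have hG := good_EP P hP
  set N : ℝ := (P.card : ℝ) with hN
  set T : ℝ := ((Tset P).card : ℝ) with hT
  have hNpos : 0 < N := by rw [hN]; exact_mod_cast hne.card_pos
  have hW1' : (1 : ℝ) ≤ W := by exact_mod_cast hW1
  have hWT' : (W : ℝ) ≤ T := by rw [hT]; exact_mod_cast hWT
  have hT2 : T ^ 2 ≤ W * T ^ 2 := le_mul_of_one_le_left (sq_nonneg _) hW1'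
  by_cases c1 : N < 12 * W
  · have : N ^ 2 ≤ (12 * T) ^ 2 := pow_le_pow_left₀ hNpos.le (by linarith) 2
    nlinarith
  by_cases c2 : N ≤ 4 * T
  · have : N ^ 2 ≤ (4 * T) ^ 2 := pow_le_pow_left₀ hNpos.le c2 2
    nlinarith
  push Not at c1 c2
  have hWpos : (0 : ℝ) < W := by linarith
  -- lower bound for the total weight
  have hS : N ^ 2 / 2 ≤ ∑ e ∈ EP P, ((MP P e).card : ℝ) := by
    have hq : ∀ q ∈ P, N / 2 ≤ (((EP P).filter fun e => q ∈ MP P e).card : ℝ) := by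
      intro q hq
      have h1 := edges_lower P hP q hq
      have h2 := Finset.card_filter_add_card_filter_not (s := P) (fun x => omegaForm q x = 0)
      have h3 := hW q hq
      have h4 : P.card ≤ ((EP P).filter fun e => q ∈ MP P e).card + (Tset P).card + W := by
        simp only [ne_eq] at h1; omega
      have h5 : N ≤ (((EP P).filter fun e => q ∈ MP P e).card : ℝ) + T + W := by
        rw [hN, hT]; exact_mod_cast h4
      linarith
    have hsw : ∑ e ∈ EP P, ((MP P e).card : ℝ) =
        ∑ q ∈ P, (((EP P).filter fun e => q ∈ MP P e).card : ℝ) := by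
      have : ∀ e, MP P e = P.filter fun q => q ∈ MP P e := by
        intro e; ext q; simp only [MP, Finset.mem_filter]; tauto
      have h := Finset.sum_card_bipartiteAbove_eq_sum_card_bipartiteBelow
        (s := EP P) (t := P) (fun e q => q ∈ MP P e)
      simp only [Finset.bipartiteAbove, Finset.bipartiteBelow] at h
      rw [Finset.sum_congr rfl (fun e _ => by rw [this e])]
      exact_mod_cast h
    rw [hsw]
    calc N ^ 2 / 2 = ∑ q ∈ P, N / 2 := by rw [Finset.sum_const, nsmul_eq_mul, ← hN]; ring
      _ ≤ _ := Finset.sum_le_sum hq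
  have hX : ∑ r ∈ crsPairs (EP P), ((MP P r.1).card : ℝ) * ((MP P r.2).card : ℝ) ≤ (N * T) ^ 2 := by
    rw [hN, hT]; exact_mod_cast cross_upper P hP
  have hmain := weighted_crossing hG (12 * W / N) (by positivity)
    (by rw [div_le_one hNpos]; exact c1) (fun e => ((MP P e).card : ℝ) / W) (by
      intro e he
      refine ⟨by positivity, ?_⟩
      rw [div_le_one hWpos]
      exact_mod_cast MP_card_le P W hW e (hG.2 e he).2.2.1)
  have e1 : ∑ e ∈ EP P, ((MP P e).card : ℝ) / W = (∑ e ∈ EP P, ((MP P e).card : ℝ)) / W :=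
    (Finset.sum_div _ _ _).symm
  have e2 : ∑ r ∈ crsPairs (EP P), ((MP P r.1).card : ℝ) / W * (((MP P r.2).card : ℝ) / W) =
      (∑ r ∈ crsPairs (EP P), ((MP P r.1).card : ℝ) * ((MP P r.2).card : ℝ)) / W ^ 2 := by
    rw [Finset.sum_div]
    exact Finset.sum_congr rfl fun r _ => by field_simp
  rw [e1, e2, ← hN] at hmain
  have l1 : (12 * W / N) ^ 2 * ((N ^ 2 / 2) / W) ≤
      (12 * W / N) ^ 2 * ((∑ e ∈ EP P, ((MP P e).card : ℝ)) / W) := by gcongr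
  have l2 : (12 * W / N) ^ 4 *
      ((∑ r ∈ crsPairs (EP P), ((MP P r.1).card : ℝ) * ((MP P r.2).card : ℝ)) / W ^ 2) ≤
      (12 * W / N) ^ 4 * ((N * T) ^ 2 / W ^ 2) := by gcongr
  have l3 := l1.trans (hmain.trans (add_le_add_right l2 _))
  have s1 : (12 * W / N) ^ 2 * ((N ^ 2 / 2) / W) = 72 * W := by field_simp; norm_num
  have s2 : 3 * (12 * W / N) * N = 36 * W := by field_simp; norm_num
  have s3 : (12 * W / N) ^ 4 * ((N * T) ^ 2 / W ^ 2) = 20736 * (W : ℝ) ^ 2 * T ^ 2 / N ^ 2 := by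
    field_simp; ring
  rw [s1, s2, s3] at l3
  have l4 : 36 * (W : ℝ) ≤ 20736 * (W : ℝ) ^ 2 * T ^ 2 / N ^ 2 := by linarith
  rw [le_div_iff₀ (by positivity)] at l4
  have l5 : (36 * (W : ℝ)) * N ^ 2 ≤ (36 * (W : ℝ)) * (576 * W * T ^ 2) := by linarith
  exact le_of_mul_le_mul_left l5 (by positivity)

/-- shear -/
def shr (s : ℝ) (a : ℝ × ℝ) : ℝ × ℝ := (a.1 + s * a.2, a.2)

lemma om_shr (s : ℝ) (a b : ℝ × ℝ) : omegaForm (shr s a) (shr s b) = omegaForm a b := by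
  simp only [omegaForm, shr]; ring

lemma shr_inj (s : ℝ) : Function.Injective (shr s) := by
  intro a b h
  simp only [shr, Prod.mk.injEq] at h
  obtain ⟨h1, h2⟩ := h
  rw [h2] at h1
  exact Prod.ext (by linarith) h2

lemma main_all (P : Finset (ℝ × ℝ)) (W : ℕ)
    (hW : ∀ q ∈ P, (P.filter fun p => omegaForm q p = 0).card ≤ W) (hW1 : 1 ≤ W)
    (hWT : W ≤ (Tset P).card) (hne : P.Nonempty) :
    (P.card : ℝ) ^ 2 ≤ 576 * W * ((Tset P).card : ℝ) ^ 2 := by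
  obtain ⟨s, hs⟩ := Infinite.exists_notMem_finset
    ((P ×ˢ P).image fun ab => (ab.2.1 - ab.1.1) / (ab.1.2 - ab.2.2))
  set P' := P.image (shr s) with hP'
  have hcard : P'.card = P.card := Finset.card_image_of_injective _ (shr_inj s)
  have hTs : Tset P' = Tset P := by
    ext t
    simp only [Tset, hP', Finset.mem_erase, Finset.mem_image, Finset.mem_product]
    constructor
    · rintro ⟨h0, ab, ⟨⟨a, ha, ha'⟩, b, hb, hb'⟩, rfl⟩
      exact ⟨h0, (a, b), ⟨ha, hb⟩, by rw [← ha', ← hb', om_shr]⟩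
    · rintro ⟨h0, ab, ⟨ha, hb⟩, rfl⟩
      exact ⟨h0, (shr s ab.1, shr s ab.2), ⟨⟨_, ha, rfl⟩, _, hb, rfl⟩, om_shr s _ _⟩
  have := main_generic P' ?_ W ?_ hW1 (by rw [hTs]; exact hWT) (hne.image _)
  · rwa [hcard, hTs] at this
  · intro a ha b hb hab
    rw [hP', Finset.mem_image] at ha hb
    obtain ⟨a, ha, rfl⟩ := ha
    obtain ⟨b, hb, rfl⟩ := hb
    simp only [shr] at hab
    by_cases h2 : a.2 = b.2
    · rw [h2] at hab
      rw [Prod.ext (show a.1 = b.1 by linarith) h2]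
    · exfalso
      apply hs
      rw [Finset.mem_image]
      refine ⟨(a, b), by simp [ha, hb], ?_⟩
      have : a.2 - b.2 ≠ 0 := sub_ne_zero.mpr h2
      simp only
      rw [div_eq_iff this]; linarith
  · intro q hq
    rw [hP', Finset.mem_image] at hq
    obtain ⟨q, hq, rfl⟩ := hq
    refine le_trans ?_ (hW q hq)
    rw [hP', Finset.filter_image]
    simp only [om_shr]
    exact Finset.card_image_le

lemma par_of_om {q p : ℝ × ℝ} (hq : q ≠ 0) (h : omegaForm q p = 0) : ∃ t : ℝ, p = t • q := by
  simp only [omegaForm] at h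
  by_cases h1 : q.1 = 0
  · have h2 : q.2 ≠ 0 := fun h2 => hq (Prod.ext h1 h2)
    refine ⟨p.2 / q.2, Prod.ext ?_ ?_⟩
    · have : q.2 * p.1 = 0 := by rw [h1] at h; linarith
      simpa [h1, h2] using this
    · simp [h2]
  · refine ⟨p.1 / q.1, Prod.ext ?_ ?_⟩
    · simp [h1]
    · simp only [Prod.smul_snd, smul_eq_mul]
      field_simp
      linarith

theorem stmt_8 :
    ∃ c : ℝ, 0 < c ∧
      ∀ (w₀ : ℝ) (P : Finset (ℝ × ℝ)),
        1 ≤ w₀ →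
        (∀ p ∈ P, p ≠ (0 : ℝ × ℝ)) →
        (∀ u : ℝ × ℝ, u ≠ 0 →
          (((P.filter fun p => ∃ t : ℝ, p = t • u).card : ℝ) ≤ w₀)) →
        (¬ ∃ u : ℝ × ℝ, u ≠ 0 ∧ ∀ p ∈ P, ∃ t : ℝ, p = t • u) →
        c * (P.card : ℝ) * w₀ ^ (-(1 : ℝ) / 2) ≤ ((Tset P).card : ℝ) := by
  refine ⟨1 / 24, by norm_num, fun w₀ P hw hP0 hline hnot => ?_⟩
  have hne : P.Nonempty := by
    rw [Finset.nonempty_iff_ne_empty]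
    rintro rfl
    exact hnot ⟨(1, 0), by simp, by simp⟩
  obtain ⟨q0, hq0, hmax⟩ := Finset.exists_max_image P
    (fun q => (P.filter fun p => omegaForm q p = 0).card) hne
  set W := (P.filter fun p => omegaForm q0 p = 0).card with hWdef
  have hW1 : 1 ≤ W := Finset.card_pos.mpr ⟨q0, by simp [hq0, omegaForm, mul_comm]⟩
  have hWw : (W : ℝ) ≤ w₀ := by
    refine le_trans ?_ (hline q0 (hP0 q0 hq0))
    have : W ≤ (P.filter fun p => ∃ t : ℝ, p = t • q0).card := by
      apply Finset.card_le_card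
      intro p hp
      rw [Finset.mem_filter] at hp ⊢
      exact ⟨hp.1, par_of_om (hP0 q0 hq0) hp.2⟩
    exact_mod_cast this
  have hWT : W ≤ (Tset P).card := by
    have : ∃ p1 ∈ P, omegaForm q0 p1 ≠ 0 := by
      by_contra hc
      push Not at hc
      exact hnot ⟨q0, hP0 q0 hq0, fun p hp => par_of_om (hP0 q0 hq0) (hc p hp)⟩
    obtain ⟨p1, hp1, hp10⟩ := this
    have hsm : ∀ t : ℝ, omegaForm p1 (t • q0) = -t * omegaForm q0 p1 := by
      intro t; simp [omegaForm]; ring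
    apply Finset.card_le_card_of_injOn (fun p => omegaForm p1 p)
    · intro p hp
      rw [Finset.mem_coe, Finset.mem_filter] at hp
      obtain ⟨t, rfl⟩ := par_of_om (hP0 q0 hq0) hp.2
      refine mem_Tset hp1 hp.1 ?_
      rw [hsm]
      refine mul_ne_zero (neg_ne_zero.mpr ?_) hp10
      rintro rfl
      exact hP0 _ hp.1 (zero_smul _ _)
    · intro p hp p' hp' heq
      rw [Finset.mem_coe, Finset.mem_filter] at hp hp'
      obtain ⟨t, rfl⟩ := par_of_om (hP0 q0 hq0) hp.2
      obtain ⟨t', rfl⟩ := par_of_om (hP0 q0 hq0) hp'.2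
      simp only [hsm] at heq
      have := mul_right_cancel₀ hp10 heq
      rw [neg_inj.mp this]
  have h := main_all P W hmax hW1 hWT hne
  have hw0 : 0 < w₀ := by linarith
  have h' : (P.card : ℝ) ^ 2 ≤ 576 * w₀ * ((Tset P).card : ℝ) ^ 2 := by
    refine h.trans ?_
    gcongr
  have hpow : w₀ ^ (-(1 : ℝ) / 2) = (Real.sqrt w₀)⁻¹ := by
    rw [Real.sqrt_eq_rpow, ← Real.rpow_neg hw0.le]; norm_num
  rw [hpow]
  have hsq : 0 < Real.sqrt w₀ := Real.sqrt_pos.mpr hw0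
  rw [← div_eq_mul_inv, div_le_iff₀ hsq]
  have : (P.card : ℝ) ≤ 24 * ((Tset P).card * Real.sqrt w₀) := by
    refine le_of_sq_le_sq ?_ (by positivity)
    calc (P.card : ℝ) ^ 2 ≤ 576 * w₀ * ((Tset P).card : ℝ) ^ 2 := h'
      _ = _ := by rw [mul_pow, mul_pow, Real.sq_sqrt hw0.le]; ring
  linarith
end

section
/- There exists an absolute constant c > 0 such that the following holds. Let w₀ ≥ 1 and let P be a finite set of N points in ℝ² \ {0} such that every line through the origin that intersects P contains at least w₀ points of P, and such that the points of P are supported on at least four distinct lines through the origin. Then |T(P)| ≥ c·(N·w₀)^(3/7). -/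
open Finset
open scoped Classical

/-- number of elements of `S` below `x` -/
noncomputable def rk (S : Finset ℝ) (x : ℝ) : ℕ := (S.filter (· < x)).card

/-- index of the chunk containing `x` -/
noncomputable def chk (S : Finset ℝ) (m : ℕ) (x : ℝ) : ℕ := rk S x / m

lemma rk_mono (S : Finset ℝ) {x y : ℝ} (h : x ≤ y) : rk S x ≤ rk S y := by
  apply card_le_card
  intro z hz
  simp only [mem_filter] at hz ⊢
  exact ⟨hz.1, lt_of_lt_of_le hz.2 h⟩

lemma rk_lt (S : Finset ℝ) {x y : ℝ} (hx : x ∈ S) (h : x < y) : rk S x < rk S y := by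
  apply card_lt_card
  refine ⟨?_, ?_⟩
  · intro z hz
    simp only [mem_filter] at hz ⊢
    exact ⟨hz.1, hz.2.trans h⟩
  · intro hsub
    have := hsub (by simp only [mem_filter]; exact ⟨hx, h⟩ : x ∈ S.filter (· < y))
    simp at this

lemma rk_lt_card (S : Finset ℝ) {x : ℝ} (hx : x ∈ S) : rk S x < S.card := by
  apply card_lt_card
  refine ⟨filter_subset _ _, ?_⟩
  intro hsub
  have := hsub hx
  simp at this

lemma chk_mono (S : Finset ℝ) (m : ℕ) {x y : ℝ} (h : x ≤ y) : chk S m x ≤ chk S m y :=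
  Nat.div_le_div_right (rk_mono S h)

/-- number of chunks -/
def nch (k m : ℕ) : ℕ := (k - 1) / m + 1

lemma chk_lt (S : Finset ℝ) (m : ℕ) {x : ℝ} (hx : x ∈ S) : chk S m x < nch S.card m := by
  have := rk_lt_card S hx
  unfold chk nch
  exact Nat.lt_succ_of_le (Nat.div_le_div_right (by omega))

lemma chk_fiber (S : Finset ℝ) (m : ℕ) (hm : 0 < m) (j : ℕ) :
    (S.filter (fun x => chk S m x = j)).card ≤ m := by
  have h : (S.filter (fun x => chk S m x = j)).card ≤ (Finset.Ico (j * m) (j * m + m)).card := by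
    apply card_le_card_of_injOn (rk S)
    · intro x hx
      have hx := mem_filter.1 (mem_coe.1 hx)
      unfold chk at hx
      simp only [coe_Ico, Set.mem_Ico]
      have h1 := Nat.div_add_mod (rk S x) m
      have h2 := Nat.mod_lt (rk S x) hm
      rw [hx.2, mul_comm] at h1
      omega
    · intro x hx y hy hxy
      have hx := mem_filter.1 (mem_coe.1 hx)
      have hy := mem_filter.1 (mem_coe.1 hy)
      rcases lt_trichotomy x y with h | h | h
      · have := rk_lt S hx.1 h; omega
      · exact h
      · have := rk_lt S hy.1 h; omega
  simpa using h

/-- cell of the grid containing a point -/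
noncomputable def cell (S : Finset ℝ) (m : ℕ) (p : ℝ × ℝ) : ℕ × ℕ := (chk S m p.1, chk S m p.2)

def MonoChain (Γ : Finset (ℝ × ℝ)) : Prop :=
  (∀ p ∈ Γ, ∀ q ∈ Γ, p.1 ≤ q.1 → p.2 ≤ q.2) ∨ (∀ p ∈ Γ, ∀ q ∈ Γ, p.1 ≤ q.1 → q.2 ≤ p.2)

lemma chain_cells (S : Finset ℝ) (m : ℕ) (Γ : Finset (ℝ × ℝ)) (hΓ : Γ ⊆ S ×ˢ S)
    (hc : MonoChain Γ) : (Γ.image (cell S m)).card ≤ 2 * nch S.card m := by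
  set K := nch S.card m with hK
  have hb : ∀ p ∈ Γ, chk S m p.1 < K ∧ chk S m p.2 < K := fun p hp => by
    have := mem_product.1 (hΓ hp)
    exact ⟨chk_lt S m this.1, chk_lt S m this.2⟩
  rcases hc with hc | hc
  · have : (Γ.image (cell S m)).card ≤ (range (2 * K)).card := by
      apply card_le_card_of_injOn (fun c : ℕ × ℕ => c.1 + c.2)
      · intro c hc
        simp only [coe_image, Set.mem_image, mem_coe] at hc
        obtain ⟨p, hp, rfl⟩ := hc
        have := hb p hp
        simp only [cell, coe_range, Set.mem_Iio]
        omega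
      · intro c hc1 d hd1 hcd
        simp only [coe_image, Set.mem_image, mem_coe] at hc1 hd1
        obtain ⟨p, hp, rfl⟩ := hc1
        obtain ⟨q, hq, rfl⟩ := hd1
        simp only [cell] at hcd ⊢
        rcases le_total p.1 q.1 with h | h
        · have h1 := chk_mono S m h
          have h2 := chk_mono S m (hc p hp q hq h)
          ext <;> simp <;> omega
        · have h1 := chk_mono S m h
          have h2 := chk_mono S m (hc q hq p hp h)
          ext <;> simp <;> omega
    simpa using this
  · have : (Γ.image (cell S m)).card ≤ (range (2 * K)).card := by
      apply card_le_card_of_injOn (fun c : ℕ × ℕ => c.1 + (K - 1 - c.2))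
      · intro c hc
        simp only [coe_image, Set.mem_image, mem_coe] at hc
        obtain ⟨p, hp, rfl⟩ := hc
        have := hb p hp
        simp only [cell, coe_range, Set.mem_Iio]
        omega
      · intro c hc1 d hd1 hcd
        simp only [coe_image, Set.mem_image, mem_coe] at hc1 hd1
        obtain ⟨p, hp, rfl⟩ := hc1
        obtain ⟨q, hq, rfl⟩ := hd1
        have hp' := hb p hp
        have hq' := hb q hq
        simp only [cell] at hcd ⊢
        rcases le_total p.1 q.1 with h | h
        · have h1 := chk_mono S m h
          have h2 := chk_mono S m (hc p hp q hq h)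
          ext <;> simp <;> omega
        · have h1 := chk_mono S m h
          have h2 := chk_mono S m (hc q hq p hp h)
          ext <;> simp <;> omega
    simpa using this

/-- `d`-subsets of `Γ` inside one cell -/
noncomputable def loc (S : Finset ℝ) (m d : ℕ) (Γ : Finset (ℝ × ℝ)) : Finset (Finset (ℝ × ℝ)) :=
  (Γ.image (cell S m)).biUnion fun c => (Γ.filter fun p => cell S m p = c).powersetCard d

lemma loc_disj (S : Finset ℝ) (m d : ℕ) (hd : 0 < d) (Γ : Finset (ℝ × ℝ)) :
    (loc S m d Γ).card =
      ∑ c ∈ Γ.image (cell S m), ((Γ.filter fun p => cell S m p = c).card).choose d := by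
  unfold loc
  rw [card_biUnion]
  · simp only [card_powersetCard]
  · intro c _ c' _ hcc
    refine Finset.disjoint_left.2 ?_
    intro A hA hA'
    rw [mem_powersetCard] at hA hA'
    have : A.Nonempty := by rw [← card_pos]; omega
    obtain ⟨p, hp⟩ := this
    have h1 := hA.1 hp
    have h2 := hA'.1 hp
    simp only [mem_filter] at h1 h2
    exact hcc (h1.2.symm.trans h2.2)

lemma loc_sub (S : Finset ℝ) (m d : ℕ) {Γ G : Finset (ℝ × ℝ)} (h : Γ ⊆ G) {A : Finset (ℝ × ℝ)}
    (hA : A ∈ loc S m d Γ) : A ∈ loc S m d G ∧ A ⊆ Γ ∧ A.card = d := by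
  unfold loc at hA ⊢
  simp only [mem_biUnion, mem_powersetCard] at hA ⊢
  obtain ⟨c, hc, hA, hd⟩ := hA
  refine ⟨⟨c, image_subset_image h hc, fun p hp => ?_, hd⟩, fun p hp => ?_, hd⟩
  · have := mem_filter.1 (hA hp)
    exact mem_filter.2 ⟨h this.1, this.2⟩
  · exact (mem_filter.1 (hA hp)).1

lemma le_add_choose (d : ℕ) (hd : 0 < d) (n : ℕ) : n ≤ (d - 1) + n.choose d := by
  induction n with
  | zero => omega
  | succ n ih =>
    by_cases h : n + 1 ≤ d - 1
    · omega
    · obtain ⟨e, rfl⟩ : ∃ e, d = e + 1 := ⟨d - 1, by omega⟩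
      rw [Nat.choose_succ_succ]
      have := Nat.choose_pos (n := n) (k := e) (by omega)
      simp only [Nat.succ_eq_add_one, Nat.add_sub_cancel] at *
      omega

lemma card_le_loc (S : Finset ℝ) (m d : ℕ) (hd : 0 < d) (Γ : Finset (ℝ × ℝ)) :
    Γ.card ≤ (d - 1) * (Γ.image (cell S m)).card + (loc S m d Γ).card := by
  rw [loc_disj S m d hd, card_eq_sum_card_image (cell S m) Γ]
  calc _ ≤ ∑ c ∈ Γ.image (cell S m),
        ((d - 1) + ((Γ.filter fun p => cell S m p = c).card).choose d) :=
        sum_le_sum fun c _ => le_add_choose d hd _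
    _ = _ := by rw [sum_add_distrib, sum_const, smul_eq_mul, mul_comm]

lemma loc_card (S : Finset ℝ) (m d : ℕ) (hm : 0 < m) :
    (loc S m (d + 1) (S ×ˢ S)).card ≤ S.card ^ 2 * (m ^ 2) ^ d := by
  rw [loc_disj S m _ (Nat.succ_pos d)]
  have hf : ∀ c, ((S ×ˢ S).filter fun p => cell S m p = c).card ≤ m ^ 2 := by
    intro c
    calc _ ≤ ((S.filter (fun x => chk S m x = c.1)) ×ˢ
          (S.filter (fun x => chk S m x = c.2))).card := by
          apply card_le_card
          intro p hp
          simp only [mem_filter, mem_product] at hp ⊢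
          rw [← hp.2]
          exact ⟨⟨hp.1.1, rfl⟩, hp.1.2, rfl⟩
      _ ≤ m * m := by
          rw [card_product]
          exact Nat.mul_le_mul (chk_fiber S m hm _) (chk_fiber S m hm _)
      _ = m ^ 2 := (sq m).symm
  calc _ ≤ ∑ c ∈ (S ×ˢ S).image (cell S m),
        ((S ×ˢ S).filter fun p => cell S m p = c).card * (m ^ 2) ^ d := by
        apply sum_le_sum
        intro c _
        refine (Nat.choose_le_pow _ _).trans ?_
        rw [pow_succ, mul_comm]
        exact Nat.mul_le_mul_left _ (Nat.pow_le_pow_left (hf c) d)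
    _ = _ := by
        rw [← sum_mul, ← card_eq_sum_card_image, card_product, sq S.card]

/-- points of the grid on the line with parameters `b = (β, δ, ε)` -/
noncomputable def lin (T : Finset ℝ) (ζ : ℝ) (b : ℝ × ℝ × ℝ) : Finset (ℝ × ℝ) :=
  (T ×ˢ T).filter fun p => p.1 * b.1 - p.2 * b.2.1 + b.2.2 * ζ = 0

lemma mem_lin {T : Finset ℝ} {ζ : ℝ} {b : ℝ × ℝ × ℝ} {p : ℝ × ℝ} :
    p ∈ lin T ζ b ↔ (p.1 ∈ T ∧ p.2 ∈ T) ∧ p.1 * b.1 - p.2 * b.2.1 + b.2.2 * ζ = 0 := by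
  unfold lin
  rw [mem_filter, mem_product]

lemma lin_chain (T : Finset ℝ) (ζ : ℝ) (b : ℝ × ℝ × ℝ) (h2 : b.2.1 ≠ 0) :
    MonoChain (lin T ζ b) := by
  have key : ∀ p ∈ lin T ζ b, ∀ q ∈ lin T ζ b, q.2 - p.2 = (b.1 / b.2.1) * (q.1 - p.1) := by
    intro p hp q hq
    have e1 := (mem_lin.1 hp).2
    have e2 := (mem_lin.1 hq).2
    field_simp
    linarith
  rcases le_total 0 (b.1 / b.2.1) with h | h
  · left
    intro p hp q hq hpq
    have := key p hp q hq
    nlinarith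
  · right
    intro p hp q hq hpq
    have := key p hp q hq
    nlinarith

lemma line_pair (T : Finset ℝ) (h0 : (0 : ℝ) ∉ T) (ζ : ℝ) (hζ : ζ ≠ 0) (A : Finset (ℝ × ℝ))
    (hA : A.card = 2) :
    ((T ×ˢ T ×ˢ T).filter fun b => A ⊆ lin T ζ b).card ≤ T.card := by
  obtain ⟨p, q, hpq, rfl⟩ := card_eq_two.1 hA
  apply card_le_card_of_injOn (fun b => b.2.2)
  · intro b hb
    have hb := mem_filter.1 (mem_coe.1 hb)
    simp only [mem_product] at hb
    exact hb.1.2.2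
  · rintro ⟨b1, b2, b3⟩ hb ⟨c1, c2, c3⟩ hc hbc
    have hb := mem_filter.1 (mem_coe.1 hb)
    have hc := mem_filter.1 (mem_coe.1 hc)
    simp only [mem_product] at hb hc hbc
    subst hbc
    obtain ⟨⟨hb1, hb2, hb3⟩, hb⟩ := hb
    obtain ⟨⟨hc1, hc2, _⟩, hc⟩ := hc
    have e1 := (mem_lin.1 (hb (by simp : p ∈ {p, q}))).2
    have e2 := (mem_lin.1 (hb (by simp : q ∈ {p, q}))).2
    have f1 := (mem_lin.1 (hc (by simp : p ∈ {p, q}))).2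
    have f2 := (mem_lin.1 (hc (by simp : q ∈ {p, q}))).2
    simp only at e1 e2 f1 f2
    have n1 : b1 ≠ 0 := fun h => h0 (h ▸ hb1)
    have n2 : b2 ≠ 0 := fun h => h0 (h ▸ hb2)
    have n3 : b3 ≠ 0 := fun h => h0 (h ▸ hb3)
    obtain ⟨x, y⟩ := p
    obtain ⟨x', y'⟩ := q
    simp only at e1 e2 f1 f2
    have hdet : x * y' - x' * y ≠ 0 := by
      intro hd
      have g1 : (y' - y) * (b3 * ζ) = 0 := by linear_combination y' * e1 - y * e2 - b1 * hd
      have g2 : (x' - x) * (b3 * ζ) = 0 := by linear_combination x' * e1 - x * e2 - b2 * hd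
      have g3 : b3 * ζ ≠ 0 := mul_ne_zero n3 hζ
      have g4 := (mul_eq_zero.1 g1).resolve_right g3
      have g5 := (mul_eq_zero.1 g2).resolve_right g3
      apply hpq
      ext <;> simp <;> linarith
    have r1 : (b1 - c1) * (x * y' - x' * y) = 0 := by
      linear_combination y' * (e1 - f1) - y * (e2 - f2)
    have r2 : (b2 - c2) * (x * y' - x' * y) = 0 := by
      linear_combination x' * (e1 - f1) - x * (e2 - f2)
    have r1 := (mul_eq_zero.1 r1).resolve_right hdet
    have r2 := (mul_eq_zero.1 r2).resolve_right hdet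
    rw [sub_eq_zero.1 r1, sub_eq_zero.1 r2]

lemma line_sum (T : Finset ℝ) (h0 : (0 : ℝ) ∉ T) (ζ : ℝ) (hζ : ζ ≠ 0) (m : ℕ) (hm : 0 < m) :
    ∑ b ∈ T ×ˢ T ×ˢ T, (lin T ζ b).card ≤
      T.card ^ 3 * (2 * nch T.card m) + T.card ^ 2 * m ^ 2 * T.card := by
  have hsub : ∀ b, lin T ζ b ⊆ T ×ˢ T := fun b => filter_subset _ _
  have h1 : ∀ b ∈ T ×ˢ T ×ˢ T, (lin T ζ b).card ≤
      2 * nch T.card m + ((loc T m 2 (T ×ˢ T)).filter fun A => A ⊆ lin T ζ b).card := by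
    intro b hb
    simp only [mem_product] at hb
    have n2 : b.2.1 ≠ 0 := fun h => h0 (h ▸ hb.2.1)
    have := card_le_loc T m 2 (by norm_num) (lin T ζ b)
    have h3 := chain_cells T m _ (hsub b) (lin_chain T ζ b n2)
    have h4 : (loc T m 2 (lin T ζ b)).card ≤
        ((loc T m 2 (T ×ˢ T)).filter fun A => A ⊆ lin T ζ b).card := by
      apply card_le_card
      intro A hA
      have := loc_sub T m 2 (hsub b) hA
      exact mem_filter.2 ⟨this.1, this.2.1⟩
    omega
  have h2 : ∑ b ∈ T ×ˢ T ×ˢ T, ((loc T m 2 (T ×ˢ T)).filter fun A => A ⊆ lin T ζ b).card ≤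
      (loc T m 2 (T ×ˢ T)).card * T.card := by
    simp only [card_filter]
    rw [sum_comm]
    simp only [← card_filter]
    rw [← smul_eq_mul]
    apply sum_le_card_nsmul
    intro A hA
    have hA2 := (loc_sub T m 2 (Subset.refl _) hA).2.2
    exact line_pair T h0 ζ hζ A hA2
  calc _ ≤ ∑ b ∈ T ×ˢ T ×ˢ T, (2 * nch T.card m +
        ((loc T m 2 (T ×ˢ T)).filter fun A => A ⊆ lin T ζ b).card) := sum_le_sum h1
    _ = T.card ^ 3 * (2 * nch T.card m) +
        ∑ b ∈ T ×ˢ T ×ˢ T, ((loc T m 2 (T ×ˢ T)).filter fun A => A ⊆ lin T ζ b).card := by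
        rw [sum_add_distrib, sum_const, card_product, card_product, smul_eq_mul]
        ring
    _ ≤ _ := by
        gcongr
        refine h2.trans ?_
        have := loc_card T m 1 hm
        rw [pow_one] at this
        exact Nat.mul_le_mul_right _ this

/-- solutions `((β, δ, ε), ζ, (α, γ))` of `α β - γ δ + ε ζ = 0` -/
noncomputable def sext (T : Finset ℝ) : Finset ((ℝ × ℝ × ℝ) × ℝ × ℝ × ℝ) :=
  ((T ×ˢ T ×ˢ T) ×ˢ (T ×ˢ (T ×ˢ T))).filter fun v => v.2.2 ∈ lin T v.2.1 v.1

lemma cube_root (t : ℕ) (ht : 0 < t) : ∃ m : ℕ, 0 < m ∧ t ≤ m ^ 3 ∧ m ^ 3 ≤ 8 * t := by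
  have hex : ∃ m : ℕ, t ≤ m ^ 3 := ⟨t, Nat.le_self_pow (by norm_num) t⟩
  refine ⟨Nat.find hex, ?_, Nat.find_spec hex, ?_⟩
  · rcases Nat.eq_zero_or_pos (Nat.find hex) with h | h
    · have := Nat.find_spec hex
      rw [h] at this
      simp at this
      omega
    · exact h
  · have hspec := Nat.find_spec hex
    have hmin : ∀ j, j < Nat.find hex → ¬ t ≤ j ^ 3 := fun j hj => Nat.find_min hex hj
    generalize Nat.find hex = m at *
    rcases m with _ | _ | j
    · simp
    · simp; omega
    · have := hmin (j + 1) (by omega)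
      have h2 : (j + 1 + 1) ^ 3 ≤ (2 * (j + 1)) ^ 3 := Nat.pow_le_pow_left (by omega) 3
      rw [mul_pow] at h2
      omega

lemma sext_card (T : Finset ℝ) (h0 : (0 : ℝ) ∉ T) : (sext T).card ^ 3 ≤ 8000 * T.card ^ 14 := by
  rcases Nat.eq_zero_or_pos T.card with ht | ht
  · rw [card_eq_zero] at ht
    subst ht
    simp [sext]
  obtain ⟨m, hm, h1, h2⟩ := cube_root T.card ht
  have hK : nch T.card m ≤ 2 * m ^ 2 := by
    unfold nch
    have : (T.card - 1) / m ≤ m ^ 2 := by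
      apply Nat.div_le_of_le_mul
      have : m * m ^ 2 = m ^ 3 := by ring
      omega
    have : 0 < m ^ 2 := by positivity
    omega
  have hX : (sext T).card ≤ T.card * (5 * m ^ 2 * T.card ^ 3) := by
    have : (sext T).card = ∑ ζ ∈ T, ∑ b ∈ T ×ˢ T ×ˢ T, (lin T ζ b).card := by
      unfold sext
      rw [card_filter, sum_product, sum_comm]
      rw [sum_product]
      refine sum_congr rfl fun ζ _ => ?_
      rw [sum_comm]
      refine sum_congr rfl fun b _ => ?_
      rw [← card_filter]
      congr 1
      ext p
      rw [mem_filter, mem_lin, mem_product]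
      tauto
    rw [this, ← smul_eq_mul]
    apply sum_le_card_nsmul
    intro ζ hζ
    refine (line_sum T h0 ζ (fun h => h0 (h ▸ hζ)) m hm).trans ?_
    calc _ ≤ T.card ^ 3 * (2 * (2 * m ^ 2)) + T.card ^ 2 * m ^ 2 * T.card := by gcongr
      _ = _ := by ring
  calc (sext T).card ^ 3 ≤ (T.card * (5 * m ^ 2 * T.card ^ 3)) ^ 3 := Nat.pow_le_pow_left hX 3
    _ = 125 * T.card ^ 12 * (m ^ 3) ^ 2 := by ring
    _ ≤ 125 * T.card ^ 12 * (8 * T.card) ^ 2 := by gcongr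
    _ = _ := by ring

/-- `Γ` is the part in `S × S` of the graph of a nondegenerate Möbius map. -/
def IsMob (S : Finset ℝ) (Γ : Finset (ℝ × ℝ)) : Prop :=
  ∃ A B C D : ℝ, A * D - B * C ≠ 0 ∧
    ∀ p, p ∈ Γ ↔ (p.1 ∈ S ∧ p.2 ∈ S) ∧ A * p.1 * p.2 + B * p.1 + C * p.2 + D = 0

lemma bil_ne {A B C D x y : ℝ} (hk : A * D - B * C ≠ 0)
    (h : A * x * y + B * x + C * y + D = 0) : A * x + C ≠ 0 := by
  intro h0
  apply hk
  have h1 : B * x + D = 0 := by linear_combination h - y * h0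
  by_cases hA : A = 0
  · subst hA
    have : C = 0 := by linarith
    subst this
    ring
  · linear_combination A * h1 - B * h0

lemma bil_sub {A B C D x y x' y' : ℝ}
    (h : A * x * y + B * x + C * y + D = 0) (h' : A * x' * y' + B * x' + C * y' + D = 0) :
    (y - y') * ((A * x + C) * (A * x' + C)) = (A * D - B * C) * (x - x') := by
  linear_combination (A * x' + C) * h - (A * x + C) * h'

/-- general position of three points -/
def Gen (p q r : ℝ × ℝ) : Prop :=
  p.1 ≠ q.1 ∧ p.1 ≠ r.1 ∧ q.1 ≠ r.1 ∧ p.2 ≠ q.2 ∧ p.2 ≠ r.2 ∧ q.2 ≠ r.2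

/-- graph of the Möbius map through three points -/
noncomputable def mob (S : Finset ℝ) (p q r : ℝ × ℝ) : Finset (ℝ × ℝ) :=
  (S ×ˢ S).filter fun z =>
    (p.1 - q.1) * (r.1 - z.1) * ((p.2 - r.2) * (q.2 - z.2)) =
      (p.2 - q.2) * (r.2 - z.2) * ((p.1 - r.1) * (q.1 - z.1))

lemma mem_mob {S : Finset ℝ} {p q r z : ℝ × ℝ} : z ∈ mob S p q r ↔ (z.1 ∈ S ∧ z.2 ∈ S) ∧
    (p.1 - q.1) * (r.1 - z.1) * ((p.2 - r.2) * (q.2 - z.2)) =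
      (p.2 - q.2) * (r.2 - z.2) * ((p.1 - r.1) * (q.1 - z.1)) := by
  unfold mob
  rw [mem_filter, mem_product]

lemma mob_isMob (S : Finset ℝ) {p q r : ℝ × ℝ} (h : Gen p q r) : IsMob S (mob S p q r) := by
  obtain ⟨a, a'⟩ := p
  obtain ⟨b, b'⟩ := q
  obtain ⟨c, c'⟩ := r
  obtain ⟨h1, h2, h3, h4, h5, h6⟩ := h
  simp only at h1 h2 h3 h4 h5 h6
  refine ⟨(a - b) * (a' - c') - (a' - b') * (a - c),
    -((a - b) * (a' - c')) * b' + (a' - b') * (a - c) * c',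
    -((a - b) * (a' - c')) * c + (a' - b') * (a - c) * b,
    (a - b) * (a' - c') * (c * b') - (a' - b') * (a - c) * (c' * b), ?_, ?_⟩
  · have : ((a - b) * (a' - c')) * ((a' - b') * (a - c)) * ((b - c) * (b' - c')) ≠ 0 := by
      refine mul_ne_zero (mul_ne_zero (mul_ne_zero ?_ ?_) (mul_ne_zero ?_ ?_)) (mul_ne_zero ?_ ?_)
        <;> rw [sub_ne_zero] <;> assumption
    intro h0
    apply this
    rw [← h0]
    ring
  · rintro ⟨x, y⟩
    rw [mem_mob]
    simp only
    refine and_congr_right fun _ => ?_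
    rw [← sub_eq_zero]
    constructor
    · intro h
      rw [← h]
      ring
    · intro h
      rw [← h]
      ring

lemma IsMob.inj {S : Finset ℝ} {Γ : Finset (ℝ × ℝ)} (h : IsMob S Γ) {p q : ℝ × ℝ} (hp : p ∈ Γ)
    (hq : q ∈ Γ) (hpq : p ≠ q) : p.1 ≠ q.1 ∧ p.2 ≠ q.2 := by
  obtain ⟨A, B, C, D, hk, hΓ⟩ := h
  have e1 := ((hΓ p).1 hp).2
  have e2 := ((hΓ q).1 hq).2
  have n1 := bil_ne hk e1
  have n2 := bil_ne hk e2
  have hs := bil_sub e1 e2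
  constructor
  · intro h
    rw [h, sub_self, mul_zero] at hs
    rw [← h] at n2
    have : p.2 - q.2 = 0 := (mul_eq_zero.1 hs).resolve_right (mul_ne_zero (h ▸ n1) (h ▸ n2))
    exact hpq (Prod.ext h (sub_eq_zero.1 this))
  · intro h
    rw [h, sub_self, zero_mul] at hs
    have : p.1 - q.1 = 0 := (mul_eq_zero.1 hs.symm).resolve_left hk
    exact hpq (Prod.ext (sub_eq_zero.1 this) h)

lemma IsMob.sub_mob {S : Finset ℝ} {Γ : Finset (ℝ × ℝ)} (h : IsMob S Γ) {p q r : ℝ × ℝ}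
    (hp : p ∈ Γ) (hq : q ∈ Γ) (hr : r ∈ Γ) : Γ ⊆ mob S p q r := by
  obtain ⟨A, B, C, D, hk, hΓ⟩ := h
  intro z hz
  have e1 := ((hΓ p).1 hp).2
  have e2 := ((hΓ q).1 hq).2
  have e3 := ((hΓ r).1 hr).2
  have e4 := ((hΓ z).1 hz).2
  refine mem_mob.2 ⟨((hΓ z).1 hz).1, ?_⟩
  have n1 := bil_ne hk e1
  have n2 := bil_ne hk e2
  have n3 := bil_ne hk e3
  have n4 := bil_ne hk e4
  have s12 := bil_sub e1 e2
  have s13 := bil_sub e1 e3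
  have s24 := bil_sub e2 e4
  have s34 := bil_sub e3 e4
  generalize A * p.1 + C = u1 at *
  generalize A * q.1 + C = u2 at *
  generalize A * r.1 + C = u3 at *
  generalize A * z.1 + C = u4 at *
  generalize A * D - B * C = κ at *
  have d12 : p.1 - q.1 = (p.2 - q.2) * (u1 * u2) / κ := by field_simp; linarith
  have d13 : p.1 - r.1 = (p.2 - r.2) * (u1 * u3) / κ := by field_simp; linarith
  have d24 : q.1 - z.1 = (q.2 - z.2) * (u2 * u4) / κ := by field_simp; linarith
  have d34 : r.1 - z.1 = (r.2 - z.2) * (u3 * u4) / κ := by field_simp; linarith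
  rw [d12, d13, d24, d34]
  ring

lemma mem_mob_self {S : Finset ℝ} {p q r : ℝ × ℝ} (hp : p ∈ S ×ˢ S) (hq : q ∈ S ×ˢ S)
    (hr : r ∈ S ×ˢ S) : p ∈ mob S p q r ∧ q ∈ mob S p q r ∧ r ∈ mob S p q r := by
  rw [mem_product] at hp hq hr
  refine ⟨mem_mob.2 ⟨hp, by ring⟩, mem_mob.2 ⟨hq, by ring⟩, mem_mob.2 ⟨hr, by ring⟩⟩

/-- the family of all Möbius graphs through three points of the grid -/
noncomputable def fam (S : Finset ℝ) : Finset (Finset (ℝ × ℝ)) :=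
  (((S ×ˢ S) ×ˢ (S ×ˢ S) ×ˢ (S ×ˢ S)).filter fun v => Gen v.1 v.2.1 v.2.2).image
    fun v => mob S v.1 v.2.1 v.2.2

lemma mem_fam {S : Finset ℝ} {Γ : Finset (ℝ × ℝ)} : Γ ∈ fam S ↔
    ∃ p q r, p ∈ S ×ˢ S ∧ q ∈ S ×ˢ S ∧ r ∈ S ×ˢ S ∧ Gen p q r ∧ Γ = mob S p q r := by
  unfold fam
  simp only [mem_image, mem_filter]
  constructor
  · rintro ⟨⟨p, q, r⟩, ⟨h1, h2⟩, h3⟩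
    have h1a := mem_product.1 h1
    have h1b := mem_product.1 h1a.2
    exact ⟨p, q, r, h1a.1, h1b.1, h1b.2, h2, h3.symm⟩
  · rintro ⟨p, q, r, hp, hq, hr, hg, rfl⟩
    refine ⟨⟨p, q, r⟩, ⟨?_, hg⟩, rfl⟩
    exact mem_product.2 ⟨hp, mem_product.2 ⟨hq, hr⟩⟩

lemma fam_isMob {S : Finset ℝ} {Γ : Finset (ℝ × ℝ)} (h : Γ ∈ fam S) : IsMob S Γ := by
  obtain ⟨p, q, r, hp, hq, hr, hg, rfl⟩ := mem_fam.1 h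
  exact mob_isMob S hg

lemma fam_eq_mob {S : Finset ℝ} {Γ : Finset (ℝ × ℝ)} (h : Γ ∈ fam S) {p q r : ℝ × ℝ}
    (hp : p ∈ Γ) (hq : q ∈ Γ) (hr : r ∈ Γ) (h1 : p ≠ q) (h2 : p ≠ r) (h3 : q ≠ r) :
    Γ = mob S p q r := by
  have hM := fam_isMob h
  have hs := hM.sub_mob hp hq hr
  refine Subset.antisymm hs ?_
  obtain ⟨a, b, c, ha, hb, hc, hg, rfl⟩ := mem_fam.1 h
  have hself := mem_mob_self ha hb hc
  have hg' : Gen p q r := ⟨(hM.inj hp hq h1).1, (hM.inj hp hr h2).1, (hM.inj hq hr h3).1,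
    (hM.inj hp hq h1).2, (hM.inj hp hr h2).2, (hM.inj hq hr h3).2⟩
  exact (mob_isMob S hg').sub_mob (hs hself.1) (hs hself.2.1) (hs hself.2.2)

lemma fam_unique {S : Finset ℝ} {Γ Γ' A : Finset (ℝ × ℝ)} (h : Γ ∈ fam S) (h' : Γ' ∈ fam S)
    (hA : A.card = 3) (h1 : A ⊆ Γ) (h2 : A ⊆ Γ') : Γ = Γ' := by
  obtain ⟨p, q, r, hpq, hpr, hqr, rfl⟩ := card_eq_three.1 hA
  rw [fam_eq_mob h (h1 (by simp)) (h1 (by simp)) (h1 (by simp)) hpq hpr hqr,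
    fam_eq_mob h' (h2 (by simp)) (h2 (by simp)) (h2 (by simp)) hpq hpr hqr]

lemma IsMob.cells {S : Finset ℝ} {Γ : Finset (ℝ × ℝ)} (h : IsMob S Γ) (m : ℕ) :
    (Γ.image (cell S m)).card ≤ 4 * nch S.card m := by
  obtain ⟨A, B, C, D, hk, hΓ⟩ := h
  have hsub : Γ ⊆ S ×ˢ S := fun p hp => mem_product.2 ((hΓ p).1 hp).1
  set Γ1 := Γ.filter fun p => 0 < A * p.1 + C with hΓ1
  set Γ2 := Γ.filter fun p => A * p.1 + C < 0 with hΓ2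
  have hprod : ∀ Γ' : Finset (ℝ × ℝ), Γ' ⊆ Γ →
      (∀ p ∈ Γ', ∀ q ∈ Γ', 0 < (A * p.1 + C) * (A * q.1 + C)) → MonoChain Γ' := by
    intro Γ' hs hpos
    have key : ∀ p ∈ Γ', ∀ q ∈ Γ', q.2 - p.2 =
        (A * D - B * C) * ((q.1 - p.1) / ((A * q.1 + C) * (A * p.1 + C))) := by
      intro p hp q hq
      have hs := bil_sub ((hΓ q).1 (hs hq)).2 ((hΓ p).1 (hs hp)).2
      have := hpos q hq p hp
      rw [← mul_div_assoc, eq_div_iff this.ne', hs]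
    rcases lt_or_gt_of_ne hk with hk | hk
    · right
      intro p hp q hq hpq
      have h1 := key p hp q hq
      have h2 : 0 ≤ (q.1 - p.1) / ((A * q.1 + C) * (A * p.1 + C)) :=
        div_nonneg (by linarith) (hpos q hq p hp).le
      nlinarith
    · left
      intro p hp q hq hpq
      have h1 := key p hp q hq
      have h2 : 0 ≤ (q.1 - p.1) / ((A * q.1 + C) * (A * p.1 + C)) :=
        div_nonneg (by linarith) (hpos q hq p hp).le
      nlinarith
  have c1 : MonoChain Γ1 := hprod _ (filter_subset _ _) fun p hp q hq =>
    mul_pos (mem_filter.1 hp).2 (mem_filter.1 hq).2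
  have c2 : MonoChain Γ2 := hprod _ (filter_subset _ _) fun p hp q hq =>
    mul_pos_of_neg_of_neg (mem_filter.1 hp).2 (mem_filter.1 hq).2
  have hU : Γ.image (cell S m) ⊆ Γ1.image (cell S m) ∪ Γ2.image (cell S m) := by
    rw [← image_union]
    apply image_subset_image
    intro p hp
    rw [mem_union, mem_filter, mem_filter]
    rcases lt_or_gt_of_ne (bil_ne hk ((hΓ p).1 hp).2) with h | h
    · exact Or.inr ⟨hp, h⟩
    · exact Or.inl ⟨hp, h⟩
  have := card_le_card hU
  have h3 := card_union_le (Γ1.image (cell S m)) (Γ2.image (cell S m))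
  have h4 := chain_cells S m Γ1 ((filter_subset _ _).trans hsub) c1
  have h5 := chain_cells S m Γ2 ((filter_subset _ _).trans hsub) c2
  omega

/-- chunk size giving at most `s` chunks -/
def csz (k s : ℕ) : ℕ := (k + s - 1) / s

lemma csz_spec (k s : ℕ) (hk : 0 < k) (hs : 0 < s) (hsk : s ≤ k) :
    0 < csz k s ∧ nch k (csz k s) ≤ s ∧ csz k s * s ≤ 2 * k := by
  have h1 : csz k s * s ≤ k + s - 1 := Nat.div_mul_le_self _ _
  have h2 : k ≤ s * csz k s := by
    unfold csz
    have e1 := Nat.div_add_mod (k + s - 1) s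
    have e2 := Nat.mod_lt (k + s - 1) hs
    omega
  have h3 : 0 < csz k s := by
    rcases Nat.eq_zero_or_pos (csz k s) with h | h
    · rw [h] at h2; omega
    · exact h
  refine ⟨h3, ?_, by omega⟩
  unfold nch
  have : (k - 1) / csz k s < s := by
    rw [Nat.div_lt_iff_lt_mul h3]
    omega
  omega

lemma sum_cubes (n : ℕ) : n ^ 4 ≤ 4 * ∑ s ∈ Finset.Icc 1 n, s ^ 3 := by
  induction n with
  | zero => simp
  | succ n ih =>
    rw [sum_Icc_succ_top (by omega)]
    have h : (n + 1) ^ 4 + (6 * n ^ 2 + 8 * n + 3) = n ^ 4 + 4 * (n + 1) ^ 3 := by ring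
    omega

lemma sum_inv_sq (n : ℕ) (hn : 0 < n) :
    ∑ s ∈ Finset.Icc 1 n, (1 : ℝ) / (s : ℝ) ^ 2 ≤ 2 - 1 / (n : ℝ) := by
  induction n, hn using Nat.le_induction with
  | base => simp; norm_num
  | succ n hn ih =>
    rw [sum_Icc_succ_top (by omega)]
    have hn' : (0 : ℝ) < n := by exact_mod_cast hn
    have : (1 : ℝ) / ((n + 1 : ℕ) : ℝ) ^ 2 ≤ 1 / n - 1 / ((n + 1 : ℕ) : ℝ) := by
      push_cast
      rw [div_sub_div _ _ hn'.ne' (by positivity), div_le_div_iff₀ (by positivity) (by positivity)]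
      nlinarith
    linarith

lemma IsMob.pow_four {S : Finset ℝ} {Γ : Finset (ℝ × ℝ)} (h : IsMob S Γ) :
    Γ.card ^ 4 ≤ 16 ^ 4 + 32 ^ 4 *
      ∑ s ∈ Finset.Icc 1 S.card, s ^ 2 * (loc S (csz S.card s) 3 Γ).card := by
  have hcard : Γ.card ≤ S.card := by
    apply card_le_card_of_injOn Prod.fst
    · intro p hp
      obtain ⟨A, B, C, D, hk, hΓ⟩ := h
      exact ((hΓ p).1 hp).1.1
    · intro p hp q hq hpq
      by_contra hne
      exact (h.inj hp hq hne).1 hpq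
  by_cases hn : Γ.card < 16
  · exact (Nat.pow_le_pow_left hn.le 4).trans (Nat.le_add_right _ _)
  · push Not at hn
    have hk : 0 < S.card := by omega
    set n := Γ.card with hndef
    have hτ : ∀ s ∈ Finset.Icc 1 (n / 16), 8 * s ≤ (loc S (csz S.card s) 3 Γ).card := by
      intro s hs
      rw [mem_Icc] at hs
      have hs2 : 16 * s ≤ n := by omega
      obtain ⟨c1, c2, c3⟩ := csz_spec S.card s hk hs.1 (by omega)
      have h1 := card_le_loc S (csz S.card s) 3 (by norm_num) Γ
      have h2 := h.cells (csz S.card s)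
      omega
    have h1 : 8 * ∑ s ∈ Finset.Icc 1 (n / 16), s ^ 3 ≤
        ∑ s ∈ Finset.Icc 1 S.card, s ^ 2 * (loc S (csz S.card s) 3 Γ).card := by
      calc _ = ∑ s ∈ Finset.Icc 1 (n / 16), s ^ 2 * (8 * s) := by
            rw [mul_sum]
            exact sum_congr rfl fun s _ => by ring
        _ ≤ ∑ s ∈ Finset.Icc 1 (n / 16), s ^ 2 * (loc S (csz S.card s) 3 Γ).card :=
            sum_le_sum fun s hs => Nat.mul_le_mul_left _ (hτ s hs)
        _ ≤ _ := sum_le_sum_of_subset (Icc_subset_Icc_right (by omega))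
    have h2 := sum_cubes (n / 16)
    have h3 : n ^ 4 ≤ (32 * (n / 16)) ^ 4 := Nat.pow_le_pow_left (by omega) 4
    rw [mul_pow] at h3
    omega

lemma fam_sum (S : Finset ℝ) :
    ∑ Γ ∈ fam S, Γ.card ^ 4 ≤ 2 ^ 26 * S.card ^ 6 := by
  rcases Nat.eq_zero_or_pos S.card with hk | hk
  · rw [card_eq_zero] at hk
    subst hk
    simp [fam]
  have hfc : (fam S).card ≤ S.card ^ 6 := by
    unfold fam
    refine card_image_le.trans ((card_filter_le _ _).trans ?_)
    simp only [card_product]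
    exact le_of_eq (by ring)
  have hτ : ∀ m, ∑ Γ ∈ fam S, (loc S m 3 Γ).card ≤ (loc S m 3 (S ×ˢ S)).card := by
    intro m
    rw [← card_biUnion]
    · apply card_le_card
      intro A hA
      rw [mem_biUnion] at hA
      obtain ⟨Γ, hΓ, hA⟩ := hA
      obtain ⟨_, _, _, _, _, hh⟩ := fam_isMob hΓ
      exact (loc_sub S m 3 (fun p hp => mem_product.2 ((hh p).1 hp).1) hA).1
    · intro Γ hΓ Γ' hΓ' hne
      refine Finset.disjoint_left.2 fun A hA hA' => hne ?_
      have h1 := loc_sub S m 3 (Subset.refl _) hA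
      have h2 := loc_sub S m 3 (Subset.refl _) hA'
      exact fam_unique hΓ hΓ' h1.2.2 h1.2.1 h2.2.1
  have h1 : ∑ Γ ∈ fam S, Γ.card ^ 4 ≤ S.card ^ 6 * 16 ^ 4 +
      32 ^ 4 * ∑ s ∈ Finset.Icc 1 S.card, s ^ 2 * (S.card ^ 2 * ((csz S.card s) ^ 2) ^ 2) := by
    calc _ ≤ ∑ Γ ∈ fam S, (16 ^ 4 + 32 ^ 4 *
            ∑ s ∈ Finset.Icc 1 S.card, s ^ 2 * (loc S (csz S.card s) 3 Γ).card) :=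
          sum_le_sum fun Γ hΓ => (fam_isMob hΓ).pow_four
      _ = (fam S).card * 16 ^ 4 + 32 ^ 4 * ∑ s ∈ Finset.Icc 1 S.card,
            s ^ 2 * ∑ Γ ∈ fam S, (loc S (csz S.card s) 3 Γ).card := by
          rw [sum_add_distrib, sum_const, smul_eq_mul, ← mul_sum, sum_comm]
          congr 2
          exact sum_congr rfl fun s _ => (mul_sum _ _ _).symm
      _ ≤ _ := by
          gcongr with s hs
          rw [mem_Icc] at hs
          exact (hτ _).trans (loc_card S _ 2 (csz_spec S.card s hk hs.1 hs.2).1)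
  have h2 : (∑ s ∈ Finset.Icc 1 S.card,
      ((s ^ 2 * (S.card ^ 2 * ((csz S.card s) ^ 2) ^ 2) : ℕ) : ℝ)) ≤ 32 * (S.card : ℝ) ^ 6 := by
    have hk' : (0 : ℝ) < S.card := by exact_mod_cast hk
    calc _ ≤ ∑ s ∈ Finset.Icc 1 S.card, 16 * (S.card : ℝ) ^ 6 * (1 / (s : ℝ) ^ 2) := by
          apply sum_le_sum
          intro s hs
          rw [mem_Icc] at hs
          have hs0 : (0 : ℝ) < s := by exact_mod_cast hs.1
          have hc : ((csz S.card s : ℕ) : ℝ) * s ≤ 2 * S.card := by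
            exact_mod_cast (csz_spec S.card s hk hs.1 hs.2).2.2
          rw [mul_one_div, le_div_iff₀ (by positivity)]
          push_cast
          calc _ = (S.card : ℝ) ^ 2 * (((csz S.card s : ℕ) : ℝ) * s) ^ 4 := by ring
            _ ≤ (S.card : ℝ) ^ 2 * (2 * S.card) ^ 4 := by gcongr
            _ = _ := by ring
      _ = 16 * (S.card : ℝ) ^ 6 * ∑ s ∈ Finset.Icc 1 S.card, (1 / (s : ℝ) ^ 2) := by
          rw [mul_sum]
      _ ≤ 16 * (S.card : ℝ) ^ 6 * 2 := by
          gcongr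
          have := sum_inv_sq S.card hk
          have h3 : (0 : ℝ) < 1 / S.card := by positivity
          linarith
      _ = _ := by ring
  have h3 : ∑ s ∈ Finset.Icc 1 S.card, s ^ 2 * (S.card ^ 2 * ((csz S.card s) ^ 2) ^ 2)
      ≤ 32 * S.card ^ 6 := by
    rw [← Nat.cast_sum] at h2
    exact_mod_cast h2
  calc _ ≤ _ := h1
    _ ≤ S.card ^ 6 * 16 ^ 4 + 32 ^ 4 * (32 * S.card ^ 6) := by gcongr
    _ ≤ _ := by nlinarith [Nat.zero_le (S.card ^ 6)]

/-- the cross ratio -/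
noncomputable def crr (q : ℝ × ℝ × ℝ × ℝ) : ℝ :=
  (q.1 - q.2.1) * (q.2.2.1 - q.2.2.2) / ((q.1 - q.2.2.1) * (q.2.1 - q.2.2.2))

/-- pairwise distinct entries -/
def Dist4 (q : ℝ × ℝ × ℝ × ℝ) : Prop :=
  q.1 ≠ q.2.1 ∧ q.1 ≠ q.2.2.1 ∧ q.1 ≠ q.2.2.2 ∧ q.2.1 ≠ q.2.2.1 ∧ q.2.1 ≠ q.2.2.2 ∧
    q.2.2.1 ≠ q.2.2.2

lemma energy (S : Finset ℝ) (Q : Finset (ℝ × ℝ × ℝ × ℝ)) (hQ : ∀ q ∈ Q, Dist4 q)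
    (hS : ∀ q ∈ Q, q.1 ∈ S ∧ q.2.1 ∈ S ∧ q.2.2.1 ∈ S ∧ q.2.2.2 ∈ S) :
    ((Q ×ˢ Q).filter fun z => crr z.1 = crr z.2).card ≤ 2 ^ 26 * S.card ^ 6 := by
  refine le_trans ?_ (fam_sum S)
  have : ∑ Γ ∈ fam S, Γ.card ^ 4 = ((fam S).sigma fun Γ => Γ ×ˢ Γ ×ˢ Γ ×ˢ Γ).card := by
    rw [card_sigma]
    refine sum_congr rfl fun Γ _ => ?_
    simp only [card_product]
    ring
  rw [this]
  apply card_le_card_of_injOn (fun z : (ℝ × ℝ × ℝ × ℝ) × (ℝ × ℝ × ℝ × ℝ) =>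
    (⟨mob S (z.1.1, z.2.1) (z.1.2.1, z.2.2.1) (z.1.2.2.1, z.2.2.2.1),
      ((z.1.1, z.2.1), (z.1.2.1, z.2.2.1), (z.1.2.2.1, z.2.2.2.1), (z.1.2.2.2, z.2.2.2.2))⟩ :
      Σ _ : Finset (ℝ × ℝ), (ℝ × ℝ) × (ℝ × ℝ) × (ℝ × ℝ) × (ℝ × ℝ)))
  · rintro ⟨⟨a, b, c, d⟩, ⟨a', b', c', d'⟩⟩ hz
    have hz := mem_filter.1 (mem_coe.1 hz)
    obtain ⟨hz, hcr⟩ := hz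
    have hz := mem_product.1 hz
    obtain ⟨n1, n2, n3, n4, n5, n6⟩ := hQ _ hz.1
    obtain ⟨m1, m2, m3, m4, m5, m6⟩ := hQ _ hz.2
    obtain ⟨i1, i2, i3, i4⟩ := hS _ hz.1
    obtain ⟨j1, j2, j3, j4⟩ := hS _ hz.2
    simp only at *
    rw [mem_coe, mem_sigma]
    have hself := mem_mob_self (S := S) (p := (a, a')) (q := (b, b')) (r := (c, c'))
      (mem_product.2 ⟨i1, j1⟩) (mem_product.2 ⟨i2, j2⟩) (mem_product.2 ⟨i3, j3⟩)
    refine ⟨mem_fam.2 ⟨_, _, _, mem_product.2 ⟨i1, j1⟩, mem_product.2 ⟨i2, j2⟩,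
      mem_product.2 ⟨i3, j3⟩, ⟨n1, n2, n4, m1, m2, m4⟩, rfl⟩, ?_⟩
    refine mem_product.2 ⟨hself.1, mem_product.2 ⟨hself.2.1, mem_product.2 ⟨hself.2.2, ?_⟩⟩⟩
    refine mem_mob.2 ⟨⟨i4, j4⟩, ?_⟩
    simp only [crr] at hcr ⊢
    rw [div_eq_div_iff (mul_ne_zero (sub_ne_zero.2 n2) (sub_ne_zero.2 n5))
      (mul_ne_zero (sub_ne_zero.2 m2) (sub_ne_zero.2 m5))] at hcr
    exact hcr
  · rintro ⟨⟨a, b, c, d⟩, ⟨a', b', c', d'⟩⟩ _ ⟨⟨e, f, g, h⟩, ⟨e', f', g', h'⟩⟩ _ heq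
    simp only [Sigma.mk.injEq, heq_eq_eq, Prod.mk.injEq] at heq
    obtain ⟨_, ⟨h1, h2⟩, ⟨h3, h4⟩, ⟨h5, h6⟩, h7, h8⟩ := heq
    subst_vars
    rfl

lemma cs_image {α : Type*} (Q : Finset α) (f : α → ℝ) :
    Q.card ^ 2 ≤ (Q.image f).card * ((Q ×ˢ Q).filter fun z => f z.1 = f z.2).card := by
  have h1 := card_eq_sum_card_image f Q
  have h2 : ((Q ×ˢ Q).filter fun z => f z.1 = f z.2).card =
      ∑ r ∈ Q.image f, ((Q.filter fun x => f x = r).card) ^ 2 := by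
    rw [card_eq_sum_card_fiberwise (f := fun z : α × α => f z.1) (t := Q.image f)]
    · refine sum_congr rfl fun r _ => ?_
      rw [sq, ← card_product]
      congr 1
      ext ⟨x, y⟩
      simp only [mem_filter, mem_product]
      constructor
      · rintro ⟨⟨⟨h1, h2⟩, h3⟩, h4⟩
        exact ⟨⟨h1, h4⟩, h2, h3 ▸ h4⟩
      · rintro ⟨⟨h1, h2⟩, h3, h4⟩
        exact ⟨⟨⟨h1, h3⟩, h2.trans h4.symm⟩, h2⟩
    · intro z hz
      have := mem_product.1 (mem_filter.1 (mem_coe.1 hz)).1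
      exact mem_coe.2 (mem_image_of_mem f this.1)
  rw [h2, h1]
  exact sq_sum_le_card_mul_sum_sq

lemma split4 (S : Finset ℝ) (n : ℕ) (h : 4 * n ≤ S.card) :
    ∃ A B C D : Finset ℝ, A ⊆ S ∧ B ⊆ S ∧ C ⊆ S ∧ D ⊆ S ∧ A.card = n ∧ B.card = n ∧
      C.card = n ∧ D.card = n ∧ Disjoint A B ∧ Disjoint A C ∧ Disjoint A D ∧ Disjoint B C ∧
      Disjoint B D ∧ Disjoint C D := by
  obtain ⟨A, hA, hAc⟩ := exists_subset_card_eq (s := S) (n := n) (by omega)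
  have h1 := card_sdiff_add_card_eq_card hA
  obtain ⟨B, hB, hBc⟩ := exists_subset_card_eq (s := S \ A) (n := n) (by omega)
  have h2 := card_sdiff_add_card_eq_card hB
  obtain ⟨C, hC, hCc⟩ := exists_subset_card_eq (s := (S \ A) \ B) (n := n) (by omega)
  have h3 := card_sdiff_add_card_eq_card hC
  obtain ⟨D, hD, hDc⟩ := exists_subset_card_eq (s := ((S \ A) \ B) \ C) (n := n) (by omega)
  have b1 : ∀ x ∈ B, x ∈ S ∧ x ∉ A := fun x hx => mem_sdiff.1 (hB hx)
  have c1 : ∀ x ∈ C, (x ∈ S ∧ x ∉ A) ∧ x ∉ B := fun x hx => by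
    have := hC hx
    simpa only [mem_sdiff] using this
  have d1 : ∀ x ∈ D, ((x ∈ S ∧ x ∉ A) ∧ x ∉ B) ∧ x ∉ C := fun x hx => by
    have := hD hx
    simpa only [mem_sdiff] using this
  refine ⟨A, B, C, D, hA, fun x hx => (b1 x hx).1, fun x hx => (c1 x hx).1.1,
    fun x hx => (d1 x hx).1.1.1, hAc, hBc, hCc, hDc, ?_, ?_, ?_, ?_, ?_, ?_⟩
  · exact Finset.disjoint_right.2 fun x hx => (b1 x hx).2
  · exact Finset.disjoint_right.2 fun x hx => (c1 x hx).1.2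
  · exact Finset.disjoint_right.2 fun x hx => (d1 x hx).1.1.2
  · exact Finset.disjoint_right.2 fun x hx => (c1 x hx).2
  · exact Finset.disjoint_right.2 fun x hx => (d1 x hx).1.2
  · exact Finset.disjoint_right.2 fun x hx => (d1 x hx).2

lemma cross_ratios (S : Finset ℝ) (hS : 4 ≤ S.card) :
    ∃ Q : Finset (ℝ × ℝ × ℝ × ℝ), (∀ q ∈ Q, Dist4 q) ∧
      (∀ q ∈ Q, q.1 ∈ S ∧ q.2.1 ∈ S ∧ q.2.2.1 ∈ S ∧ q.2.2.2 ∈ S) ∧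
      S.card ^ 2 ≤ 2 ^ 50 * (Q.image crr).card := by
  obtain ⟨A, B, C, D, hA, hB, hC, hD, a, b, c, d, d1, d2, d3, d4, d5, d6⟩ :=
    split4 S (S.card / 4) (by omega)
  have hmem : ∀ q ∈ A ×ˢ B ×ˢ C ×ˢ D, q.1 ∈ A ∧ q.2.1 ∈ B ∧ q.2.2.1 ∈ C ∧ q.2.2.2 ∈ D := by
    intro q hq
    simpa only [mem_product] using hq
  have hdist : ∀ q ∈ A ×ˢ B ×ˢ C ×ˢ D, Dist4 q := by
    intro q hq
    obtain ⟨h1, h2, h3, h4⟩ := hmem q hq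
    exact ⟨Finset.disjoint_iff_ne.1 d1 _ h1 _ h2, Finset.disjoint_iff_ne.1 d2 _ h1 _ h3,
      Finset.disjoint_iff_ne.1 d3 _ h1 _ h4, Finset.disjoint_iff_ne.1 d4 _ h2 _ h3,
      Finset.disjoint_iff_ne.1 d5 _ h2 _ h4, Finset.disjoint_iff_ne.1 d6 _ h3 _ h4⟩
  have hin : ∀ q ∈ A ×ˢ B ×ˢ C ×ˢ D, q.1 ∈ S ∧ q.2.1 ∈ S ∧ q.2.2.1 ∈ S ∧ q.2.2.2 ∈ S := by
    intro q hq
    obtain ⟨h1, h2, h3, h4⟩ := hmem q hq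
    exact ⟨hA h1, hB h2, hC h3, hD h4⟩
  refine ⟨A ×ˢ B ×ˢ C ×ˢ D, hdist, hin, ?_⟩
  have h1 := cs_image (A ×ˢ B ×ˢ C ×ˢ D) crr
  have h2 := energy S _ hdist hin
  have hc : (A ×ˢ B ×ˢ C ×ˢ D).card = (S.card / 4) ^ 4 := by
    simp only [card_product, a, b, c, d]
    ring
  rw [hc] at h1
  generalize ((A ×ˢ B ×ˢ C ×ˢ D).image crr).card = R at *
  have hn : S.card ≤ 8 * (S.card / 4) := by omega
  have hn0 : 0 < S.card / 4 := by omega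
  generalize S.card / 4 = n at *
  have h3 : n ^ 6 * n ^ 2 ≤ n ^ 6 * (R * 2 ^ 44) := by
    calc n ^ 6 * n ^ 2 = (n ^ 4) ^ 2 := by ring
      _ ≤ R * (2 ^ 26 * S.card ^ 6) := h1.trans (Nat.mul_le_mul_left _ h2)
      _ ≤ R * (2 ^ 26 * (8 * n) ^ 6) := by gcongr
      _ = _ := by ring
  have h4 : n ^ 2 ≤ R * 2 ^ 44 := Nat.le_of_mul_le_mul_left h3 (by positivity)
  calc S.card ^ 2 ≤ (8 * n) ^ 2 := Nat.pow_le_pow_left hn 2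
    _ = 64 * n ^ 2 := by ring
    _ ≤ 64 * (R * 2 ^ 44) := by gcongr
    _ = _ := by ring
lemma inj_y {a b c a' b' c' : ℝ} (ha : 0 < a) (hb : 0 < b) (hc : 0 < c) (ha' : 0 < a')
    (h1 : a * b = a' * b') (h2 : a * c = a' * c')
    (h3 : b * c = b' * c') : a = a' := by
  have h : a ^ 2 * (b * c) = a' ^ 2 * (b * c) := by
    calc a ^ 2 * (b * c) = (a * b) * (a * c) := by ring
      _ = (a' * b') * (a' * c') := by rw [h1, h2]
      _ = a' ^ 2 * (b' * c') := by ring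
      _ = a' ^ 2 * (b * c) := by rw [h3]
  have h' := mul_right_cancel₀ (mul_pos hb hc).ne' h
  exact (sq_eq_sq₀ ha.le ha'.le).1 h'

/-- the sextuple attached to four slopes and four heights -/
noncomputable def sx (q y : ℝ × ℝ × ℝ × ℝ) : (ℝ × ℝ × ℝ) × ℝ × ℝ × ℝ :=
  ((y.2.2.1 * y.2.2.2 * (q.2.2.1 - q.2.2.2), y.2.1 * y.2.2.2 * (q.2.1 - q.2.2.2),
    y.1 * y.2.2.2 * (q.1 - q.2.2.2)), y.2.1 * y.2.2.1 * (q.2.1 - q.2.2.1),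
    y.1 * y.2.1 * (q.1 - q.2.1), y.1 * y.2.2.1 * (q.1 - q.2.2.1))

/-- all coordinates positive -/
def Pos4 (y : ℝ × ℝ × ℝ × ℝ) : Prop := 0 < y.1 ∧ 0 < y.2.1 ∧ 0 < y.2.2.1 ∧ 0 < y.2.2.2

lemma sx_crr {q y : ℝ × ℝ × ℝ × ℝ} (hq : Dist4 q) (hy : Pos4 y) :
    crr q = (sx q y).2.2.1 * (sx q y).1.1 / ((sx q y).2.2.2 * (sx q y).1.2.1) := by
  obtain ⟨a, b, c, d⟩ := q
  obtain ⟨y1, y2, y3, y4⟩ := y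
  obtain ⟨h1, h2, h3, h4⟩ := hy
  simp only [Dist4] at hq
  simp only at h1 h2 h3 h4
  simp only [crr, sx]
  have e1 : a - c ≠ 0 := sub_ne_zero.2 (by tauto)
  have e2 : b - d ≠ 0 := sub_ne_zero.2 (by tauto)
  have h1' := h1.ne'
  have h2' := h2.ne'
  have h3' := h3.ne'
  have h4' := h4.ne'
  field_simp

lemma sx_inj {q y y' : ℝ × ℝ × ℝ × ℝ} (hq : Dist4 q) (hy : Pos4 y) (hy' : Pos4 y')
    (h : sx q y = sx q y') : y = y' := by
  obtain ⟨a, b, c, d⟩ := q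
  obtain ⟨y1, y2, y3, y4⟩ := y
  obtain ⟨z1, z2, z3, z4⟩ := y'
  obtain ⟨h1, h2, h3, h4⟩ := hy
  obtain ⟨k1, k2, k3, k4⟩ := hy'
  simp only [Dist4] at hq
  simp only at h1 h2 h3 h4 k1 k2 k3 k4
  simp only [sx, Prod.mk.injEq] at h
  obtain ⟨⟨g1, g2, g3⟩, g4, g5, g6⟩ := h
  have f1 := mul_right_cancel₀ (sub_ne_zero.2 (by tauto)) g1
  have f2 := mul_right_cancel₀ (sub_ne_zero.2 (by tauto)) g2
  have f3 := mul_right_cancel₀ (sub_ne_zero.2 (by tauto)) g3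
  have f4 := mul_right_cancel₀ (sub_ne_zero.2 (by tauto)) g4
  have f5 := mul_right_cancel₀ (sub_ne_zero.2 (by tauto)) g5
  have f6 := mul_right_cancel₀ (sub_ne_zero.2 (by tauto)) g6
  have r1 : y1 = z1 := inj_y h1 h2 h3 k1 f5 f6 f4
  subst r1
  have r2 := mul_left_cancel₀ h1.ne' f5
  have r3 := mul_left_cancel₀ h1.ne' f6
  have r4 := mul_left_cancel₀ h1.ne' f3
  rw [r2, r3, r4]

lemma lemC (T S : Finset ℝ) (h0 : (0:ℝ) ∉ T) (Y : ℝ → Finset ℝ) (v : ℕ) (hS : 4 ≤ S.card)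
    (hY : ∀ s ∈ S, v ≤ (Y s).card) (hpos : ∀ s ∈ S, ∀ y ∈ Y s, 0 < y)
    (hT : ∀ s ∈ S, ∀ s' ∈ S, s ≠ s' → ∀ y ∈ Y s, ∀ y' ∈ Y s', y * y' * (s - s') ∈ T) :
    (S.card ^ 2 * v ^ 4) ^ 3 ≤ (2 ^ 50) ^ 3 * (8000 * T.card ^ 14) := by
  obtain ⟨Q, hQ, hQS, hQc⟩ := cross_ratios S hS
  have hch : ∀ ρ : ℝ, ∃ q, ρ ∈ Q.image crr → q ∈ Q ∧ crr q = ρ := by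
    intro ρ
    by_cases h : ρ ∈ Q.image crr
    · obtain ⟨q, hq, e⟩ := mem_image.1 h
      exact ⟨q, fun _ => ⟨hq, e⟩⟩
    · exact ⟨0, fun h' => absurd h' h⟩
  choose g hg using hch
  let F : ℝ → Finset (ℝ × ℝ × ℝ × ℝ) := fun ρ =>
    Y (g ρ).1 ×ˢ Y (g ρ).2.1 ×ˢ Y (g ρ).2.2.1 ×ˢ Y (g ρ).2.2.2
  have hFpos : ∀ ρ ∈ Q.image crr, ∀ y ∈ F ρ, Pos4 y := by
    intro ρ hρ y hy
    obtain ⟨s1, s2, s3, s4⟩ := hQS _ (hg ρ hρ).1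
    simp only [F, mem_product] at hy
    exact ⟨hpos _ s1 _ hy.1, hpos _ s2 _ hy.2.1, hpos _ s3 _ hy.2.2.1, hpos _ s4 _ hy.2.2.2⟩
  have hmain : ((Q.image crr).sigma F).card ≤ (sext T).card := by
    apply card_le_card_of_injOn (fun z => sx (g z.1) z.2)
    · rintro ⟨ρ, y⟩ hz
      obtain ⟨hρ, hy⟩ := mem_sigma.1 (mem_coe.1 hz)
      obtain ⟨s1, s2, s3, s4⟩ := hQS _ (hg ρ hρ).1
      have hd := hQ _ (hg ρ hρ).1
      simp only [F, mem_product] at hy hρ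
      obtain ⟨y1, y2, y3, y4⟩ := hy
      obtain ⟨d1, d2, d3, d4, d5, d6⟩ := hd
      apply mem_coe.2
      unfold sext
      refine mem_filter.2 ⟨?_, ?_⟩
      · simp only [mem_product, sx]
        refine ⟨⟨?_, ?_, ?_⟩, ?_, ?_, ?_⟩ <;> apply hT <;> assumption
      · rw [mem_lin]
        simp only [sx]
        refine ⟨⟨?_, ?_⟩, by ring⟩ <;> apply hT <;> assumption
    · rintro ⟨ρ, y⟩ hz ⟨ρ', y'⟩ hz' he
      obtain ⟨hρ, hy⟩ := mem_sigma.1 (mem_coe.1 hz)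
      obtain ⟨hρ', hy'⟩ := mem_sigma.1 (mem_coe.1 hz')
      simp only at hρ hρ' hy hy' he
      have p1 := hFpos _ hρ _ hy
      have p2 := hFpos _ hρ' _ hy'
      have e : ρ = ρ' := by
        rw [← (hg ρ hρ).2, ← (hg ρ' hρ').2, sx_crr (hQ _ (hg ρ hρ).1) p1,
          sx_crr (hQ _ (hg ρ' hρ').1) p2, he]
      subst e
      have := sx_inj (hQ _ (hg ρ hρ).1) p1 p2 he
      rw [this]
  have hlow : (Q.image crr).card * v ^ 4 ≤ ((Q.image crr).sigma F).card := by
    rw [card_sigma, ← smul_eq_mul]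
    apply card_nsmul_le_sum
    intro ρ hρ
    obtain ⟨s1, s2, s3, s4⟩ := hQS _ (hg ρ hρ).1
    simp only [F, card_product]
    calc v ^ 4 = v * (v * (v * v)) := by ring
      _ ≤ _ := Nat.mul_le_mul (hY _ s1) (Nat.mul_le_mul (hY _ s2)
        (Nat.mul_le_mul (hY _ s3) (hY _ s4)))
  calc (S.card ^ 2 * v ^ 4) ^ 3 ≤ (2 ^ 50 * (Q.image crr).card * v ^ 4) ^ 3 := by gcongr
    _ = (2 ^ 50) ^ 3 * ((Q.image crr).card * v ^ 4) ^ 3 := by ring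
    _ ≤ (2 ^ 50) ^ 3 * ((sext T).card) ^ 3 := by
        gcongr
        exact hlow.trans hmain
    _ ≤ _ := by
        gcongr
        exact sext_card T h0

lemma layer (I : Finset ℝ) (f : ℝ → ℝ) (A w₀ : ℝ) (hw : 0 < w₀) (hA : 0 ≤ A)
    (h : ∀ w, w₀ ≤ w → ((I.filter fun i => w ≤ f i).card : ℝ) * w ^ 2 ≤ A) :
    ∀ (n : ℕ) (w : ℝ), w₀ ≤ w → (∀ i ∈ I, f i < w * 2 ^ n) →
      ∑ i ∈ I.filter (fun i => w ≤ f i), f i ≤ 4 * A / w := by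
  intro n
  induction n with
  | zero =>
    intro w hw1 hn
    have hw2 : 0 < w := lt_of_lt_of_le hw hw1
    rw [filter_false_of_mem]
    · simp; positivity
    · intro i hi
      have := hn i hi
      simp at this
      linarith
  | succ n ih =>
    intro w hw1 hn
    have hw2 : 0 < w := lt_of_lt_of_le hw hw1
    have h1 := ih (2 * w) (by linarith) (fun i hi => by
      have := hn i hi
      rw [pow_succ] at this
      linarith)
    have h2 : ∑ i ∈ I.filter (fun i => w ≤ f i), f i ≤
        ∑ i ∈ I.filter (fun i => w ≤ f i), (2 * w) +
        ∑ i ∈ I.filter (fun i => 2 * w ≤ f i), f i := by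
      have hs : I.filter (fun i => 2 * w ≤ f i) =
          (I.filter (fun i => w ≤ f i)).filter (fun i => 2 * w ≤ f i) := by
        rw [filter_filter]
        apply filter_congr
        intro i _
        constructor
        · intro h; exact ⟨by linarith, h⟩
        · exact fun h => h.2
      rw [hs, sum_filter (fun i => 2 * w ≤ f i), ← sum_add_distrib]
      apply sum_le_sum
      intro i _
      split_ifs with h <;> linarith
    have h3 := h w hw1
    rw [sum_const, nsmul_eq_mul] at h2
    have h4 : ((I.filter fun i => w ≤ f i).card : ℝ) * (2 * w) ≤ 2 * A / w := by
      rw [le_div_iff₀ hw2]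
      nlinarith
    have h5 : 4 * A / (2 * w) = 2 * A / w := by field_simp; ring
    have h6 : 4 * A / w = 2 * A / w + 2 * A / w := by ring
    linarith

lemma mem_Tset_s9 {P : Finset (ℝ × ℝ)} {p q : ℝ × ℝ} (hp : p ∈ P) (hq : q ∈ P)
    (h : omegaForm p q ≠ 0) : omegaForm p q ∈ Tset P :=
  mem_erase.2 ⟨h, mem_image.2 ⟨(p, q), mem_product.2 ⟨hp, hq⟩, rfl⟩⟩

lemma Tset_zero (P : Finset (ℝ × ℝ)) : (0:ℝ) ∉ Tset P := notMem_erase _ _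

lemma triv_bound (P L : Finset (ℝ × ℝ)) (hL : L ⊆ P) (q : ℝ × ℝ) (hq : q ∈ P)
    (h1 : ∀ p ∈ L, omegaForm q p ≠ 0)
    (h2 : ∀ p ∈ L, ∀ p' ∈ L, omegaForm q p = omegaForm q p' → p = p') :
    L.card ≤ (Tset P).card := by
  apply card_le_card_of_injOn (fun p => omegaForm q p)
  · intro p hp
    exact mem_coe.2 (mem_Tset_s9 hq (hL (mem_coe.1 hp)) (h1 p (mem_coe.1 hp)))
  · intro p hp p' hp' h
    exact h2 p (mem_coe.1 hp) p' (mem_coe.1 hp') h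

/-- the points of `P` on the line of slope `s` -/
noncomputable def ln (P : Finset (ℝ × ℝ)) (s : ℝ) : Finset (ℝ × ℝ) :=
  P.filter fun p => p.2 ≠ 0 ∧ p.1 = s * p.2

/-- the heights on the line of slope `s` -/
noncomputable def hts (P : Finset (ℝ × ℝ)) (s : ℝ) : Finset ℝ := (ln P s).image fun p => |p.2|

/-- the slopes -/
noncomputable def slopes (P : Finset (ℝ × ℝ)) : Finset ℝ :=
  (P.filter fun p => p.2 ≠ 0).image fun p => p.1 / p.2

lemma mem_ln {P : Finset (ℝ × ℝ)} {s : ℝ} {p : ℝ × ℝ} :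
    p ∈ ln P s ↔ p ∈ P ∧ p.2 ≠ 0 ∧ p.1 = s * p.2 := by
  unfold ln
  exact mem_filter

lemma hts_card (P : Finset (ℝ × ℝ)) (s : ℝ) : (ln P s).card ≤ 2 * (hts P s).card := by
  unfold hts
  apply card_le_mul_card_image
  intro y hy
  have : (ln P s).filter (fun p => |p.2| = y) ⊆ {(s * y, y), (s * (-y), -y)} := by
    intro p hp
    obtain ⟨hp, h⟩ := mem_filter.1 hp
    obtain ⟨_, _, h2⟩ := mem_ln.1 hp
    rw [mem_insert, mem_singleton]
    rcases abs_choice p.2 with e | e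
    · left
      rw [e] at h
      subst h
      exact Prod.ext h2 rfl
    · right
      rw [e] at h
      subst h
      rw [neg_neg]
      exact Prod.ext h2 rfl
  exact (card_le_card this).trans card_le_two

lemma hts_pos (P : Finset (ℝ × ℝ)) (s y : ℝ) (h : y ∈ hts P s) : 0 < y := by
  unfold hts at h
  obtain ⟨p, hp, rfl⟩ := mem_image.1 h
  exact abs_pos.2 (mem_ln.1 hp).2.1

lemma hts_T (P : Finset (ℝ × ℝ)) (s s' : ℝ) (hs : s ≠ s') (y : ℝ) (hy : y ∈ hts P s) (y' : ℝ)
    (hy' : y' ∈ hts P s') : y * y' * (s - s') ∈ Tset P := by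
  unfold hts at hy hy'
  obtain ⟨p, hp, rfl⟩ := mem_image.1 hy
  obtain ⟨p', hp', rfl⟩ := mem_image.1 hy'
  obtain ⟨h1, h2, h3⟩ := mem_ln.1 hp
  obtain ⟨h1', h2', h3'⟩ := mem_ln.1 hp'
  have e : omegaForm p p' = p.2 * p'.2 * (s - s') := by
    unfold omegaForm
    rw [h3, h3']
    ring
  have e' : omegaForm p' p = -(p.2 * p'.2 * (s - s')) := by
    unfold omegaForm
    rw [h3, h3']
    ring
  have hne : p.2 * p'.2 * (s - s') ≠ 0 :=
    mul_ne_zero (mul_ne_zero h2 h2') (sub_ne_zero.2 hs)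
  rw [← abs_mul]
  rcases abs_choice (p.2 * p'.2) with h | h
  · rw [h, ← e]
    exact mem_Tset_s9 h1 h1' (by rw [e]; exact hne)
  · rw [h]
    have : -(p.2 * p'.2) * (s - s') = omegaForm p' p := by rw [e']; ring
    rw [this]
    exact mem_Tset_s9 h1' h1 (by rw [e']; exact neg_ne_zero.2 hne)

lemma ln_le (P : Finset (ℝ × ℝ)) (p q : ℝ × ℝ) (hp : p ∈ P) (hq : q ∈ P)
    (h : omegaForm p q ≠ 0) (s : ℝ) : (ln P s).card ≤ (Tset P).card := by
  have : ∃ r ∈ P, r.1 - r.2 * s ≠ 0 := by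
    by_contra! hc
    have h1 := hc p hp
    have h2 := hc q hq
    apply h
    unfold omegaForm
    rw [sub_eq_zero] at h1 h2
    rw [h1, h2]
    ring
  obtain ⟨r, hr, hrs⟩ := this
  have key : ∀ x ∈ ln P s, omegaForm r x = (r.1 - r.2 * s) * x.2 := by
    intro x hx
    obtain ⟨h1, h2, h3⟩ := mem_ln.1 hx
    unfold omegaForm
    rw [h3]
    ring
  refine triv_bound P _ (fun x hx => (mem_ln.1 hx).1) r hr ?_ ?_
  · intro x hx
    rw [key x hx]
    exact mul_ne_zero hrs (mem_ln.1 hx).2.1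
  · intro x hx x' hx' e
    rw [key x hx, key x' hx'] at e
    have e2 := mul_left_cancel₀ hrs e
    refine Prod.ext ?_ e2
    rw [(mem_ln.1 hx).2.2, (mem_ln.1 hx').2.2, e2]

lemma ln0_le (P : Finset (ℝ × ℝ)) (h0 : ∀ p ∈ P, p ≠ (0 : ℝ × ℝ)) (p q : ℝ × ℝ) (hp : p ∈ P)
    (hq : q ∈ P) (h : omegaForm p q ≠ 0) :
    (P.filter fun p => ¬ p.2 ≠ 0).card ≤ (Tset P).card := by
  have : ∃ r ∈ P, r.2 ≠ 0 := by
    by_contra! hc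
    apply h
    unfold omegaForm
    rw [hc p hp, hc q hq]
    ring
  obtain ⟨r, hr, hrs⟩ := this
  have key : ∀ x ∈ P.filter (fun p => ¬ p.2 ≠ 0), x.2 = 0 ∧ omegaForm r x = - r.2 * x.1 := by
    intro x hx
    have h2 := not_not.1 (mem_filter.1 hx).2
    refine ⟨h2, ?_⟩
    unfold omegaForm
    rw [h2]
    ring
  refine triv_bound P _ (filter_subset _ _) r hr ?_ ?_
  · intro x hx
    rw [(key x hx).2]
    refine mul_ne_zero (neg_ne_zero.2 hrs) fun h => ?_
    exact h0 x (mem_filter.1 hx).1 (Prod.ext h (key x hx).1)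
  · intro x hx x' hx' e
    rw [(key x hx).2, (key x' hx').2] at e
    have e2 := mul_left_cancel₀ (neg_ne_zero.2 hrs) e
    exact Prod.ext e2 (by rw [(key x hx).1, (key x' hx').1])

lemma card_split (P : Finset (ℝ × ℝ)) :
    P.card = ∑ s ∈ slopes P, (ln P s).card + (P.filter fun p => ¬ p.2 ≠ 0).card := by
  rw [← card_filter_add_card_filter_not (s := P) (fun p => p.2 ≠ 0)]
  congr 1
  rw [card_eq_sum_card_image (fun p : ℝ × ℝ => p.1 / p.2)]
  refine sum_congr rfl fun s _ => ?_
  congr 1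
  ext p
  rw [mem_ln, mem_filter, mem_filter, and_assoc]
  refine and_congr_right fun _ => and_congr_right fun h => ?_
  exact div_eq_iff h

lemma rich (P : Finset (ℝ × ℝ)) (t r w : ℝ) (ht : t = ((Tset P).card : ℝ)) (ht1 : 1 ≤ t)
    (hr : 0 ≤ r) (hr6 : r ^ 6 = t ^ 14) (hrt : t ^ 2 ≤ r) (hw : 0 < w)
    (hln : ∀ s, ((ln P s).card : ℝ) ≤ t) :
    (((slopes P).filter fun s => w ≤ ((ln P s).card : ℝ)).card : ℝ) * w ^ 2 ≤ 2 ^ 30 * r := by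
  set S := (slopes P).filter fun s => w ≤ ((ln P s).card : ℝ) with hSdef
  have hS : ∀ s ∈ S, w ≤ ((ln P s).card : ℝ) := fun s hs => (mem_filter.1 hs).2
  by_cases hk : 4 ≤ S.card
  · have h := lemC (Tset P) S (Tset_zero P) (hts P) ⌈w / 2⌉₊ hk (fun s hs => by
        apply Nat.ceil_le.2
        have h1 := hS s hs
        have h2 : ((ln P s).card : ℝ) ≤ 2 * ((hts P s).card : ℝ) := by
          exact_mod_cast hts_card P s
        linarith) (fun s _ y hy => hts_pos P s y hy)
        (fun s _ s' _ hss y hy y' hy' => hts_T P s s' hss y hy y' hy')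
    have h' : ((S.card : ℝ) ^ 2 * (⌈w / 2⌉₊ : ℝ) ^ 4) ^ 3 ≤ (2 ^ 50) ^ 3 * (8000 * t ^ 14) := by
      rw [ht]
      exact_mod_cast h
    have hv : w / 2 ≤ (⌈w / 2⌉₊ : ℝ) := Nat.le_ceil _
    have h2 : ((S.card : ℝ) ^ 2 * (w / 2) ^ 4) ^ 3 ≤ (2 ^ 50) ^ 3 * (8000 * t ^ 14) := by
      refine le_trans ?_ h'
      gcongr
    have h3 : ((S.card : ℝ) * w ^ 2) ^ 6 ≤ (2 ^ 30 * r) ^ 6 := by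
      have e1 : ((S.card : ℝ) * w ^ 2) ^ 6 = 2 ^ 12 * ((S.card : ℝ) ^ 2 * (w / 2) ^ 4) ^ 3 := by
        ring
      rw [e1, mul_pow _ r, hr6]
      have : (0:ℝ) ≤ t ^ 14 := by positivity
      have e2 : (2:ℝ) ^ 12 * ((2 ^ 50) ^ 3 * (8000 * t ^ 14)) ≤ (2 ^ 30) ^ 6 * t ^ 14 := by
        have : (2:ℝ) ^ 12 * ((2 ^ 50) ^ 3 * (8000 * t ^ 14)) =
          (2 ^ 12 * ((2 ^ 50) ^ 3 * 8000)) * t ^ 14 := by ring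
        rw [this]
        gcongr
        norm_num
      linarith
    exact (pow_le_pow_iff_left₀ (by positivity) (by positivity) (by norm_num)).1 h3
  · have hk' : (S.card : ℝ) ≤ 3 := by exact_mod_cast (by omega : S.card ≤ 3)
    rcases S.eq_empty_or_nonempty with he | ⟨s, hs⟩
    · rw [he]
      simp only [card_empty, Nat.cast_zero, zero_mul]
      positivity
    · have h1 : w ≤ t := (hS s hs).trans (hln s)
      calc (S.card : ℝ) * w ^ 2 ≤ 3 * t ^ 2 := by gcongr
        _ ≤ 3 * r := by gcongr
        _ ≤ 2 ^ 30 * r := by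
          gcongr
          norm_num

lemma main_bound (w₀ : ℝ) (P : Finset (ℝ × ℝ)) (hw : 1 ≤ w₀)
    (h0 : ∀ p ∈ P, p ≠ (0 : ℝ × ℝ))
    (hl : ∀ u : ℝ × ℝ, u ≠ 0 → (∃ p ∈ P, ∃ t : ℝ, p = t • u) →
      w₀ ≤ ((P.filter fun p => ∃ t : ℝ, p = t • u).card : ℝ))
    (p q : ℝ × ℝ) (hp : p ∈ P) (hq : q ∈ P) (hpq : omegaForm p q ≠ 0) (r : ℝ) (hr : 0 ≤ r)
    (hr6 : r ^ 6 = ((Tset P).card : ℝ) ^ 14) (hrt : ((Tset P).card : ℝ) ^ 2 ≤ r) :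
    (P.card : ℝ) * w₀ ≤ 2 ^ 33 * r := by
  set t : ℝ := ((Tset P).card : ℝ) with ht
  have ht1 : 1 ≤ t := by
    have : 0 < (Tset P).card := card_pos.2 ⟨_, mem_Tset_s9 hp hq hpq⟩
    rw [ht]
    exact_mod_cast this
  have hln : ∀ s, ((ln P s).card : ℝ) ≤ t := fun s => by
    rw [ht]
    exact_mod_cast ln_le P p q hp hq hpq s
  have hw0 : 0 < w₀ := by linarith
  have hsl : ∀ s ∈ slopes P, w₀ ≤ ((ln P s).card : ℝ) := by
    intro s hs
    unfold slopes at hs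
    obtain ⟨x, hx, rfl⟩ := mem_image.1 hs
    obtain ⟨hx, hx2⟩ := mem_filter.1 hx
    have h1 := hl (x.1 / x.2, 1) (fun h => one_ne_zero (congrArg Prod.snd h))
      ⟨x, hx, x.2, by
        refine Prod.ext ?_ ?_
        · change x.1 = x.2 * (x.1 / x.2)
          field_simp
        · change x.2 = x.2 * 1
          ring⟩
    refine h1.trans ?_
    norm_cast
    apply card_le_card
    intro y hy
    obtain ⟨hy, a, e⟩ := mem_filter.1 hy
    have e1 : y.1 = a * (x.1 / x.2) := by rw [e]; rfl
    have e2 : y.2 = a := by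
      have : y.2 = a * 1 := by rw [e]; rfl
      rw [this, mul_one]
    refine mem_ln.2 ⟨hy, fun hz => h0 y hy ?_, ?_⟩
    · rw [e2] at hz
      rw [e, hz, zero_smul]
    · rw [e1, e2, mul_comm]
  have hwt : w₀ ≤ t := by
    have : ∃ r ∈ P, r.2 ≠ 0 := by
      by_contra! hc
      apply hpq
      unfold omegaForm
      rw [hc p hp, hc q hq]
      ring
    obtain ⟨x, hx, hx2⟩ := this
    have hm : x.1 / x.2 ∈ slopes P := by
      unfold slopes
      exact mem_image.2 ⟨x, mem_filter.2 ⟨hx, hx2⟩, rfl⟩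
    exact (hsl _ hm).trans (hln _)
  have hlay := layer (slopes P) (fun s => ((ln P s).card : ℝ)) (2 ^ 30 * r) w₀ hw0
    (by positivity) (fun w hww => rich P t r w ht ht1 hr hr6 hrt (by linarith) hln)
  obtain ⟨n, hn⟩ := pow_unbounded_of_one_lt t (by norm_num : (1:ℝ) < 2)
  have hlay2 := hlay n w₀ le_rfl (fun s _ => by
    have h1 := hln s
    have h2 : (2:ℝ) ^ n ≤ w₀ * 2 ^ n := le_mul_of_one_le_left (by positivity) hw
    linarith)
  rw [filter_true_of_mem hsl, le_div_iff₀ hw0] at hlay2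
  have hN : (P.card : ℝ) = ∑ s ∈ slopes P, ((ln P s).card : ℝ) +
      ((P.filter fun p => ¬ p.2 ≠ 0).card : ℝ) := by
    exact_mod_cast card_split P
  have hN0 : ((P.filter fun p => ¬ p.2 ≠ 0).card : ℝ) ≤ t := by
    rw [ht]
    exact_mod_cast ln0_le P h0 p q hp hq hpq
  have h3 : ((P.filter fun p => ¬ p.2 ≠ 0).card : ℝ) * w₀ ≤ r := by
    calc ((P.filter fun p => ¬ p.2 ≠ 0).card : ℝ) * w₀ ≤ t * t := by gcongr
      _ = t ^ 2 := by ring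
      _ ≤ r := hrt
  rw [hN, add_mul]
  linarith

theorem stmt_9 :
    ∃ c : ℝ, 0 < c ∧
      ∀ (w₀ : ℝ) (P : Finset (ℝ × ℝ)),
        1 ≤ w₀ →
        (∀ p ∈ P, p ≠ (0 : ℝ × ℝ)) →
        -- every line through the origin meeting `P` supports at least `w₀` points of `P`
        (∀ u : ℝ × ℝ, u ≠ 0 → (∃ p ∈ P, ∃ t : ℝ, p = t • u) →
          w₀ ≤ ((P.filter fun p => ∃ t : ℝ, p = t • u).card : ℝ)) →
        -- `P` is supported on at least four distinct lines through the origin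
        (∃ p₁ ∈ P, ∃ p₂ ∈ P, ∃ p₃ ∈ P, ∃ p₄ ∈ P,
          omegaForm p₁ p₂ ≠ 0 ∧ omegaForm p₁ p₃ ≠ 0 ∧ omegaForm p₁ p₄ ≠ 0 ∧
          omegaForm p₂ p₃ ≠ 0 ∧ omegaForm p₂ p₄ ≠ 0 ∧ omegaForm p₃ p₄ ≠ 0) →
        c * ((P.card : ℝ) * w₀) ^ ((3 : ℝ) / 7) ≤ ((Tset P).card : ℝ) := by
  refine ⟨(((2:ℝ) ^ 33) ^ ((3:ℝ) / 7))⁻¹, by positivity, ?_⟩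
  rintro w₀ P hw h0 hl ⟨p, hp, q, hq, _, _, _, _, hpq, _⟩
  have ht1 : (1:ℝ) ≤ ((Tset P).card : ℝ) := by
    have : 0 < (Tset P).card := card_pos.2 ⟨_, mem_Tset_s9 hp hq hpq⟩
    exact_mod_cast this
  set t : ℝ := ((Tset P).card : ℝ) with ht
  have ht0 : 0 ≤ t := by linarith
  have hr0 : 0 ≤ t ^ ((7:ℝ) / 3) := by positivity
  have hb := main_bound w₀ P hw h0 hl p q hp hq hpq (t ^ ((7:ℝ) / 3)) hr0
    (by
      rw [← Real.rpow_mul_natCast ht0, ← Real.rpow_natCast t 14]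
      norm_num)
    (by
      rw [← ht, ← Real.rpow_natCast t 2]
      exact Real.rpow_le_rpow_of_exponent_le ht1 (by norm_num))
  rw [inv_mul_le_iff₀ (by positivity)]
  calc ((P.card : ℝ) * w₀) ^ ((3:ℝ) / 7) ≤ (2 ^ 33 * t ^ ((7:ℝ) / 3)) ^ ((3:ℝ) / 7) := by
        apply Real.rpow_le_rpow (by positivity) hb (by norm_num)
    _ = ((2:ℝ) ^ 33) ^ ((3:ℝ) / 7) * (t ^ ((7:ℝ) / 3)) ^ ((3:ℝ) / 7) :=
        Real.mul_rpow (by positivity) hr0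
    _ = ((2:ℝ) ^ 33) ^ ((3:ℝ) / 7) * t := by
        rw [← Real.rpow_mul ht0]
        norm_num
end

section
/- (Konyagin–Shkredov collinear triples bound.) There exists an absolute constant C > 0 such that the following holds. Let A and C' be finite nonempty sets of nonzero reals and let α₁, α₂, α₃ be nonzero real numbers. Then the number of triples (a₁,a₂,a₃) ∈ A³ with α₁a₁ + α₂a₂ + α₃a₃ = 0 is at most C·(|AC'|²/(|A||C'|))^(1/3)·|A|^(5/3). -/
open Finset
open scoped Pointwise Classical

/-- Cutting a finite set of reals into at most `R` consecutive blocks. -/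
lemma exists_blocks (X : Finset ℝ) (R : ℕ) (hR : 1 ≤ R) :
    ∃ f : ℝ → ℕ, (∀ x ∈ X, f x < R) ∧ (∀ x y, x ≤ y → f x ≤ f y) ∧
      ∀ x, (X.filter fun y => f y = f x).card ≤ X.card / R + 1 := by
  set w := X.card / R + 1 with hw
  have hw0 : 0 < w := Nat.succ_pos _
  have hwR : X.card < w * R := by
    have := Nat.div_add_mod X.card R
    have h2 := Nat.mod_lt X.card (show R > 0 by omega)
    rw [hw]
    nlinarith
  let rk : ℝ → ℕ := fun x => (X.filter fun y => y < x).card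
  have rk_mono : ∀ x y, x ≤ y → rk x ≤ rk y := by
    intro x y hxy
    apply Finset.card_le_card
    intro z hz
    simp only [Finset.mem_filter] at hz ⊢
    exact ⟨hz.1, lt_of_lt_of_le hz.2 hxy⟩
  have rk_lt : ∀ x ∈ X, ∀ y, x < y → rk x < rk y := by
    intro x hx y hxy
    apply Finset.card_lt_card
    rw [Finset.ssubset_iff_of_subset]
    · exact ⟨x, by simp [hx, hxy], by simp⟩
    · intro z hz
      simp only [Finset.mem_filter] at hz ⊢
      exact ⟨hz.1, lt_trans hz.2 hxy⟩
  have rk_card : ∀ x ∈ X, rk x < X.card := by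
    intro x hx
    apply Finset.card_lt_card
    rw [Finset.ssubset_iff_of_subset (Finset.filter_subset _ _)]
    exact ⟨x, hx, by simp⟩
  refine ⟨fun x => rk x / w, ?_, ?_, ?_⟩
  · intro x hx
    rw [Nat.div_lt_iff_lt_mul hw0]
    have := rk_card x hx
    rw [mul_comm]
    omega
  · intro x y hxy
    exact Nat.div_le_div_right (rk_mono x y hxy)
  · intro x
    have : (X.filter fun y => rk y / w = rk x / w).card
        ≤ (Finset.Ico (rk x / w * w) (rk x / w * w + w)).card := by
      apply Finset.card_le_card_of_injOn rk
      · intro y hy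
        simp only [Finset.coe_filter, Set.mem_ofPred_eq] at hy
        simp only [Finset.coe_Ico, Set.mem_Ico]
        rw [← hy.2]
        have h1 := Nat.div_add_mod (rk y) w
        have h2 := Nat.mod_lt (rk y) hw0
        rw [mul_comm] at h1
        omega
      · intro a ha b hb hab
        simp only [Finset.coe_filter, Set.mem_ofPred_eq] at ha hb
        rcases lt_trichotomy a b with h | h | h
        · have := rk_lt a ha.1 b h
          omega
        · exact h
        · have := rk_lt b hb.1 a h
          omega
    simpa using this

/-- A finite set has at most (number of classes) + (number of off-diagonal pairs in one class). -/
lemma card_le_image_add_pairs {α β : Type*} [DecidableEq α] [DecidableEq β]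
    (P : Finset α) (φ : α → β) :
    P.card ≤ (P.image φ).card +
      ((P ×ˢ P).filter fun q => q.1 ≠ q.2 ∧ φ q.1 = φ q.2).card := by
  rcases P.eq_empty_or_nonempty with rfl | ⟨p0, hp0⟩
  · simp
  have hsec : ∀ b : β, ∃ q : α, b ∈ P.image φ → q ∈ P ∧ φ q = b := by
    intro b
    by_cases hb : b ∈ P.image φ
    · obtain ⟨q, hq, rfl⟩ := Finset.mem_image.1 hb
      exact ⟨q, fun _ => ⟨hq, rfl⟩⟩
    · exact ⟨p0, fun h => absurd h hb⟩
  choose g hg using hsec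
  have hg1 : ∀ p ∈ P, g (φ p) ∈ P ∧ φ (g (φ p)) = φ p :=
    fun p hp => hg _ (Finset.mem_image_of_mem _ hp)
  rw [← Finset.card_filter_add_card_filter_not (s := P) (fun p => p = g (φ p))]
  apply add_le_add
  · apply Finset.card_le_card_of_injOn φ
    · intro p hp
      simp only [Finset.coe_filter, Set.mem_ofPred_eq] at hp
      exact Finset.mem_coe.2 (Finset.mem_image_of_mem _ hp.1)
    · intro a ha b hb hab
      simp only [Finset.coe_filter, Set.mem_ofPred_eq] at ha hb
      rw [ha.2, hb.2, hab]
  · apply Finset.card_le_card_of_injOn (fun p => (p, g (φ p)))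
    · intro p hp
      simp only [Finset.coe_filter, Set.mem_ofPred_eq] at hp
      simp only [Finset.coe_filter, Set.mem_ofPred_eq, Finset.mem_product]
      exact ⟨⟨hp.1, (hg1 p hp.1).1⟩, hp.2, (hg1 p hp.1).2.symm⟩
    · intro a _ b _ hab
      exact (Prod.ext_iff.1 hab).1

/-- A line with nonzero slope visits at most `2 R` cells. -/
lemma cells_bound (P : Finset (ℝ × ℝ)) (s t : ℝ) (hs : s ≠ 0)
    (hP : ∀ p ∈ P, p.2 = s * p.1 + t) (R : ℕ) (f g : ℝ → ℕ)
    (hf : ∀ p ∈ P, f p.1 < R) (hg : ∀ p ∈ P, g p.2 < R)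
    (hfm : ∀ x y, x ≤ y → f x ≤ f y) (hgm : ∀ x y, x ≤ y → g x ≤ g y) :
    (P.image fun p => (f p.1, g p.2)).card ≤ 2 * R := by
  rcases lt_or_gt_of_ne hs with h | h
  · have : (P.image fun p => (f p.1, g p.2)).card ≤ (Finset.range (2 * R)).card := by
      apply Finset.card_le_card_of_injOn (fun c => c.1 + (R - 1 - c.2))
      · intro c hc
        obtain ⟨p, hp, rfl⟩ := Finset.mem_image.1 (Finset.mem_coe.1 hc)
        have := hf p hp
        have := hg p hp
        simp only [Finset.coe_range, Set.mem_Iio]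
        omega
      · intro c hc d hd hcd
        obtain ⟨p, hp, rfl⟩ := Finset.mem_image.1 (Finset.mem_coe.1 hc)
        obtain ⟨q, hq, rfl⟩ := Finset.mem_image.1 (Finset.mem_coe.1 hd)
        have := hg p hp
        have := hg q hq
        simp only at hcd
        rcases le_total p.1 q.1 with hpq | hpq
        · have h1 := hfm _ _ hpq
          have h2 := hgm q.2 p.2 (by rw [hP p hp, hP q hq]; nlinarith)
          ext <;> simp only <;> omega
        · have h1 := hfm _ _ hpq
          have h2 := hgm p.2 q.2 (by rw [hP p hp, hP q hq]; nlinarith)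
          ext <;> simp only <;> omega
    simpa using this
  · have : (P.image fun p => (f p.1, g p.2)).card ≤ (Finset.range (2 * R)).card := by
      apply Finset.card_le_card_of_injOn (fun c => c.1 + c.2)
      · intro c hc
        obtain ⟨p, hp, rfl⟩ := Finset.mem_image.1 (Finset.mem_coe.1 hc)
        have := hf p hp
        have := hg p hp
        simp only [Finset.coe_range, Set.mem_Iio]
        omega
      · intro c hc d hd hcd
        obtain ⟨p, hp, rfl⟩ := Finset.mem_image.1 (Finset.mem_coe.1 hc)
        obtain ⟨q, hq, rfl⟩ := Finset.mem_image.1 (Finset.mem_coe.1 hd)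
        simp only at hcd
        rcases le_total p.1 q.1 with hpq | hpq
        · have h1 := hfm _ _ hpq
          have h2 := hgm p.2 q.2 (by rw [hP p hp, hP q hq]; nlinarith)
          ext <;> simp only <;> omega
        · have h1 := hfm _ _ hpq
          have h2 := hgm q.2 p.2 (by rw [hP p hp, hP q hq]; nlinarith)
          ext <;> simp only <;> omega
    simpa using this

/-- Incidence count for a Cartesian product. -/
lemma incidence_bound (X Y : Finset ℝ) (L : Finset (ℝ × ℝ)) (hL : ∀ l ∈ L, l.1 ≠ 0)
    (R : ℕ) (hR : 1 ≤ R) :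
    (∑ l ∈ L, ((X ×ˢ Y).filter fun p => p.2 = l.1 * p.1 + l.2).card) * R ^ 2
      ≤ 2 * R ^ 3 * L.card + 4 * (X.card * Y.card) ^ 2 := by
  set N : ℝ × ℝ → Finset (ℝ × ℝ) :=
    fun l => (X ×ˢ Y).filter fun p => p.2 = l.1 * p.1 + l.2 with hN
  change (∑ l ∈ L, (N l).card) * R ^ 2 ≤ _
  have memN : ∀ l p, p ∈ N l ↔ (p.1 ∈ X ∧ p.2 ∈ Y) ∧ p.2 = l.1 * p.1 + l.2 := by
    intro l p
    simp [hN]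
  have triv : ∀ M : ℕ, M < R → (∀ l ∈ L, (N l).card ≤ M) →
      (∑ l ∈ L, (N l).card) * R ^ 2 ≤ 2 * R ^ 3 * L.card + 4 * (X.card * Y.card) ^ 2 := by
    intro M hM h
    have h1 : ∑ l ∈ L, (N l).card ≤ L.card * R := by
      have := Finset.sum_le_card_nsmul L (fun l => (N l).card) R
        (fun l hl => (h l hl).trans hM.le)
      simpa using this
    calc (∑ l ∈ L, (N l).card) * R ^ 2 ≤ (L.card * R) * R ^ 2 := Nat.mul_le_mul_right _ h1
      _ = R ^ 3 * L.card := by ring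
      _ ≤ _ := by nlinarith [Nat.zero_le (R ^ 3 * L.card), Nat.zero_le ((X.card * Y.card) ^ 2)]
  by_cases hX : X.card < R
  · apply triv _ hX
    intro l _
    apply Finset.card_le_card_of_injOn Prod.fst
    · intro p hp
      exact ((memN l p).1 hp).1.1
    · intro p hp q hq hpq
      have h1 := ((memN l p).1 hp).2
      have h2 := ((memN l q).1 hq).2
      exact Prod.ext hpq (by rw [h1, h2, hpq])
  by_cases hY : Y.card < R
  · apply triv _ hY
    intro l hl
    apply Finset.card_le_card_of_injOn Prod.snd
    · intro p hp
      exact ((memN l p).1 hp).1.2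
    · intro p hp q hq hpq
      have h1 := ((memN l p).1 hp).2
      have h2 := ((memN l q).1 hq).2
      refine Prod.ext ?_ hpq
      have : l.1 * p.1 = l.1 * q.1 := by
        have : p.2 = q.2 := hpq
        linarith
      exact mul_left_cancel₀ (hL l hl) this
  push Not at hX hY
  obtain ⟨f, hfR, hfm, hfc⟩ := exists_blocks X R hR
  obtain ⟨g, hgR, hgm, hgc⟩ := exists_blocks Y R hR
  let φ : ℝ × ℝ → ℕ × ℕ := fun p => (f p.1, g p.2)
  let E : ℝ × ℝ → Finset ((ℝ × ℝ) × (ℝ × ℝ)) :=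
    fun l => (N l ×ˢ N l).filter fun q => q.1 ≠ q.2 ∧ φ q.1 = φ q.2
  have step1 : ∀ l ∈ L, (N l).card ≤ 2 * R + (E l).card := by
    intro l hl
    refine (card_le_image_add_pairs (N l) φ).trans (Nat.add_le_add_right ?_ _)
    exact cells_bound (N l) l.1 l.2 (hL l hl) (fun p hp => ((memN l p).1 hp).2) R f g
      (fun p hp => hfR _ ((memN l p).1 hp).1.1) (fun p hp => hgR _ ((memN l p).1 hp).1.2) hfm hgm
  let U : Finset ((ℝ × ℝ) × (ℝ × ℝ)) :=
    ((X ×ˢ Y) ×ˢ (X ×ˢ Y)).filter fun q => φ q.1 = φ q.2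
  have step2 : ∑ l ∈ L, (E l).card ≤ U.card := by
    rw [← Finset.card_biUnion]
    · apply Finset.card_le_card
      intro q hq
      obtain ⟨l, _, hq⟩ := Finset.mem_biUnion.1 hq
      simp only [E, Finset.mem_filter, Finset.mem_product, memN] at hq
      simp only [U, Finset.mem_filter, Finset.mem_product]
      exact ⟨⟨hq.1.1.1, hq.1.2.1⟩, hq.2.2⟩
    · intro l _ l' _ hne
      rw [Function.onFun, Finset.disjoint_left]
      intro q hq hq'
      simp only [E, Finset.mem_filter, Finset.mem_product, memN] at hq hq'
      obtain ⟨⟨⟨_, a1⟩, _, a2⟩, hd, _⟩ := hq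
      obtain ⟨⟨⟨_, b1⟩, _, b2⟩, _, _⟩ := hq'
      have hx : q.1.1 - q.2.1 ≠ 0 := by
        intro h0
        have h0 : q.1.1 = q.2.1 := by linarith
        exact hd (Prod.ext h0 (by rw [a1, a2, h0]))
      have e1 : l.1 = l'.1 := by
        apply mul_right_cancel₀ hx
        linarith
      have e2 : l.2 = l'.2 := by
        rw [e1] at a1
        linarith
      exact hne (Prod.ext e1 e2)
  have step3 : U.card ≤ (X.card * Y.card) * ((X.card / R + 1) * (Y.card / R + 1)) := by
    have h1 : U.card = ∑ p ∈ X ×ˢ Y, ((X ×ˢ Y).filter fun q => φ p = φ q).card := by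
      simp only [U, Finset.card_filter]
      rw [Finset.sum_product]
    rw [h1]
    have h2 := Finset.sum_le_card_nsmul (X ×ˢ Y)
      (fun p => ((X ×ˢ Y).filter fun q => φ p = φ q).card)
      ((X.card / R + 1) * (Y.card / R + 1)) (by
        intro p _
        refine le_trans ?_ (Nat.mul_le_mul (hfc p.1) (hgc p.2))
        rw [← Finset.card_product]
        apply Finset.card_le_card
        intro q hq
        simp only [φ, Finset.mem_filter, Finset.mem_product, Prod.mk.injEq] at hq ⊢
        exact ⟨⟨hq.1.1, hq.2.1.symm⟩, hq.1.2, hq.2.2.symm⟩)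
    simpa [Finset.card_product] using h2
  have step4 : ∑ l ∈ L, (N l).card ≤ L.card * (2 * R) +
      (X.card * Y.card) * ((X.card / R + 1) * (Y.card / R + 1)) := by
    calc ∑ l ∈ L, (N l).card ≤ ∑ l ∈ L, (2 * R + (E l).card) := Finset.sum_le_sum step1
      _ = L.card * (2 * R) + ∑ l ∈ L, (E l).card := by
        rw [Finset.sum_add_distrib, Finset.sum_const, smul_eq_mul]
      _ ≤ _ := Nat.add_le_add_left (step2.trans step3) _
  have wX : (X.card / R + 1) * R ≤ 2 * X.card := by
    have := Nat.div_mul_le_self X.card R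
    rw [add_mul]
    omega
  have wY : (Y.card / R + 1) * R ≤ 2 * Y.card := by
    have := Nat.div_mul_le_self Y.card R
    rw [add_mul]
    omega
  calc (∑ l ∈ L, (N l).card) * R ^ 2 ≤ (L.card * (2 * R) +
      (X.card * Y.card) * ((X.card / R + 1) * (Y.card / R + 1))) * R ^ 2 :=
        Nat.mul_le_mul_right _ step4
    _ = 2 * R ^ 3 * L.card + (X.card * Y.card) *
        (((X.card / R + 1) * R) * ((Y.card / R + 1) * R)) := by ring
    _ ≤ 2 * R ^ 3 * L.card + (X.card * Y.card) * ((2 * X.card) * (2 * Y.card)) :=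
        Nat.add_le_add_left (Nat.mul_le_mul_left _ (Nat.mul_le_mul wX wY)) _
    _ = _ := by ring

/-- The counting bound with a free parameter `R`. -/
lemma count_bound (A C' : Finset ℝ) (α₁ α₂ α₃ : ℝ) (hA : (0 : ℝ) ∉ A) (hC : (0 : ℝ) ∉ C')
    (h1 : α₁ ≠ 0) (h2 : α₂ ≠ 0) (h3 : α₃ ≠ 0) (R : ℕ) (hR : 1 ≤ R) :
    (((A ×ˢ A ×ˢ A).filter fun x => α₁ * x.1 + α₂ * x.2.1 + α₃ * x.2.2 = 0).card * C'.card)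
        * R ^ 2
      ≤ 2 * R ^ 3 * ((A * C').card * A.card) + 4 * (C'.card * A.card) ^ 2 := by
  set S := (A ×ˢ A ×ˢ A).filter fun x => α₁ * x.1 + α₂ * x.2.1 + α₃ * x.2.2 = 0 with hS
  let X : Finset ℝ := C'.image fun c => c⁻¹
  let ψ : ℝ × ℝ → ℝ × ℝ := fun q => (-(α₁ * q.1 / α₂), -(α₃ * q.2 / α₂))
  let L : Finset (ℝ × ℝ) := ((A * C') ×ˢ A).image ψ
  have hX : X.card = C'.card := Finset.card_image_of_injective _ inv_injective
  have hLc : L.card ≤ (A * C').card * A.card := by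
    refine Finset.card_image_le.trans ?_
    rw [Finset.card_product]
  have hL : ∀ l ∈ L, l.1 ≠ 0 := by
    intro l hl
    obtain ⟨q, hq, rfl⟩ := Finset.mem_image.1 hl
    obtain ⟨a, ha, c, hc, hac⟩ := Finset.mem_mul.1 (Finset.mem_product.1 hq).1
    have ha0 : a ≠ 0 := fun h => hA (h ▸ ha)
    have hc0 : c ≠ 0 := fun h => hC (h ▸ hc)
    have : q.1 ≠ 0 := by
      rw [← hac]
      exact mul_ne_zero ha0 hc0
    exact neg_ne_zero.2 (div_ne_zero (mul_ne_zero h1 this) h2)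
  have key := incidence_bound X A L hL R hR
  have hinc : S.card * C'.card
      ≤ ∑ l ∈ L, ((X ×ˢ A).filter fun p => p.2 = l.1 * p.1 + l.2).card := by
    rw [← Finset.card_product, ← Finset.card_sigma]
    apply Finset.card_le_card_of_injOn
      (fun z => (⟨ψ (z.1.1 * z.2, z.1.2.2), (z.2⁻¹, z.1.2.1)⟩ : Σ _ : ℝ × ℝ, ℝ × ℝ))
    · rintro ⟨⟨a, b, d⟩, c⟩ hz
      simp only [hS, Finset.coe_product, Set.mem_prod, Finset.mem_coe, Finset.mem_filter,
        Finset.mem_product] at hz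
      obtain ⟨⟨⟨ha, hb, hd⟩, he⟩, hc⟩ := hz
      have hc0 : c ≠ 0 := fun h => hC (h ▸ hc)
      simp only [Finset.mem_coe, Finset.mem_sigma, Finset.mem_filter, Finset.mem_product]
      refine ⟨Finset.mem_image_of_mem _ (Finset.mem_product.2 ⟨Finset.mul_mem_mul ha hc, hd⟩),
        ⟨Finset.mem_image_of_mem _ hc, hb⟩, ?_⟩
      simp only [ψ]
      field_simp
      linarith
    · rintro ⟨⟨a, b, d⟩, c⟩ hz ⟨⟨a', b', d'⟩, c'⟩ hz' heq
      simp only [hS, Finset.coe_product, Set.mem_prod, Finset.mem_coe, Finset.mem_filter,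
        Finset.mem_product] at hz hz'
      have hc0 : c ≠ 0 := fun h => hC (h ▸ hz.2)
      simp only [ψ, Sigma.mk.injEq, Prod.mk.injEq, heq_eq_eq, neg_inj] at heq
      obtain ⟨⟨e1, e2⟩, e3, e4⟩ := heq
      have e3 : c = c' := inv_injective e3
      subst e3
      subst e4
      have e2 : d = d' := by
        field_simp at e2
        exact e2
      have e1 : a = a' := by
        field_simp at e1
        exact e1
      rw [e1, e2]
  rw [hX] at key
  calc S.card * C'.card * R ^ 2 ≤ _ := Nat.mul_le_mul_right _ hinc
    _ ≤ _ := key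
    _ ≤ _ := Nat.add_le_add_right (Nat.mul_le_mul_left _ hLc) _

/-- Choosing the parameter. -/
lemma optimise (s n m k : ℕ) (hn : 1 ≤ n) (hm : 1 ≤ m) (hk : 1 ≤ k) (hkm : k ≤ m * n)
    (h : ∀ R : ℕ, 1 ≤ R → (s * n) * R ^ 2 ≤ 2 * R ^ 3 * (k * m) + 4 * (n * m) ^ 2) :
    (s : ℝ) ≤ 8 * ((k : ℝ) ^ 2 / ((m : ℝ) * (n : ℝ))) ^ ((1 : ℝ) / 3) * (m : ℝ) ^ ((5 : ℝ) / 3) := by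
  have hn' : (1 : ℝ) ≤ n := by exact_mod_cast hn
  have hm' : (1 : ℝ) ≤ m := by exact_mod_cast hm
  have hk' : (1 : ℝ) ≤ k := by exact_mod_cast hk
  have hkm' : (k : ℝ) ≤ m * n := by exact_mod_cast hkm
  have n0 : (0 : ℝ) < n := by linarith
  have m0 : (0 : ℝ) < m := by linarith
  have k0 : (0 : ℝ) < k := by linarith
  have cube : ∀ x : ℝ, 0 ≤ x → (x ^ ((1 : ℝ) / 3)) ^ 3 = x := by
    intro x hx
    rw [← Real.rpow_natCast, ← Real.rpow_mul hx]
    norm_num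
  have cube5 : ((m : ℝ) ^ ((5 : ℝ) / 3)) ^ 3 = (m : ℝ) ^ 5 := by
    rw [← Real.rpow_natCast, ← Real.rpow_mul m0.le, ← Real.rpow_natCast]
    norm_num
  set r : ℝ := ((n : ℝ) ^ 2 * m / k) ^ ((1 : ℝ) / 3) with hr
  have hr3 : r ^ 3 = (n : ℝ) ^ 2 * m / k := cube _ (by positivity)
  have hr1 : 1 ≤ r := by
    apply Real.one_le_rpow _ (by norm_num)
    rw [le_div_iff₀ k0]
    nlinarith [mul_pos m0 n0]
  have hr3k : k * r ^ 3 = (n : ℝ) ^ 2 * m := by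
    rw [hr3]
    field_simp
  have r0 : 0 < r := by linarith
  set R := ⌈r⌉₊ with hRdef
  have hR1 : r ≤ R := Nat.le_ceil r
  have hR2 : (R : ℝ) ≤ 2 * r := by
    have := (Nat.ceil_lt_add_one r0.le).le
    linarith
  have hR : 1 ≤ R := by
    have : (1 : ℝ) ≤ R := hr1.trans hR1
    exact_mod_cast this
  have R0 : (0 : ℝ) < R := by linarith
  have hb : ((s : ℝ) * n) * (R : ℝ) ^ 2 ≤ 2 * (R : ℝ) ^ 3 * (k * m) + 4 * ((n : ℝ) * m) ^ 2 := by
    exact_mod_cast h R hR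
  have hq : ((k : ℝ) ^ 2 / ((m : ℝ) * (n : ℝ))) ^ ((1 : ℝ) / 3) * (m : ℝ) ^ ((5 : ℝ) / 3)
      = r * k * m / n := by
    refine (pow_left_inj₀ (by positivity) (by positivity) three_ne_zero).1 ?_
    rw [mul_pow, cube _ (by positivity), cube5, div_pow, mul_pow, mul_pow, hr3]
    field_simp
  rw [mul_assoc, hq]
  have hnm : ((n : ℝ) * m) ^ 2 ≤ r * k * m * (R : ℝ) ^ 2 := by
    have e : ((n : ℝ) * m) ^ 2 = r * k * m * r ^ 2 := by
      calc ((n : ℝ) * m) ^ 2 = ((n : ℝ) ^ 2 * m) * m := by ring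
        _ = (k * r ^ 3) * m := by rw [hr3k]
        _ = _ := by ring
    rw [e]
    gcongr
  have hfin : ((s : ℝ) * n) * (R : ℝ) ^ 2 ≤ (8 * (r * k * m)) * (R : ℝ) ^ 2 := by
    have : 2 * (R : ℝ) ^ 3 * (k * m) ≤ 4 * (r * k * m) * (R : ℝ) ^ 2 := by
      calc 2 * (R : ℝ) ^ 3 * (k * m) = 2 * (R : ℝ) * (k * m) * (R : ℝ) ^ 2 := by ring
        _ ≤ 2 * (2 * r) * (k * m) * (R : ℝ) ^ 2 := by gcongr
        _ = _ := by ring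
    linarith
  have hfin2 := le_of_mul_le_mul_right hfin (by positivity)
  rw [← mul_div_assoc, le_div_iff₀ n0]
  exact hfin2

theorem stmt_12 :
    ∃ C : ℝ, 0 < C ∧
      ∀ (A C' : Finset ℝ) (α₁ α₂ α₃ : ℝ),
        A.Nonempty → C'.Nonempty → (0 : ℝ) ∉ A → (0 : ℝ) ∉ C' →
        α₁ ≠ 0 → α₂ ≠ 0 → α₃ ≠ 0 →
        ((((A ×ˢ A ×ˢ A).filter fun x =>
            α₁ * x.1 + α₂ * x.2.1 + α₃ * x.2.2 = 0).card : ℝ)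
          ≤ C * (((A * C').card : ℝ) ^ 2 / ((A.card : ℝ) * (C'.card : ℝ))) ^ ((1 : ℝ) / 3)
              * (A.card : ℝ) ^ ((5 : ℝ) / 3)) := by
  refine ⟨8, by norm_num, ?_⟩
  intro A C' α₁ α₂ α₃ hA hC hA0 hC0 h1 h2 h3
  exact optimise _ C'.card A.card (A * C').card hC.card_pos hA.card_pos (hA.mul hC).card_pos
    Finset.card_mul_le (fun R hR => count_bound A C' α₁ α₂ α₃ hA0 hC0 h1 h2 h3 R hR)
end

section
/- (Konyagin–Shkredov.) There exists an absolute constant c > 0 such that for every finite set A ⊆ ℝ \ {0} with |A| ≥ 2, one has |A:A|⁶·|A−A|⁵ ≥ c·|A|^14 / (log|A|)². -/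
open Finset
open scoped Pointwise

/-- rank of `x` in `Q` -/
noncomputable def ksRk (Q : Finset ℝ) (x : ℝ) : ℕ := #{y ∈ Q | y < x}

lemma ksRk_mono (Q : Finset ℝ) : Monotone (ksRk Q) := by
  intro x y h
  apply card_le_card
  intro z hz
  simp only [mem_filter] at hz ⊢
  exact ⟨hz.1, hz.2.trans_le h⟩

lemma ksRk_lt {Q : Finset ℝ} {x y : ℝ} (hx : x ∈ Q) (h : x < y) : ksRk Q x < ksRk Q y := by
  apply card_lt_card
  refine ⟨fun z hz => ?_, fun hh => ?_⟩
  · simp only [mem_filter] at hz ⊢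
    exact ⟨hz.1, hz.2.trans h⟩
  · have : x ∈ ({y ∈ Q | y < x} : Finset ℝ) := hh (by simp [hx, h])
    simp at this

lemma ksRk_inj {Q : Finset ℝ} {x y : ℝ} (hx : x ∈ Q) (hy : y ∈ Q)
    (h : ksRk Q x = ksRk Q y) : x = y := by
  rcases lt_trichotomy x y with h1 | h1 | h1
  · exact absurd h (ksRk_lt hx h1).ne
  · exact h1
  · exact absurd h (ksRk_lt hy h1).ne'

lemma ksRk_le (Q : Finset ℝ) (x : ℝ) : ksRk Q x ≤ #Q := card_filter_le _ _

lemma ks_pairs (Q : Finset ℝ) (u : ℕ) (hu : 0 < u) :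
    #{p ∈ Q ×ˢ Q | ksRk Q p.1 / u = ksRk Q p.2 / u} ≤ #Q * u := by
  have : #(Q ×ˢ range u) = #Q * u := by simp
  rw [← this]
  apply card_le_card_of_injOn (fun p => (p.1, ksRk Q p.2 % u))
  · intro p hp
    simp only [coe_filter, mem_product, Set.mem_ofPred_eq] at hp
    simp [hp.1.1, Nat.mod_lt _ hu]
  · intro p hp p' hp' h
    simp only [coe_filter, mem_product, Set.mem_ofPred_eq] at hp hp'
    simp only [Prod.mk.injEq] at h
    ext
    · exact h.1
    · apply ksRk_inj hp.1.2 hp'.1.2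
      rw [← Nat.div_add_mod (ksRk Q p.2) u, ← Nat.div_add_mod (ksRk Q p'.2) u, ← hp.2, ← hp'.2,
        h.1, h.2]

lemma ks_fib {α β : Type*} [DecidableEq α] [DecidableEq β] [Nonempty α] (X : Finset α) (φ : α → β) :
    #X ≤ #(X.image φ) + #{p ∈ X ×ˢ X | p.1 ≠ p.2 ∧ φ p.1 = φ p.2} := by
  classical
  let rep := Function.invFunOn φ (X : Set α)
  have h1 : ∀ x ∈ X, rep (φ x) ∈ X := fun x hx => by
    have := Function.invFunOn_mem (f := φ) (s := (X : Set α)) (b := φ x) ⟨x, hx, rfl⟩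
    exact this
  have h2 : ∀ x ∈ X, φ (rep (φ x)) = φ x := fun x hx =>
    Function.invFunOn_eq (f := φ) (s := (X : Set α)) (b := φ x) ⟨x, hx, rfl⟩
  rw [← card_filter_add_card_filter_not (s := X) (fun x => rep (φ x) = x)]
  gcongr
  · apply card_le_card_of_injOn φ
    · intro x hx
      simp only [coe_filter, Set.mem_ofPred_eq] at hx
      exact mem_coe.2 (mem_image_of_mem _ hx.1)
    · intro x hx y hy h
      simp only [coe_filter, Set.mem_ofPred_eq] at hx hy
      rw [← hx.2, ← hy.2, h]
  · apply card_le_card_of_injOn (fun x => (x, rep (φ x)))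
    · intro x hx
      simp only [coe_filter, Set.mem_ofPred_eq] at hx
      simp only [coe_filter, Set.mem_ofPred_eq, mem_product]
      exact ⟨⟨hx.1, h1 x hx.1⟩, fun h => hx.2 h.symm, (h2 x hx.1).symm⟩
    · intro x hx y hy h
      exact congrArg Prod.fst h

lemma ks_cells (Q S : Finset ℝ) (u v : ℕ) (c b : ℝ) (X : Finset ℝ) (hc : c ≠ 0) :
    #(X.image fun q => (ksRk Q q / u, ksRk S (c * q - b) / v)) ≤ #Q / u + #S / v + 1 := by
  have hQ : ∀ q, ksRk Q q / u ≤ #Q / u := fun q => Nat.div_le_div_right (ksRk_le _ _)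
  have hS : ∀ q, ksRk S q / v ≤ #S / v := fun q => Nat.div_le_div_right (ksRk_le _ _)
  have mQ : ∀ q q', q ≤ q' → ksRk Q q / u ≤ ksRk Q q' / u :=
    fun q q' h => Nat.div_le_div_right (ksRk_mono _ h)
  have mS : ∀ q q', q ≤ q' → ksRk S q / v ≤ ksRk S q' / v :=
    fun q q' h => Nat.div_le_div_right (ksRk_mono _ h)
  rw [← card_range (#Q / u + #S / v + 1)]
  rcases lt_or_gt_of_ne hc with hc | hc
  · apply card_le_card_of_injOn (fun p => p.1 + (#S / v - p.2))
    · intro p hp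
      simp only [coe_image, Set.mem_image] at hp
      obtain ⟨q, -, rfl⟩ := hp
      simp only [coe_range, Set.mem_Iio]
      exact Nat.lt_succ_of_le (Nat.add_le_add (hQ q) (Nat.sub_le _ _))
    · intro p hp p' hp' h
      simp only [coe_image, Set.mem_image] at hp hp'
      obtain ⟨q, -, rfl⟩ := hp
      obtain ⟨q', -, rfl⟩ := hp'
      simp only [Prod.mk.injEq] at h ⊢
      have h1 := hS (c * q - b)
      have h2 := hS (c * q' - b)
      rcases le_total q q' with hq | hq
      · have h3 := mQ _ _ hq
        have h4 := mS (c * q' - b) (c * q - b) (by nlinarith)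
        omega
      · have h3 := mQ _ _ hq
        have h4 := mS (c * q - b) (c * q' - b) (by nlinarith)
        omega
  · apply card_le_card_of_injOn (fun p => p.1 + p.2)
    · intro p hp
      simp only [coe_image, Set.mem_image] at hp
      obtain ⟨q, -, rfl⟩ := hp
      have := hQ q
      have := hS (c * q - b)
      simp only [coe_range, Set.mem_Iio]
      omega
    · intro p hp p' hp' h
      simp only [coe_image, Set.mem_image] at hp hp'
      obtain ⟨q, -, rfl⟩ := hp
      obtain ⟨q', -, rfl⟩ := hp'
      simp only [Prod.mk.injEq] at h ⊢
      rcases le_total q q' with hq | hq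
      · have h3 := mQ _ _ hq
        have h4 := mS (c * q - b) (c * q' - b) (by nlinarith)
        omega
      · have h3 := mQ _ _ hq
        have h4 := mS (c * q' - b) (c * q - b) (by nlinarith)
        omega

/-- number of representations of `x` as a difference -/
noncomputable def ksR (A B : Finset ℝ) (x : ℝ) : ℕ := #{p ∈ A ×ˢ B | p.1 - p.2 = x}

lemma ksR_sum (A B S : Finset ℝ) : ∑ x ∈ S, ksR A B x = #{p ∈ A ×ˢ B | p.1 - p.2 ∈ S} := by
  rw [card_eq_sum_card_fiberwise (f := fun p : ℝ × ℝ => p.1 - p.2) (t := S)]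
  · apply sum_congr rfl
    intro x hx
    unfold ksR
    congr 1
    ext p
    simp only [mem_filter]
    constructor
    · rintro ⟨h1, rfl⟩
      exact ⟨⟨h1, hx⟩, rfl⟩
    · rintro ⟨h1, h2⟩
      exact ⟨h1.1, h2⟩
  · intro p hp
    simp only [coe_filter, Set.mem_ofPred_eq] at hp
    exact hp.2

lemma ks_inc (A B S : Finset ℝ) (hA : (0 : ℝ) ∉ A) (u v τ : ℕ) (hu : 0 < u) (hv : 0 < v)
    (hS : ∀ x ∈ S, τ ≤ ksR A B x) :
    #A * (#S * τ) ≤ #A * #B * (#(A / A) / u + #S / v + 1) + (#(A / A) * u) * (#S * v) := by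
  set Q := A / A with hQ
  let X : ℝ × ℝ → Finset ℝ := fun l => {q ∈ Q | l.1 * q - l.2 ∈ S}
  let φ : ℝ × ℝ → ℝ → ℕ × ℕ := fun l q => (ksRk Q q / u, ksRk S (l.1 * q - l.2) / v)
  have h1 : #A * (#S * τ) ≤ ∑ l ∈ A ×ˢ B, #(X l) := by
    rw [sum_product, ← smul_eq_mul]
    apply card_nsmul_le_sum
    intro c hc
    have hc0 : c ≠ 0 := fun h => hA (h ▸ hc)
    calc #S * τ ≤ ∑ x ∈ S, ksR A B x := by
          rw [← smul_eq_mul]; exact card_nsmul_le_sum _ _ _ hS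
      _ = #{p ∈ A ×ˢ B | p.1 - p.2 ∈ S} := ksR_sum A B S
      _ ≤ #(B.sigma fun b => X (c, b)) := by
          apply card_le_card_of_injOn (fun p => (⟨p.2, p.1 / c⟩ : (_ : ℝ) × ℝ))
          · intro p hp
            simp only [coe_filter, Set.mem_ofPred_eq, mem_product] at hp
            simp only [coe_sigma, Set.mem_sigma_iff, mem_coe, X, mem_filter]
            refine ⟨hp.1.2, div_mem_div hp.1.1 hc, ?_⟩
            rw [mul_div_cancel₀ _ hc0]
            exact hp.2
          · intro p hp p' hp' h
            simp only [Sigma.mk.injEq, heq_eq_eq] at h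
            ext
            · exact (div_left_inj' hc0).1 h.2
            · exact h.1
      _ = ∑ b ∈ B, #(X (c, b)) := card_sigma _ _
  have h2 : ∑ l ∈ A ×ˢ B, #(X l) ≤ ∑ l ∈ A ×ˢ B, (#(Q) / u + #S / v + 1) +
      ∑ l ∈ A ×ˢ B, #{p ∈ X l ×ˢ X l | p.1 ≠ p.2 ∧ φ l p.1 = φ l p.2} := by
    rw [← sum_add_distrib]
    apply sum_le_sum
    intro l hl
    have hc0 : l.1 ≠ 0 := fun h => hA (h ▸ (mem_product.1 hl).1)
    refine (ks_fib (X l) (φ l)).trans ?_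
    gcongr
    exact ks_cells Q S u v l.1 l.2 (X l) hc0
  have h3 : ∑ l ∈ A ×ˢ B, #{p ∈ X l ×ˢ X l | p.1 ≠ p.2 ∧ φ l p.1 = φ l p.2} ≤
      (#Q * u) * (#S * v) := by
    rw [← card_sigma]
    refine le_trans ?_ (Nat.mul_le_mul (ks_pairs Q u hu) (ks_pairs S v hv))
    rw [← card_product]
    apply card_le_card_of_injOn
      (fun t => ((t.2.1, t.2.2), (t.1.1 * t.2.1 - t.1.2, t.1.1 * t.2.2 - t.1.2)))
    · rintro ⟨l, p⟩ ht
      simp only [coe_sigma, Set.mem_sigma_iff, mem_coe, mem_filter, mem_product, X, φ,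
        Prod.mk.injEq] at ht ⊢
      tauto
    · rintro ⟨⟨c, b⟩, ⟨q, q'⟩⟩ ht ⟨⟨c', b'⟩, ⟨r, r'⟩⟩ ht' h
      simp only [coe_sigma, Set.mem_sigma_iff, mem_coe, mem_filter] at ht ht'
      simp only [Prod.mk.injEq] at h
      obtain ⟨⟨rfl, rfl⟩, h1, h2⟩ := h
      have hne : q - q' ≠ 0 := sub_ne_zero.2 ht.2.2.1
      have hcc : c = c' := by
        apply mul_right_cancel₀ hne
        linarith
      subst hcc
      have : b = b' := by linarith
      subst this
      rfl
  calc _ ≤ _ := h1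
    _ ≤ _ := h2
    _ ≤ _ := by
      gcongr
      simp

lemma ks_arith (n S b Q τ : ℝ) (hn : 0 < n) (hS : 0 ≤ S) (hτ : 1 ≤ τ) (hτb : τ ≤ b) (hτn : τ ≤ n)
    (hnQ : n ≤ Q) (htriv : S * τ ≤ n * b)
    (h : ∀ u v : ℕ, 0 < u → 0 < v →
      n * (S * τ) ≤ n * b * (Q / u + S / v + 1) + (Q * u) * (S * v)) :
    S * τ ^ 3 * n ≤ 82 * Q ^ 2 * b ^ 2 := by
  have hτ0 : 0 < τ := by linarith
  have hb : 0 < b := by linarith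
  have hQ : 0 < Q := by linarith
  have hnQ2 : n * (Q * b ^ 2) ≤ Q * (Q * b ^ 2) := by gcongr
  rcases lt_or_ge (τ ^ 2 * n) (20 * Q * b) with hc | hc
  · have : S * τ ^ 3 * n ≤ (n * b) * (20 * Q * b) := by
      calc S * τ ^ 3 * n = (S * τ) * (τ ^ 2 * n) := by ring
        _ ≤ _ := by gcongr
    nlinarith [mul_pos (mul_pos hQ hQ) (mul_pos hb hb)]
  · set y := τ ^ 2 * n / (20 * Q * b) with hy
    have hy1 : 1 ≤ y := by rw [hy, le_div_iff₀ (by positivity)]; linarith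
    set u := ⌊y⌋₊
    have hu1 : 1 ≤ u := (Nat.one_le_floor_iff y).2 hy1
    have huy : (u : ℝ) ≤ y := Nat.floor_le (by linarith)
    have huy2 : y / 2 ≤ u := by
      have := Nat.lt_floor_add_one y
      have h1 : (1 : ℝ) ≤ u := by exact_mod_cast hu1
      change y < (u : ℝ) + 1 at this
      linarith
    set v := ⌈4 * b / τ⌉₊
    have hbt : 1 ≤ b / τ := by rwa [le_div_iff₀ hτ0, one_mul]
    have hv1 : 4 * b / τ ≤ v := Nat.le_ceil _
    have hv2 : (v : ℝ) ≤ 5 * b / τ := by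
      have : (v : ℝ) < 4 * b / τ + 1 := Nat.ceil_lt_add_one (by positivity)
      rw [mul_div_assoc] at *
      linarith
    have hv0 : (0 : ℝ) < v := lt_of_lt_of_le (by positivity) hv1
    have hu0 : (0 : ℝ) < u := by exact_mod_cast hu1
    have key := h u v hu1 (by exact_mod_cast hv0)
    have e1 : (Q * u) * (S * v) ≤ n * (S * τ) / 4 := by
      calc (Q * u) * (S * v) ≤ (Q * y) * (S * (5 * b / τ)) := by gcongr
        _ = n * (S * τ) / 4 := by rw [hy]; field_simp; ring
    have e2 : n * b * (S / v) ≤ n * (S * τ) / 4 := by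
      calc n * b * (S / v) ≤ n * b * (S / (4 * b / τ)) := by gcongr
        _ = n * (S * τ) / 4 := by field_simp
    have e3 : n * b * (Q / u) ≤ 40 * Q ^ 2 * b ^ 2 / τ ^ 2 := by
      calc n * b * (Q / u) ≤ n * b * (Q / (y / 2)) := by gcongr
        _ = _ := by rw [hy]; field_simp; ring
    have e4 : n * (S * τ) / 2 ≤ 40 * Q ^ 2 * b ^ 2 / τ ^ 2 + n * b := by linarith
    have e5 : n * (S * τ) / 2 * τ ^ 2 ≤ 40 * Q ^ 2 * b ^ 2 + n * b * τ ^ 2 := by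
      calc n * (S * τ) / 2 * τ ^ 2 ≤ (40 * Q ^ 2 * b ^ 2 / τ ^ 2 + n * b) * τ ^ 2 := by gcongr
        _ = _ := by field_simp
    have e6 : n * b * τ ^ 2 ≤ Q ^ 2 * b ^ 2 := by
      calc n * b * τ ^ 2 = n * τ * (b * τ) := by ring
        _ ≤ Q * Q * (b * b) := by gcongr; linarith
        _ = _ := by ring
    nlinarith

lemma ksR_le_left (A B : Finset ℝ) (x : ℝ) : ksR A B x ≤ #A := by
  apply card_le_card_of_injOn (fun p => p.1)
  · intro p hp
    simp only [coe_filter, Set.mem_ofPred_eq, mem_product] at hp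
    exact hp.1.1
  · intro p hp p' hp' h
    simp only [coe_filter, Set.mem_ofPred_eq, mem_product] at hp hp'
    ext
    · exact h
    · simp only at h
      linarith [hp.2, hp'.2]

lemma ksR_le_right (A B : Finset ℝ) (x : ℝ) : ksR A B x ≤ #B := by
  apply card_le_card_of_injOn (fun p => p.2)
  · intro p hp
    simp only [coe_filter, Set.mem_ofPred_eq, mem_product] at hp
    exact hp.1.2
  · intro p hp p' hp' h
    simp only [coe_filter, Set.mem_ofPred_eq, mem_product] at hp hp'
    ext
    · simp only at h
      linarith [hp.2, hp'.2]
    · exact h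

lemma ks_triv (A B S : Finset ℝ) (τ : ℕ) (hS : ∀ x ∈ S, τ ≤ ksR A B x) :
    #S * τ ≤ #A * #B := by
  calc #S * τ ≤ ∑ x ∈ S, ksR A B x := by
        rw [← smul_eq_mul]; exact card_nsmul_le_sum _ _ _ hS
    _ = #{p ∈ A ×ˢ B | p.1 - p.2 ∈ S} := ksR_sum A B S
    _ ≤ #(A ×ˢ B) := card_filter_le _ _
    _ = _ := card_product _ _

lemma ks_card_div (A : Finset ℝ) (hA : (0 : ℝ) ∉ A) : #A ≤ #(A / A) := by
  rcases A.eq_empty_or_nonempty with rfl | ⟨c, hc⟩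
  · simp
  have hc0 : c ≠ 0 := fun h => hA (h ▸ hc)
  apply card_le_card_of_injOn (fun a => a / c)
  · intro a ha
    exact mem_coe.2 (div_mem_div ha hc)
  · intro a _ b _ h
    exact (div_left_inj' hc0).1 h

lemma ks_level (A B S : Finset ℝ) (hA : (0 : ℝ) ∉ A) (τ : ℕ) (hτ : 1 ≤ τ)
    (hS : ∀ x ∈ S, τ ≤ ksR A B x) :
    (#S : ℝ) * τ ^ 3 * #A ≤ 82 * (#(A / A) : ℝ) ^ 2 * (#B : ℝ) ^ 2 := by
  rcases S.eq_empty_or_nonempty with rfl | ⟨x, hx⟩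
  · simp; positivity
  have h1 : τ ≤ #A := (hS x hx).trans (ksR_le_left _ _ _)
  have h2 : τ ≤ #B := (hS x hx).trans (ksR_le_right _ _ _)
  apply ks_arith
  · exact_mod_cast hτ.trans h1
  · positivity
  · exact_mod_cast hτ
  · exact_mod_cast h2
  · exact_mod_cast h1
  · exact_mod_cast ks_card_div A hA
  · exact_mod_cast ks_triv A B S τ hS
  · intro u v hu hv
    have := ks_inc A B S hA u v τ hu hv hS
    have h3 : ((#A * (#S * τ) : ℕ) : ℝ) ≤
      ((#A * #B * (#(A / A) / u + #S / v + 1) + (#(A / A) * u) * (#S * v) : ℕ) : ℝ) := by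
      exact_mod_cast this
    push_cast at h3
    refine h3.trans ?_
    gcongr
    · exact Nat.cast_div_le
    · exact Nat.cast_div_le

lemma ks_layer (X : Finset ℝ) (r : ℝ → ℕ) (n : ℕ) (hr : ∀ x, r x ≤ n) (g : ℕ → ℝ) (w : ℕ → ℝ)
    (hg : ∀ m, g m ≤ ∑ t ∈ Icc 1 m, w t) :
    ∑ x ∈ X, g (r x) ≤ ∑ t ∈ Icc 1 n, w t * #{x ∈ X | t ≤ r x} := by
  have : ∀ x, ∑ t ∈ Icc 1 (r x), w t = ∑ t ∈ Icc 1 n, if t ≤ r x then w t else 0 := by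
    intro x
    rw [← sum_filter]
    apply sum_congr _ (fun _ _ => rfl)
    ext t
    have := hr x
    simp only [mem_Icc, mem_filter]
    omega
  calc ∑ x ∈ X, g (r x) ≤ ∑ x ∈ X, ∑ t ∈ Icc 1 n, if t ≤ r x then w t else 0 :=
        sum_le_sum fun x _ => (hg _).trans (this x).le
    _ = ∑ t ∈ Icc 1 n, ∑ x ∈ X, if t ≤ r x then w t else 0 := sum_comm
    _ = _ := by
        apply sum_congr rfl
        intro t _
        rw [← sum_filter, sum_const, nsmul_eq_mul, mul_comm]

lemma ks_E3 (A X : Finset ℝ) (hA : (0 : ℝ) ∉ A) (h2 : 2 ≤ #A) :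
    ∑ x ∈ X, (ksR A A x : ℝ) ^ 3 ≤
      738 * (#(A / A) : ℝ) ^ 2 * #A * Real.log #A := by
  have hn : (0 : ℝ) < #A := by exact_mod_cast (by omega : 0 < #A)
  have hlay := ks_layer X (ksR A A) #A (ksR_le_left A A) (fun m => (m : ℝ) ^ 3)
    (fun t => 3 * (t : ℝ) ^ 2) (by
      intro m
      induction m with
      | zero => simp
      | succ k ih =>
        rw [sum_Icc_succ_top (by omega)]
        push_cast
        have : (0 : ℝ) ≤ k := by positivity
        nlinarith)
  have hlog : 1 ≤ 2 * Real.log #A := by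
    have := Real.log_two_gt_d9
    have h3 : Real.log 2 ≤ Real.log #A := Real.log_le_log (by norm_num) (by exact_mod_cast h2)
    linarith
  have hharm : ∑ t ∈ Icc 1 #A, ((t : ℝ))⁻¹ ≤ 1 + Real.log #A := by
    have := harmonic_le_one_add_log #A
    rw [harmonic_eq_sum_Icc] at this
    push_cast at this
    exact this
  calc _ ≤ _ := hlay
    _ ≤ ∑ t ∈ Icc 1 #A, 246 * (#(A / A) : ℝ) ^ 2 * #A * ((t : ℝ))⁻¹ := by
        apply sum_le_sum
        intro t ht
        have ht1 := (mem_Icc.1 ht).1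
        have ht0 : (0 : ℝ) < t := by exact_mod_cast ht1
        have := ks_level A A {x ∈ X | t ≤ ksR A A x} hA t ht1 (fun x hx => (mem_filter.1 hx).2)
        rw [← div_eq_mul_inv, le_div_iff₀ ht0]
        refine le_of_mul_le_mul_right ?_ hn
        nlinarith
    _ = 246 * (#(A / A) : ℝ) ^ 2 * #A * ∑ t ∈ Icc 1 #A, ((t : ℝ))⁻¹ := by rw [mul_sum]
    _ ≤ 246 * (#(A / A) : ℝ) ^ 2 * #A * (3 * Real.log #A) := by
        gcongr
        linarith
    _ = _ := by ring

lemma ks_E2 (A D X : Finset ℝ) (hA : (0 : ℝ) ∉ A) (h2 : 2 ≤ #A) (hD : 1 ≤ #D) :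
    ∑ x ∈ X, (ksR A D x : ℝ) ^ 2 ≤
      332 * (#(A / A) : ℝ) * #D * √(#D) := by
  have hn : (0 : ℝ) < #A := by exact_mod_cast (by omega : 0 < #A)
  have hd : (1 : ℝ) ≤ #D := by exact_mod_cast hD
  have hnQ : (#A : ℝ) ≤ #(A / A) := by exact_mod_cast ks_card_div A hA
  have hlay := ks_layer X (ksR A D) #A (ksR_le_left A D) (fun m => (m : ℝ) ^ 2)
    (fun t => 2 * (t : ℝ)) (by
      intro m
      induction m with
      | zero => simp
      | succ k ih =>
        rw [sum_Icc_succ_top (by omega)]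
        push_cast
        have : (0 : ℝ) ≤ k := by positivity
        nlinarith)
  have hb1 : ∀ t : ℕ, (t : ℝ) * #{x ∈ X | t ≤ ksR A D x} ≤ #A * #D := by
    intro t
    have := ks_triv A D {x ∈ X | t ≤ ksR A D x} t (fun x hx => (mem_filter.1 hx).2)
    rw [mul_comm]
    exact_mod_cast this
  set n : ℝ := ((#A : ℕ) : ℝ) with hndef
  set d : ℝ := ((#D : ℕ) : ℝ)
  set Q : ℝ := ((#(A / A) : ℕ) : ℝ)
  have hQ : 0 < Q := by linarith
  have hsd : 1 ≤ √d := Real.one_le_sqrt.2 hd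
  have hsd2 : √d * √d = d := Real.mul_self_sqrt (by linarith)
  have hb2 : ∀ t : ℕ, 1 ≤ t → (t : ℝ) * #{x ∈ X | t ≤ ksR A D x} ≤
      82 * Q ^ 2 * d ^ 2 / n * ((t : ℝ) ^ 2)⁻¹ := by
    intro t ht1
    have ht0 : (0 : ℝ) < t := by exact_mod_cast ht1
    have := ks_level A D {x ∈ X | t ≤ ksR A D x} hA t ht1 (fun x hx => (mem_filter.1 hx).2)
    rw [← div_eq_mul_inv, le_div_iff₀ (by positivity), le_div_iff₀ hn]
    linarith
  set Δ := Q * √d / n with hΔ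
  have hΔ1 : 1 ≤ Δ := by
    rw [hΔ, le_div_iff₀ hn]
    nlinarith
  set k := ⌈Δ⌉₊
  have hk1 : Δ ≤ k := Nat.le_ceil _
  have hk2 : (k : ℝ) ≤ 2 * Δ := by
    have : (k : ℝ) < Δ + 1 := Nat.ceil_lt_add_one (by linarith)
    linarith
  have hsplit : ∑ t ∈ Icc 1 #A, 2 * (t : ℝ) * #{x ∈ X | t ≤ ksR A D x} ≤
      ∑ t ∈ Icc 1 k, 2 * (n * d) +
        ∑ t ∈ Ioo k (#A + 1), 2 * (82 * Q ^ 2 * d ^ 2 / n * ((t : ℝ) ^ 2)⁻¹) := by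
    rw [← sum_filter_add_sum_filter_not (Icc 1 #A) (fun t => t ≤ k)]
    gcongr ?_ + ?_
    · calc _ ≤ ∑ t ∈ Icc 1 #A with t ≤ k, 2 * (n * d) := by
            apply sum_le_sum
            intro t _
            linarith [hb1 t]
        _ ≤ _ := by
            apply sum_le_sum_of_subset_of_nonneg
            · intro t ht
              simp only [mem_filter, mem_Icc] at ht ⊢
              omega
            · intro _ _ _
              positivity
    · calc _ ≤ ∑ t ∈ Icc 1 #A with ¬ t ≤ k, 2 * (82 * Q ^ 2 * d ^ 2 / n * ((t : ℝ) ^ 2)⁻¹) := by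
            apply sum_le_sum
            intro t ht
            simp only [mem_filter, mem_Icc] at ht
            linarith [hb2 t ht.1.1]
        _ ≤ _ := by
            apply sum_le_sum_of_subset_of_nonneg
            · intro t ht
              simp only [mem_filter, mem_Icc, mem_Ioo] at ht ⊢
              omega
            · intro _ _ _
              positivity
  have hs1 : ∑ t ∈ Icc 1 k, 2 * (n * d) ≤ 4 * Q * d * √d := by
    rw [sum_const, nsmul_eq_mul, Nat.card_Icc, Nat.add_sub_cancel]
    calc (k : ℝ) * (2 * (n * d)) ≤ (2 * Δ) * (2 * (n * d)) := by gcongr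
      _ = _ := by rw [hΔ]; field_simp; ring
  have hs2 : ∑ t ∈ Ioo k (#A + 1), 2 * (82 * Q ^ 2 * d ^ 2 / n * ((t : ℝ) ^ 2)⁻¹) ≤
      328 * Q * d * √d := by
    rw [← mul_sum, ← mul_sum]
    calc _ ≤ 2 * (82 * Q ^ 2 * d ^ 2 / n * (2 / Δ)) := by
          gcongr
          refine (sum_Ioo_inv_sq_le k (#A + 1)).trans ?_
          gcongr
          linarith
      _ = 328 * Q * d * (d / √d) := by rw [hΔ]; field_simp; ring
      _ = _ := by rw [Real.div_sqrt]
  linarith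

lemma ks_cs {α β : Type*} [DecidableEq α] [DecidableEq β] (T : Finset α) (W : Finset β) (F : α → β)
    (hF : ∀ t ∈ T, F t ∈ W) :
    #T ^ 2 ≤ #W * #{p ∈ T ×ˢ T | F p.1 = F p.2} := by
  rw [card_eq_sum_card_fiberwise (f := F) (s := T) (t := W) hF]
  refine sq_sum_le_card_mul_sum_sq.trans ?_
  rw [Nat.cast_id]
  gcongr
  rw [card_eq_sum_card_fiberwise (f := fun p : α × α => F p.1) (t := W)]
  · apply sum_le_sum
    intro w _
    rw [sq, ← card_product]
    apply card_le_card
    intro p hp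
    simp only [mem_product, mem_filter] at hp ⊢
    refine ⟨⟨⟨hp.1.1, hp.2.1⟩, ?_⟩, hp.1.2⟩
    rw [hp.1.2, hp.2.2]
  · intro p hp
    simp only [coe_filter, Set.mem_ofPred_eq, mem_product] at hp
    exact hF _ hp.1.1

lemma ks_comb (A : Finset ℝ) :
    #A ^ 8 ≤ 8 * #(A - A) * (∑ x ∈ A - A, ksR A A x ^ 3) *
      (∑ x ∈ A - (A - A), ksR A (A - A) x ^ 2) := by
  set D := A - A with hD
  set E3 := ∑ x ∈ D, ksR A A x ^ 3
  set E2 := ∑ x ∈ A - D, ksR A D x ^ 2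
  set P := {s ∈ D | #A ^ 2 ≤ 2 * #D * ksR A A s} with hP
  set T := {t ∈ A ×ˢ (A ×ˢ A) | t.2.1 - t.2.2 ∈ P} with hT
  set W := {p ∈ D ×ˢ D | p.2 - p.1 ∈ P} with hW
  have hTcard : #T = #A * ∑ s ∈ P, ksR A A s := by
    rw [ksR_sum, ← card_product]
    congr 1
    ext t
    simp only [hT, mem_filter, mem_product]
    tauto
  have htot : ∑ s ∈ D, ksR A A s = #A ^ 2 := by
    rw [ksR_sum, filter_true_of_mem, card_product, sq]
    intro p hp
    exact sub_mem_sub (mem_product.1 hp).1 (mem_product.1 hp).2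
  have hpop : #A ^ 2 ≤ 2 * ∑ s ∈ P, ksR A A s := by
    rcases Nat.eq_zero_or_pos #D with h0 | h0
    · rw [← htot, card_eq_zero.1 h0]; simp
    have h1 := sum_filter_add_sum_filter_not D (fun s => #A ^ 2 ≤ 2 * #D * ksR A A s) (ksR A A)
    rw [htot] at h1
    have h2 : 2 * #D * ∑ s ∈ D with ¬ #A ^ 2 ≤ 2 * #D * ksR A A s, ksR A A s ≤ #D * #A ^ 2 := by
      rw [mul_sum]
      calc _ ≤ ∑ s ∈ D with ¬ #A ^ 2 ≤ 2 * #D * ksR A A s, #A ^ 2 := by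
            apply sum_le_sum
            intro s hs
            have := (mem_filter.1 hs).2
            omega
        _ ≤ ∑ s ∈ D, #A ^ 2 := sum_le_sum_of_subset (filter_subset _ _)
        _ = _ := by simp
    have h3 : 2 * ∑ s ∈ D with ¬ #A ^ 2 ≤ 2 * #D * ksR A A s, ksR A A s ≤ #A ^ 2 := by
      apply Nat.le_of_mul_le_mul_left _ h0
      calc _ = _ := by ring
        _ ≤ _ := h2
    change ∑ s ∈ P, ksR A A s + _ = _ at h1
    omega
  have hcs : #T ^ 2 ≤ #W * E3 := by
    refine (ks_cs T W (fun t => (t.1 - t.2.1, t.1 - t.2.2)) ?_).trans ?_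
    · intro t ht
      simp only [hT, hW, mem_filter, mem_product] at ht ⊢
      refine ⟨⟨sub_mem_sub ht.1.1 ht.1.2.1, sub_mem_sub ht.1.1 ht.1.2.2⟩, ?_⟩
      convert ht.2 using 1
      ring
    · gcongr
      have : E3 = #(D.sigma fun x => ({p ∈ A ×ˢ A | p.1 - p.2 = x} ×ˢ
          ({p ∈ A ×ˢ A | p.1 - p.2 = x} ×ˢ {p ∈ A ×ˢ A | p.1 - p.2 = x}))) := by
        rw [card_sigma]
        apply sum_congr rfl
        intro x _
        rw [card_product, card_product]
        change ksR A A x ^ 3 = ksR A A x * (ksR A A x * ksR A A x)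
        ring
      rw [this]
      apply card_le_card_of_injOn (fun p => ⟨p.1.1 - p.2.1,
        ((p.1.1, p.2.1), ((p.1.2.1, p.2.2.1), (p.1.2.2, p.2.2.2)))⟩)
      · intro p hp
        simp only [coe_filter, Set.mem_ofPred_eq, mem_product, hT, mem_filter,
          Prod.mk.injEq] at hp
        obtain ⟨⟨⟨⟨ha, hb, hb'⟩, -⟩, ⟨ha1, hb1, hb1'⟩, -⟩, h1, h2⟩ := hp
        simp only [coe_sigma, Set.mem_sigma_iff, mem_coe, mem_filter, mem_product]
        refine ⟨sub_mem_sub ha ha1, ⟨⟨ha, ha1⟩, trivial⟩, ⟨⟨hb, hb1⟩, ?_⟩, ⟨hb', hb1'⟩, ?_⟩ <;> linarith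
      · rintro ⟨⟨a, b, c⟩, ⟨a', b', c'⟩⟩ _ ⟨⟨x, y, z⟩, ⟨x', y', z'⟩⟩ _ h
        simp only [Sigma.mk.injEq, heq_eq_eq, Prod.mk.injEq] at h ⊢
        tauto
  have hWE : #W * #A ^ 2 ≤ 2 * #D * E2 := by
    have h1 : ∑ w ∈ W, ksR A A (w.2 - w.1) ≤ E2 := by
      have : E2 = #((A - D).sigma fun x => ({p ∈ A ×ˢ D | p.1 - p.2 = x} ×ˢ
          {p ∈ A ×ˢ D | p.1 - p.2 = x})) := by
        rw [card_sigma]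
        apply sum_congr rfl
        intro x _
        rw [card_product]
        change ksR A D x ^ 2 = ksR A D x * ksR A D x
        ring
      rw [this]
      change ∑ w ∈ W, #{p ∈ A ×ˢ A | p.1 - p.2 = w.2 - w.1} ≤ _
      rw [← card_sigma]
      apply card_le_card_of_injOn (fun t => ⟨t.2.1 - t.1.2, ((t.2.1, t.1.2), (t.2.2, t.1.1))⟩)
      · rintro ⟨⟨e, f⟩, ⟨a, a'⟩⟩ ht
        simp only [coe_sigma, Set.mem_sigma_iff, mem_coe, mem_filter, mem_product, hW] at ht ⊢
        obtain ⟨⟨⟨he, hf⟩, -⟩, ⟨ha, ha'⟩, h⟩ := ht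
        refine ⟨sub_mem_sub ha hf, ⟨⟨ha, hf⟩, trivial⟩, ⟨ha', he⟩, ?_⟩
        linarith
      · rintro ⟨⟨e, f⟩, ⟨a, a'⟩⟩ _ ⟨⟨e1, f1⟩, ⟨a1, a1'⟩⟩ _ h
        simp only [Sigma.mk.injEq, heq_eq_eq, Prod.mk.injEq] at h ⊢
        tauto
    calc #W * #A ^ 2 ≤ ∑ w ∈ W, 2 * #D * ksR A A (w.2 - w.1) := by
          rw [← smul_eq_mul]
          apply card_nsmul_le_sum
          intro w hw
          have := (mem_filter.1 hw).2
          exact (mem_filter.1 this).2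
      _ = 2 * #D * ∑ w ∈ W, ksR A A (w.2 - w.1) := by rw [mul_sum]
      _ ≤ _ := by gcongr
  have h3 : #A ^ 3 ≤ 2 * #T := by
    rw [hTcard]
    calc #A ^ 3 = #A * #A ^ 2 := by ring
      _ ≤ #A * (2 * ∑ s ∈ P, ksR A A s) := by gcongr
      _ = _ := by ring
  calc #A ^ 8 = (#A ^ 3) ^ 2 * #A ^ 2 := by ring
    _ ≤ (2 * #T) ^ 2 * #A ^ 2 := by gcongr
    _ = 4 * #T ^ 2 * #A ^ 2 := by ring
    _ ≤ 4 * (#W * E3) * #A ^ 2 := by gcongr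
    _ = 4 * E3 * (#W * #A ^ 2) := by ring
    _ ≤ 4 * E3 * (2 * #D * E2) := by gcongr
    _ = _ := by ring

theorem stmt_15 :
    ∃ c : ℝ, 0 < c ∧
      ∀ A : Finset ℝ, (0 : ℝ) ∉ A → 2 ≤ A.card →
        c * (A.card : ℝ) ^ 14 / (Real.log (A.card : ℝ)) ^ 2
          ≤ ((A / A).card : ℝ) ^ 6 * ((A - A).card : ℝ) ^ 5 := by
  refine ⟨1 / (8 * 738 * 332) ^ 2, by positivity, ?_⟩
  intro A hA h2
  have hne : A.Nonempty := card_pos.1 (by omega)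
  have hD1 : 1 ≤ #(A - A) := card_pos.2 (hne.sub hne)
  have h3 := ks_E3 A (A - A) hA h2
  have h4 := ks_E2 A (A - A) (A - (A - A)) hA h2 hD1
  have h5 : ((#A ^ 8 : ℕ) : ℝ) ≤ ((8 * #(A - A) * (∑ x ∈ A - A, ksR A A x ^ 3) *
      (∑ x ∈ A - (A - A), ksR A (A - A) x ^ 2) : ℕ) : ℝ) := by exact_mod_cast ks_comb A
  push_cast at h5
  have hn : (0 : ℝ) < #A := by exact_mod_cast (by omega : 0 < #A)
  have hlog : 0 < Real.log #A := Real.log_pos (by exact_mod_cast h2)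
  set n : ℝ := ((#A : ℕ) : ℝ)
  set d : ℝ := ((#(A - A) : ℕ) : ℝ)
  set Q : ℝ := ((#(A / A) : ℕ) : ℝ)
  have hd : 0 ≤ d := Nat.cast_nonneg _
  have hQ : 0 ≤ Q := Nat.cast_nonneg _
  have h6 : n ^ 8 ≤ 8 * d * (738 * Q ^ 2 * n * Real.log n) * (332 * Q * d * √d) := by
    refine h5.trans ?_
    gcongr
  have h7 : n ^ 7 ≤ (8 * 738 * 332) * Real.log n * (Q ^ 3 * (d ^ 2 * √d)) := by
    refine le_of_mul_le_mul_right ?_ hn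
    linarith
  have h8 : n ^ 14 ≤ (8 * 738 * 332) ^ 2 * Real.log n ^ 2 * (Q ^ 6 * d ^ 5) := by
    calc n ^ 14 = (n ^ 7) ^ 2 := by ring
      _ ≤ ((8 * 738 * 332) * Real.log n * (Q ^ 3 * (d ^ 2 * √d))) ^ 2 := by gcongr
      _ = (8 * 738 * 332) ^ 2 * Real.log n ^ 2 * (Q ^ 6 * (d ^ 4 * √d ^ 2)) := by ring
      _ = _ := by rw [Real.sq_sqrt hd]; ring
  rw [div_le_iff₀ (by positivity), one_div, inv_mul_le_iff₀ (by positivity)]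
  linarith
end
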